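/- Suppose n ≥ 2 and 1 ≤ p < ∞, with conjugate exponent p′. Let φ ∈ Möb(B), ψ = |Dφ|^{(n−2)/2}, and let W* denote the adjoint of W_{φ,ψ} acting on h^{p′}(B). Then limsup_{|y|→1⁻} ‖W* P_y‖_{h^{p′}} / ‖P_y‖_{h^{p′}} ≥ ((1+|φ(0)|)/(1−|φ(0)|))^{|(n−1)/p − (n−2)/2|}. -/

import Mathlib

/-!
Write `T_a` for the reflection in the sphere with centre `a`, `1 < ‖a‖`, orthogonal to the unit
sphere. Every `φ ∈ Möb(B)` agrees on `B` with an orthogonal map `A` or with `A ∘ T_a`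
(`IsMobiusBall.form`, obtained from a normal form for compositions of reflections).

For `x ∈ B`, `x ≠ φ(0)`, the function `W P_x` is a multiple of a kernel
`(⟪b, v⟫ + C ‖v‖²) / ‖v‖ⁿ`, `v = z - ω`, with `‖ω‖ > 1` (or again a Poisson kernel when `φ` is
orthogonal). Such kernels are harmonic off their pole, so `W P_x` is harmonic on `B` and continuous
up to the boundary (`wco_extPoisson`). The Poisson formula evaluates both sides of the duality
identity `⟨W P_x, P_y⟩ = ⟨P_x, W* P_y⟩`: the left side is `W P_x (y) = ψ(y) P_{φ(y)}(x)` and the right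
side is `(W* P_y)(x)`, the latter by the Poisson representation of functions in `h^q` with `1 < q`
(`MemHp.poisson`). Hence `W* P_y = ψ(y) P_{φ(y)}` (`Wstar_extPoisson`).

Let `N(y)` be the `h^q` norm of `P_y`. It depends only on `‖y‖` and is comparable to
`(1 - ‖y‖)^{-(n-1)/p}` (`hpNorm_extPoisson_bounds`). The quotient in the theorem is
`|Dφ(y)|^{(n-2)/2} N(φ(y)) / N(y)`, which, since `1 - ‖φ(y)‖² = |Dφ(y)| (1 - ‖y‖²)`, equals
`G(‖φ(y)‖) / G(‖y‖)` with `G(s) = N(s) (1 - s²)^{(n-2)/2}`. On the diameter through `a` the map `φ`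
shifts hyperbolic distances by one fixed step, so the quotients along a suitable sequence of radii
`s_k` are `G(s_{k+1}) / G(s_k)`, or their inverses. Only the order of growth of `G(s_k)` is known, but
a positive sequence growing like `T ^ k` cannot have all its consecutive quotients eventually below
some `T' < T` (`frequently_le_quotient`); this gives the lower bound for the upper limit, and no
precise asymptotics of `N` are needed. The quotients are bounded (`exists_quotient_le`), so the real
upper limit is not a junk value.
-/

open MeasureTheory Metric Set Filter
open scoped ENNReal NNReal Topology InnerProductSpace Classical

noncomputable section

/-- Euclidean space `ℝⁿ`. -/
abbrev Eucl (n : ℕ) := EuclideanSpace ℝ (Fin n)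

/-- The open unit ball `B` in `ℝⁿ`. -/
def uBall (n : ℕ) : Set (Eucl n) := Metric.ball 0 1

/-- The unit sphere `S = ∂B` in `ℝⁿ`. -/
def uSphere (n : ℕ) : Set (Eucl n) := Metric.sphere 0 1

/-- The normalized surface area measure `σ` on the unit sphere (as a measure on `ℝⁿ`
supported on `S`), normalized so that `σ(S) = 1`. -/
def sphMeasure (n : ℕ) : Measure (Eucl n) :=
  ((Measure.hausdorffMeasure ((n : ℝ) - 1) (uSphere n))⁻¹ : ℝ≥0∞) •
    (Measure.hausdorffMeasure ((n : ℝ) - 1) : Measure (Eucl n)).restrict (uSphere n)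

/-- `i`-th standard basis vector of `ℝⁿ`. -/
def basisV (n : ℕ) (i : Fin n) : Eucl n := EuclideanSpace.single i 1

/-- The Laplacian `Δf(x) = ∑ᵢ ∂²f/∂xᵢ²(x)`. -/
def lap {n : ℕ} {F : Type*} [NormedAddCommGroup F] [NormedSpace ℝ F]
    (f : Eucl n → F) (x : Eucl n) : F :=
  ∑ i : Fin n, iteratedFDeriv ℝ 2 f x ![basisV n i, basisV n i]

/-- `f` is harmonic on `s`: twice continuously differentiable with vanishing Laplacian. -/
def HarmOn {n : ℕ} {F : Type*} [NormedAddCommGroup F] [NormedSpace ℝ F]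
    (f : Eucl n → F) (s : Set (Eucl n)) : Prop :=
  ContDiffOn ℝ 2 f s ∧ ∀ x ∈ s, lap f x = 0

/-- The Jacobian matrix `Dφ(x) = (∂φ⁽ⁱ⁾/∂xⱼ)` of a map `φ : ℝⁿ → ℝⁿ`. -/
def jacMatrix {n : ℕ} (φ : Eucl n → Eucl n) (x : Eucl n) : Matrix (Fin n) (Fin n) ℝ :=
  Matrix.of fun i j => fderiv ℝ φ x (basisV n j) i

/-- `|Dφ(x)| := |J_φ(x)|^{1/n}`, where `J_φ` is the Jacobian determinant. -/
def normDeriv {n : ℕ} (φ : Eucl n → Eucl n) (x : Eucl n) : ℝ :=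
  |(jacMatrix φ x).det| ^ ((n : ℝ)⁻¹)

/-- The weighted composition operator `W_{φ,ψ} f = ψ · (f ∘ φ)`. -/
def wco {n : ℕ} (φ : Eucl n → Eucl n) (ψ : Eucl n → ℂ) (f : Eucl n → ℂ) : Eucl n → ℂ :=
  fun x => ψ x * f (φ x)

/-- The set of values `(∫_S |f(rζ)|^p dσ(ζ))^{1/p}`, `0 ≤ r < 1`. -/
def hpNormSet (n : ℕ) (p : ℝ) (f : Eucl n → ℂ) : Set ℝ :=
  (fun r : ℝ => (∫ ζ, ‖f (r • ζ)‖ ^ p ∂(sphMeasure n)) ^ (1 / p)) '' Set.Ico (0 : ℝ) 1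

/-- The set of values `|f(x)|`, `x ∈ B`. -/
def hInfSet (n : ℕ) (f : Eucl n → ℂ) : Set ℝ := (fun x => ‖f x‖) '' uBall n

/-- Membership in the harmonic Hardy space `h^p(B)`, `1 ≤ p ≤ ∞`. -/
def MemHp (n : ℕ) (p : ℝ≥0∞) (f : Eucl n → ℂ) : Prop :=
  HarmOn f (uBall n) ∧
    if p = ⊤ then BddAbove (hInfSet n f) else BddAbove (hpNormSet n p.toReal f)

/-- The `h^p(B)` norm, `1 ≤ p ≤ ∞`. -/
def hpNorm (n : ℕ) (p : ℝ≥0∞) (f : Eucl n → ℂ) : ℝ :=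
  if p = ⊤ then sSup (hInfSet n f) else sSup (hpNormSet n p.toReal f)

/-- The operator norm of a map `T` on `h^p(B)`. -/
def opNormHp (n : ℕ) (p : ℝ≥0∞) (T : (Eucl n → ℂ) → (Eucl n → ℂ)) : ℝ :=
  sInf {C : ℝ | 0 ≤ C ∧ ∀ f, MemHp n p f → hpNorm n p (T f) ≤ C * hpNorm n p f}

/-- The one-point compactification `ℝ̂ⁿ = ℝⁿ ∪ {∞}`. -/
abbrev EuclHat (n : ℕ) := OnePoint (Eucl n)

/-- Reflection in the sphere `S(a, r)`, as a self-map of `ℝ̂ⁿ`: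
`x ↦ a + r²(x−a)/|x−a|²`, with `a ↦ ∞` and `∞ ↦ a`. -/
def sphereRefl (n : ℕ) (a : Eucl n) (r : ℝ) : EuclHat n → EuclHat n :=
  OnePoint.rec (↑a)
    (fun x => if x = a then OnePoint.infty
      else ↑(a + (r ^ 2 / ‖x - a‖ ^ 2) • (x - a)))

/-- Reflection in the hyperplane `{x : x·a = t}` (`a` a unit vector), as a self-map of `ℝ̂ⁿ`:
`x ↦ x − 2(x·a − t)a`, with `∞ ↦ ∞`. -/
def hyperRefl (n : ℕ) (a : Eucl n) (t : ℝ) : EuclHat n → EuclHat n :=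
  OnePoint.rec OnePoint.infty
    (fun x => ↑(x - (2 * (⟪x, a⟫_ℝ - t)) • a))

/-- A reflection of `ℝ̂ⁿ` in a sphere or a hyperplane. -/
def IsReflection (n : ℕ) (f : EuclHat n → EuclHat n) : Prop :=
  (∃ a r, 0 < r ∧ f = sphereRefl n a r) ∨
    (∃ a t, ‖a‖ = 1 ∧ f = hyperRefl n a t)

/-- A Möbius transformation of `ℝ̂ⁿ`: a finite composition of reflections in
spheres or hyperplanes. -/
def IsMobiusHat (n : ℕ) (g : EuclHat n → EuclHat n) : Prop :=
  ∃ L : List (EuclHat n → EuclHat n), L ≠ [] ∧ (∀ f ∈ L, IsReflection n f) ∧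
    g = L.foldr (· ∘ ·) id

/-- `φ : ℝⁿ → ℝⁿ` is, on `Ω`, the restriction of a Möbius transformation of `ℝ̂ⁿ`. -/
def IsMobiusRestr (n : ℕ) (φ : Eucl n → Eucl n) (Ω : Set (Eucl n)) : Prop :=
  ∃ g : EuclHat n → EuclHat n, IsMobiusHat n g ∧ ∀ x ∈ Ω, g ↑x = ↑(φ x)

/-- `φ ∈ Möb(B)`: `φ` agrees, on an open neighborhood of the closed unit ball, with a
Möbius transformation of `ℝ̂ⁿ`, and `φ` maps `B` bijectively onto `B`.  (Such a `φ` is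
the canonical extension of the Möbius transformation to the closed unit ball.) -/
def IsMobiusBall (n : ℕ) (φ : Eucl n → Eucl n) : Prop :=
  (∃ U : Set (Eucl n), IsOpen U ∧ Metric.closedBall 0 1 ⊆ U ∧ IsMobiusRestr n φ U) ∧
    Set.BijOn φ (uBall n) (uBall n)

/-- The nontangential approach region `Γ_δ(ζ) = {x ∈ B : |x − ζ| < (δ/2)(1 − |x|²)}`. -/
def ntRegion (n : ℕ) (δ : ℝ) (ζ : Eucl n) : Set (Eucl n) :=
  {x | x ∈ uBall n ∧ ‖x - ζ‖ < δ / 2 * (1 - ‖x‖ ^ 2)}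

/-- `g` has nontangential limit `L` at `ζ ∈ S`. -/
def HasNTLimit (n : ℕ) (g : Eucl n → ℂ) (ζ : Eucl n) (L : ℂ) : Prop :=
  ∀ δ : ℝ, 1 < δ → Filter.Tendsto g (nhdsWithin ζ (ntRegion n δ ζ)) (nhds L)

/-- The Poisson kernel `P(x, ζ) = (1 − |x|²)/|x − ζ|ⁿ` for the unit ball. -/
def poissonK (n : ℕ) (x ζ : Eucl n) : ℝ := (1 - ‖x‖ ^ 2) / ‖x - ζ‖ ^ n

/-- The extended Poisson kernel `P_y(x) = (1 − |x|²|y|²)/(1 − 2x·y + |x|²|y|²)^{n/2}`. -/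
def extPoisson (n : ℕ) (y x : Eucl n) : ℝ :=
  (1 - ‖x‖ ^ 2 * ‖y‖ ^ 2) / (1 - 2 * ⟪x, y⟫_ℝ + ‖x‖ ^ 2 * ‖y‖ ^ 2) ^ ((n : ℝ) / 2)

/-- The Gauss hypergeometric function `₂F₁(a, b; c; r) = ∑ₖ (a)ₖ(b)ₖ/((c)ₖ k!) rᵏ`. -/
def gaussHyper (a b c r : ℝ) : ℝ :=
  ∑' k : ℕ, ((ascPochhammer ℝ k).eval a * (ascPochhammer ℝ k).eval b) /
    ((ascPochhammer ℝ k).eval c * (Nat.factorial k)) * r ^ k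

/-- A linear operator on (the function class) `h^p(B)`. -/
def IsLinOnHp (n : ℕ) (p : ℝ≥0∞) (T : (Eucl n → ℂ) → (Eucl n → ℂ)) : Prop :=
  (∀ f, MemHp n p f → MemHp n p (T f)) ∧
    (∀ f g, MemHp n p f → MemHp n p g → T (f + g) = T f + T g) ∧
    (∀ (c : ℂ) (f), MemHp n p f → T (c • f) = c • T f)

/-- A compact operator on `h^p(B)`: a linear operator mapping the unit ball of `h^p(B)`
to a totally bounded set. -/
def IsCompactOnHp (n : ℕ) (p : ℝ≥0∞) (K : (Eucl n → ℂ) → (Eucl n → ℂ)) : Prop :=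
  IsLinOnHp n p K ∧
    ∀ ε : ℝ, 0 < ε → ∃ G : Finset (Eucl n → ℂ),
      ∀ f, MemHp n p f → hpNorm n p f ≤ 1 → ∃ g ∈ G, hpNorm n p (K f - g) ≤ ε

/-- The essential norm of an operator `T` on `h^p(B)`: the distance, in operator norm,
from `T` to the compact operators on `h^p(B)`. -/
def essNormHp (n : ℕ) (p : ℝ≥0∞) (T : (Eucl n → ℂ) → (Eucl n → ℂ)) : ℝ :=
  sInf {c : ℝ | ∃ K, IsCompactOnHp n p K ∧ opNormHp n p (fun f => T f - K f) = c}

/-- The duality pairing `⟨f, g⟩ = ∫_S f* g* dσ`, relative to a boundary-function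
assignment `bd`. -/
def hpPairing (n : ℕ) (bd : (Eucl n → ℂ) → (Eucl n → ℂ)) (f g : Eucl n → ℂ) : ℂ :=
  ∫ ζ, bd f ζ * bd g ζ ∂(sphMeasure n)

end

/-! ### Surface measure on the sphere -/

/-- Radial projection to the unit sphere is `2`-Lipschitz outside the open unit ball. -/
lemma norm_normalize_sub_le {E : Type*} [NormedAddCommGroup E] [NormedSpace ℝ E] {x y : E}
    (hx : 1 ≤ ‖x‖) (hy : 1 ≤ ‖y‖) : ‖‖x‖⁻¹ • x - ‖y‖⁻¹ • y‖ ≤ 2 * ‖x - y‖ := by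
  have hx0 : 0 < ‖x‖ := by linarith
  have hy0 : 0 < ‖y‖ := by linarith
  have h : ‖x‖⁻¹ • x - ‖y‖⁻¹ • y = ‖x‖⁻¹ • (x - y) + (‖x‖⁻¹ - ‖y‖⁻¹) • y := by module
  rw [h]
  have h2 : ‖(‖x‖⁻¹ - ‖y‖⁻¹) • y‖ ≤ ‖x - y‖ := by
    rw [norm_smul, Real.norm_eq_abs]
    have : ‖x‖⁻¹ - ‖y‖⁻¹ = (‖y‖ - ‖x‖) * (‖x‖⁻¹ * ‖y‖⁻¹) := by field_simp
    rw [this, abs_mul, abs_of_pos (by positivity : 0 < ‖x‖⁻¹ * ‖y‖⁻¹)]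
    have h3 : |‖y‖ - ‖x‖| ≤ ‖x - y‖ := by
      rw [abs_sub_comm]; exact abs_norm_sub_norm_le x y
    have h4 : ‖x‖⁻¹ ≤ 1 := inv_le_one_of_one_le₀ hx
    calc |‖y‖ - ‖x‖| * (‖x‖⁻¹ * ‖y‖⁻¹) * ‖y‖ = |‖y‖ - ‖x‖| * ‖x‖⁻¹ := by field_simp
      _ ≤ ‖x - y‖ * 1 := by gcongr
      _ = _ := mul_one _
  have h1 : ‖‖x‖⁻¹ • (x - y)‖ ≤ ‖x - y‖ := by
    rw [norm_smul, norm_inv, norm_norm]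
    have h4 : ‖x‖⁻¹ ≤ 1 := inv_le_one_of_one_le₀ hx
    calc ‖x‖⁻¹ * ‖x - y‖ ≤ 1 * ‖x - y‖ := by gcongr
      _ = _ := one_mul _
  calc _ ≤ _ := norm_add_le _ _
    _ ≤ 2 * ‖x - y‖ := by linarith

/-- The sphere is covered by the radial projections of the faces of the cube `[-1,1]ⁿ`, which are
Lipschitz images of cubes of dimension `n - 1`. -/
lemma hausdorff_uSphere_lt_top (m : ℕ) : Measure.hausdorffMeasure (m : ℝ) (uSphere (m + 1)) < ⊤ := by
  set G : Fin (m + 1) → ℝ → (Fin m → ℝ) → Eucl (m + 1) := fun i s v =>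
    ‖(WithLp.toLp 2 (Fin.insertNth i s v : Fin (m + 1) → ℝ) : Eucl (m + 1))‖⁻¹ •
      (WithLp.toLp 2 (Fin.insertNth i s v : Fin (m + 1) → ℝ) : Eucl (m + 1)) with hG
  have key : ∀ i s, |s| = 1 → Measure.hausdorffMeasure (m : ℝ) (G i s '' closedBall 0 1) < ⊤ := by
    intro i s hs
    obtain ⟨K, hK⟩ : ∃ K : ℝ≥0, LipschitzWith K
        (WithLp.toLp 2 : (Fin (m + 1) → ℝ) → Eucl (m + 1)) :=
      ⟨_, PiLp.lipschitzWith_toLp 2 (fun _ : Fin (m + 1) => ℝ)⟩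
    have hge : ∀ v : Fin m → ℝ, 1 ≤ ‖(WithLp.toLp 2 (Fin.insertNth i s v : Fin (m + 1) → ℝ) :
        Eucl (m + 1))‖ := by
      intro v
      have := PiLp.norm_apply_le (WithLp.toLp 2 (Fin.insertNth i s v : Fin (m + 1) → ℝ) :
        Eucl (m + 1)) i
      simpa [hs] using this
    have hL : LipschitzWith (2 * K) (G i s) := by
      apply LipschitzWith.of_dist_le_mul
      intro v w
      have h1 := norm_normalize_sub_le (hge v) (hge w)
      rw [dist_eq_norm]
      refine h1.trans ?_
      rw [← dist_eq_norm]
      have h2 := hK.dist_le_mul (Fin.insertNth i s v : Fin (m + 1) → ℝ) (Fin.insertNth i s w : Fin (m + 1) → ℝ)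
      have h3 : dist (Fin.insertNth i s v : Fin (m + 1) → ℝ) (Fin.insertNth i s w : Fin (m + 1) → ℝ) ≤ dist v w := by
        rw [dist_pi_le_iff dist_nonneg]
        intro j
        refine Fin.succAboveCases i ?_ ?_ j
        · simp
        · intro k; simpa using dist_le_pi_dist v w k
      push_cast
      calc _ ≤ 2 * (K * dist v w) := by
            have := mul_le_mul_of_nonneg_left h3 K.2
            gcongr
            exact h2.trans this
        _ = _ := by ring
    have h := hL.hausdorffMeasure_image_le (d := (m : ℝ)) (by positivity) (closedBall 0 1)
    refine h.trans_lt ?_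
    have h5 : (Measure.hausdorffMeasure (m : ℝ) : Measure (Fin m → ℝ)) = volume := by
      have := hausdorffMeasure_pi_real (ι := Fin m); simpa using this
    rw [h5]
    exact ENNReal.mul_lt_top (by finiteness) (isCompact_closedBall _ _).measure_lt_top
  have hsub : uSphere (m + 1) ⊆ ⋃ i, (G i 1 '' closedBall 0 1 ∪ G i (-1) '' closedBall 0 1) := by
    intro z hz
    have hz1 : ‖z‖ = 1 := by simpa [uSphere] using hz
    obtain ⟨i, -, hi⟩ := Finset.exists_max_image (Finset.univ : Finset (Fin (m + 1)))
      (fun j => |z j|) ⟨0, Finset.mem_univ _⟩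
    have hzi : 0 < |z i| := by
      by_contra h
      have : z = 0 := by
        ext j
        have := hi j (Finset.mem_univ _)
        have h0 : |z j| ≤ 0 := by linarith
        simpa using h0
      simp [this] at hz1
    set v : Fin m → ℝ := fun k => |z i|⁻¹ * z (i.succAbove k) with hv
    have hvm : v ∈ closedBall (0 : Fin m → ℝ) 1 := by
      rw [mem_closedBall_zero_iff, pi_norm_le_iff_of_nonneg zero_le_one]
      intro k
      rw [hv, Real.norm_eq_abs, abs_mul, abs_inv, abs_abs, inv_mul_le_iff₀ hzi, mul_one]
      exact hi _ (Finset.mem_univ _)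
    have hGv : ∀ s, |z i| * s = z i → G i s v = z := by
      intro s hs
      have : (WithLp.toLp 2 (Fin.insertNth i s v : Fin (m + 1) → ℝ) : Eucl (m + 1)) = |z i|⁻¹ • z := by
        ext j
        refine Fin.succAboveCases i ?_ ?_ j
        · simp; rw [eq_inv_mul_iff_mul_eq₀ hzi.ne', hs]
        · intro k; simp [hv]
      simp only [hG]
      rw [this, norm_smul, norm_inv, hz1, smul_smul]
      simp [hzi.ne']
    refine mem_iUnion.2 ⟨i, ?_⟩
    rcases le_total 0 (z i) with h | h
    · left; exact ⟨v, hvm, hGv 1 (by rw [abs_of_nonneg h, mul_one])⟩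
    · right; exact ⟨v, hvm, hGv (-1) (by rw [abs_of_nonpos h]; ring)⟩
  refine (measure_mono hsub).trans_lt ?_
  refine (measure_iUnion_le _).trans_lt ?_
  rw [tsum_fintype]
  refine ENNReal.sum_lt_top.2 fun i _ => (measure_union_le _ _).trans_lt ?_
  exact ENNReal.add_lt_top.2 ⟨key i 1 (by simp), key i (-1) (by simp)⟩

/-- The coordinate projection is `1`-Lipschitz and maps the sphere onto a set with interior. -/
lemma hausdorff_uSphere_pos (m : ℕ) : 0 < Measure.hausdorffMeasure (m : ℝ) (uSphere (m + 1)) := by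
  set π : Eucl (m + 1) → (Fin m → ℝ) := fun x j => x j.castSucc with hπ
  have hL : LipschitzWith 1 π := by
    apply LipschitzWith.of_dist_le_mul
    intro x y
    rw [NNReal.coe_one, one_mul, dist_pi_le_iff dist_nonneg]
    intro j
    have := PiLp.norm_apply_le (x - y) j.castSucc
    simpa [hπ, dist_eq_norm] using this
  have h := hL.hausdorffMeasure_image_le (d := (m : ℝ)) (by positivity) (uSphere (m + 1))
  have h5 : (Measure.hausdorffMeasure (m : ℝ) : Measure (Fin m → ℝ)) = volume := by
    have := hausdorffMeasure_pi_real (ι := Fin m); simpa using this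
  rw [h5] at h
  simp only [ENNReal.coe_one, ENNReal.one_rpow, one_mul] at h
  have hr : (0 : ℝ) < 1 / (m + 1) := by positivity
  have hsub : ball (0 : Fin m → ℝ) (1 / (m + 1)) ⊆ π '' uSphere (m + 1) := by
    intro v hv
    rw [mem_ball_zero_iff, pi_norm_lt_iff hr] at hv
    have hs : ∑ j, v j ^ 2 ≤ 1 := by
      have : ∀ j ∈ Finset.univ, v j ^ 2 ≤ 1 / ((m : ℝ) + 1) := by
        intro j _
        have h1 := hv j
        rw [Real.norm_eq_abs] at h1
        have h2 : (1 : ℝ) / (m + 1) ≤ 1 := by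
          rw [div_le_one (by positivity)]; linarith [(Nat.cast_nonneg m : (0 : ℝ) ≤ m)]
        rw [← sq_abs]
        nlinarith [abs_nonneg (v j)]
      refine (Finset.sum_le_sum this).trans ?_
      simp
      rw [← div_eq_mul_inv, div_le_one (by positivity)]; linarith
    refine ⟨WithLp.toLp 2 (Fin.snoc v (Real.sqrt (1 - ∑ j, v j ^ 2)) : Fin (m + 1) → ℝ), ?_, ?_⟩
    · have : ‖(WithLp.toLp 2 (Fin.snoc v (Real.sqrt (1 - ∑ j, v j ^ 2)) : Fin (m + 1) → ℝ) :
          Eucl (m + 1))‖ = 1 := by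
        rw [EuclideanSpace.norm_eq, Fin.sum_univ_castSucc]
        simp only [Fin.snoc_castSucc, Fin.snoc_last, Real.norm_eq_abs, sq_abs]
        rw [Real.sq_sqrt (by linarith)]
        simp
      simpa [uSphere] using this
    · ext j; simp [hπ]
  exact (measure_ball_pos volume (0 : Fin m → ℝ) hr).trans_le ((measure_mono hsub).trans h)

lemma isProbabilityMeasure_sphMeasure {n : ℕ} (hn : 2 ≤ n) : IsProbabilityMeasure (sphMeasure n) := by
  obtain ⟨m, rfl⟩ : ∃ m, n = m + 1 := ⟨n - 1, by omega⟩
  constructor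
  have h : ((m + 1 : ℕ) : ℝ) - 1 = m := by push_cast; ring
  rw [sphMeasure, h, Measure.smul_apply, Measure.restrict_apply_univ, smul_eq_mul]
  exact ENNReal.inv_mul_cancel (hausdorff_uSphere_pos m).ne' (hausdorff_uSphere_lt_top m).ne

lemma ae_sphMeasure_mem (n : ℕ) : ∀ᵐ z ∂(sphMeasure n), z ∈ uSphere n := by
  rw [sphMeasure]
  apply Measure.ae_smul_measure
  exact ae_restrict_mem isClosed_sphere.measurableSet

lemma map_sphMeasure {n : ℕ} (hn : 2 ≤ n) (A : Eucl n ≃ₗᵢ[ℝ] Eucl n) :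
    (sphMeasure n).map A = sphMeasure n := by
  have hA : Measurable A := A.continuous.measurable
  have h0 : (0 : ℝ) ≤ (n : ℝ) - 1 := by
    have : (2 : ℝ) ≤ n := by exact_mod_cast hn
    linarith
  rw [sphMeasure, Measure.map_smul]
  congr 1
  ext s hs
  rw [Measure.map_apply hA hs, Measure.restrict_apply (hA hs), Measure.restrict_apply hs]
  have : A ⁻¹' s ∩ uSphere n = A ⁻¹' (s ∩ uSphere n) := by
    ext x; simp [uSphere]
  rw [this]
  have := A.toIsometryEquiv.hausdorffMeasure_preimage ((n : ℝ) - 1) (s ∩ uSphere n)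
  simpa using this

lemma integral_comp_isometry {n : ℕ} (hn : 2 ≤ n) (A : Eucl n ≃ₗᵢ[ℝ] Eucl n) {F : Type*}
    [NormedAddCommGroup F] [NormedSpace ℝ F] (f : Eucl n → F) :
    ∫ z, f (A z) ∂(sphMeasure n) = ∫ z, f z ∂(sphMeasure n) := by
  have h := MeasurableEmbedding.integral_map (μ := sphMeasure n)
    (A.toHomeomorph.measurableEmbedding) f
  have h2 : (sphMeasure n).map A.toHomeomorph = sphMeasure n := map_sphMeasure hn A
  rw [h2] at h
  exact h.symm

/-- Rotations act transitively on spheres centred at the origin. -/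
lemma exists_isometry_eq {n : ℕ} {x y : Eucl n} (h : ‖x‖ = ‖y‖) :
    ∃ A : Eucl n ≃ₗᵢ[ℝ] Eucl n, A x = y :=
  ⟨(ℝ ∙ (x - y))ᗮ.reflection, Submodule.reflection_sub h⟩

/-! ### Harmonicity along coordinate lines -/

/-- Harmonicity at a point, tested along the coordinate lines: the restrictions of `w` to these lines
are twice differentiable at `x` and the pure second derivatives sum to `0`. Unlike `HarmOn`, it does
not ask for joint regularity, so it passes easily through integrals depending on a parameter, and it
suffices for the maximum principle. -/
def LineHarm {n : ℕ} (w : Eucl n → ℂ) (x : Eucl n) : Prop :=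
  ∃ (D : Fin n → ℝ → ℂ) (d : Fin n → ℂ),
    (∀ i, ∀ᶠ t in 𝓝 (0 : ℝ), HasDerivAt (fun t : ℝ => w (x + t • basisV n i)) (D i t) t) ∧
    (∀ i, HasDerivAt (D i) (d i) 0) ∧ ∑ i, d i = 0

lemma hasDerivAt_line {n : ℕ} (x e : Eucl n) (t : ℝ) :
    HasDerivAt (fun t : ℝ => x + t • e) e t := by
  simpa using ((hasDerivAt_id t).smul_const e).const_add x

lemma tendsto_line {n : ℕ} (x e : Eucl n) : Tendsto (fun t : ℝ => x + t • e) (𝓝 0) (𝓝 x) := by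
  have := (hasDerivAt_line x e 0).continuousAt.tendsto
  simpa using this

lemma hasDerivAt_line_of_contDiffAt {n : ℕ} {f : Eucl n → ℂ} {x : Eucl n} (hf : ContDiffAt ℝ 2 f x)
    (e : Eucl n) :
    (∀ᶠ t in 𝓝 (0 : ℝ), HasDerivAt (fun t : ℝ => f (x + t • e)) (fderiv ℝ f (x + t • e) e) t) ∧
    HasDerivAt (fun t : ℝ => fderiv ℝ f (x + t • e) e) (iteratedFDeriv ℝ 2 f x ![e, e]) 0 := by
  constructor
  · have h1 : ∀ᶠ y in 𝓝 x, DifferentiableAt ℝ f y := by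
      filter_upwards [hf.eventually (by simp)] with y hy
      exact hy.differentiableAt (by simp)
    filter_upwards [(tendsto_line x e).eventually h1] with t ht
    exact ht.hasFDerivAt.comp_hasDerivAt t (hasDerivAt_line x e t)
  · rw [iteratedFDeriv_two_apply]
    have h2 : ContDiffAt ℝ 1 (fderiv ℝ f) x := hf.fderiv_right (by norm_num)
    have h3 : HasFDerivAt (fderiv ℝ f) (fderiv ℝ (fderiv ℝ f) x) x :=
      (h2.differentiableAt (by simp)).hasFDerivAt
    have h3' : HasFDerivAt (fderiv ℝ f) (fderiv ℝ (fderiv ℝ f) x) (x + (0 : ℝ) • e) := by simpa using h3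
    have h4 := h3'.comp_hasDerivAt (0 : ℝ) (hasDerivAt_line x e 0)
    have h5 := h4.clm_apply (hasDerivAt_const (0 : ℝ) e)
    simpa using h5

lemma lineHarm_of_harmOn {n : ℕ} {f : Eucl n → ℂ} {s : Set (Eucl n)} (hs : IsOpen s)
    (hf : HarmOn f s) {x : Eucl n} (hx : x ∈ s) : LineHarm f x := by
  have hc := hf.1.contDiffAt (hs.mem_nhds hx)
  exact ⟨fun i t => fderiv ℝ f (x + t • basisV n i) (basisV n i),
    fun i => iteratedFDeriv ℝ 2 f x ![basisV n i, basisV n i],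
    fun i => (hasDerivAt_line_of_contDiffAt hc _).1,
    fun i => (hasDerivAt_line_of_contDiffAt hc _).2, hf.2 x hx⟩

lemma harmOn_of_lineHarm {n : ℕ} {f : Eucl n → ℂ} {s : Set (Eucl n)} (hs : IsOpen s)
    (hf : ContDiffOn ℝ 2 f s) (h : ∀ x ∈ s, LineHarm f x) : HarmOn f s := by
  refine ⟨hf, fun x hx => ?_⟩
  have hc := hf.contDiffAt (hs.mem_nhds hx)
  obtain ⟨D, d, h1, h2, h3⟩ := h x hx
  rw [lap, ← h3]
  refine Finset.sum_congr rfl fun i _ => ?_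
  have h4 := hasDerivAt_line_of_contDiffAt hc (basisV n i)
  have h5 : D i =ᶠ[𝓝 0] fun t : ℝ => fderiv ℝ f (x + t • basisV n i) (basisV n i) := by
    filter_upwards [h1 i, h4.1] with t ha hb
    exact ha.unique hb
  exact (h4.2.congr_of_eventuallyEq h5).unique (h2 i)

lemma LineHarm.sub {n : ℕ} {f g : Eucl n → ℂ} {x : Eucl n} (hf : LineHarm f x) (hg : LineHarm g x) :
    LineHarm (fun y => f y - g y) x := by
  obtain ⟨D, d, h1, h2, h3⟩ := hf
  obtain ⟨D', d', h1', h2', h3'⟩ := hg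
  refine ⟨fun i t => D i t - D' i t, fun i => d i - d' i, fun i => ?_, fun i => (h2 i).sub (h2' i), ?_⟩
  · filter_upwards [h1 i, h1' i] with t ha hb using ha.sub hb
  · rw [Finset.sum_sub_distrib, h3, h3', sub_zero]

lemma LineHarm.const_mul {n : ℕ} {f : Eucl n → ℂ} {x : Eucl n} (hf : LineHarm f x) (c : ℂ) :
    LineHarm (fun y => c * f y) x := by
  obtain ⟨D, d, h1, h2, h3⟩ := hf
  refine ⟨fun i t => c * D i t, fun i => c * d i, fun i => ?_, fun i => (h2 i).const_mul c, ?_⟩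
  · filter_upwards [h1 i] with t ha using ha.const_mul c
  · rw [← Finset.mul_sum, h3, mul_zero]

lemma lineHarm_const {n : ℕ} (c : ℂ) (x : Eucl n) : LineHarm (fun _ => c) x :=
  ⟨fun _ _ => 0, fun _ => 0, fun _ => Eventually.of_forall fun _ => hasDerivAt_const _ _,
    fun _ => hasDerivAt_const _ _, by simp⟩

lemma LineHarm.congr {n : ℕ} {f g : Eucl n → ℂ} {x : Eucl n} (hf : LineHarm f x)
    (h : f =ᶠ[𝓝 x] g) : LineHarm g x := by
  obtain ⟨D, d, h1, h2, h3⟩ := hf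
  refine ⟨D, d, fun i => ?_, h2, h3⟩
  filter_upwards [h1 i, ((tendsto_line x (basisV n i)).eventually h).eventually_nhds] with t ha hb
  exact ha.congr_of_eventuallyEq (hb.mono fun s hs => hs.symm)

lemma LineHarm.comp_smul {n : ℕ} {f : Eucl n → ℂ} {x : Eucl n} (r : ℝ) (hf : LineHarm f (r • x)) :
    LineHarm (fun y => f (r • y)) x := by
  obtain ⟨D, d, h1, h2, h3⟩ := hf
  have hr : ∀ t : ℝ, HasDerivAt (fun t : ℝ => r * t) r t := fun t => by
    simpa using (hasDerivAt_id t).const_mul r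
  refine ⟨fun i t => r • D i (r * t), fun i => r • (r • d i), fun i => ?_, fun i => ?_, ?_⟩
  · have ht : Tendsto (fun t : ℝ => r * t) (𝓝 0) (𝓝 0) := by
      simpa using (hr 0).continuousAt.tendsto
    filter_upwards [ht.eventually (h1 i)] with t ha
    have := ha.scomp t (hr t)
    refine this.congr_of_eventuallyEq (Eventually.of_forall fun s => ?_)
    simp [smul_add, smul_smul]
  · have h2' : HasDerivAt (D i) (d i) (r * 0) := by simpa using h2 i
    exact (h2'.scomp 0 (hr 0)).const_smul r
  · rw [← Finset.smul_sum, ← Finset.smul_sum, h3, smul_zero, smul_zero]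

/-- Second derivative test: a strictly positive second derivative excludes a local maximum. -/
lemma not_isLocalMax_of_deriv2_pos {g D : ℝ → ℝ} {d : ℝ}
    (h1 : ∀ᶠ t in 𝓝 (0 : ℝ), HasDerivAt g (D t) t) (h2 : HasDerivAt D d 0) (hd : 0 < d) :
    ¬ IsLocalMax g 0 := by
  intro hmax
  have hD : deriv g =ᶠ[𝓝 0] D := h1.mono fun t ht => ht.deriv
  have hdd : deriv (deriv g) 0 = d := by rw [hD.deriv_eq, h2.deriv]
  have hmin := isLocalMin_of_deriv_deriv_pos (hdd ▸ hd) hmax.deriv_eq_zero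
    h1.self_of_nhds.continuousAt
  -- `g` is then locally constant, so its second derivative vanishes
  have hconst : g =ᶠ[𝓝 0] fun _ => g 0 := by
    filter_upwards [hmax, hmin] with t ha hb using le_antisymm ha hb
  have h3 : deriv g =ᶠ[𝓝 0] deriv fun _ => g 0 := hconst.deriv
  rw [h3.deriv_eq] at hdd
  simp at hdd
  exact hd.ne hdd

/-- The maximum principle for complex-valued harmonic functions on a ball. -/
lemma norm_le_of_lineHarm {n : ℕ} (hn : 0 < n) {W : Eucl n → ℂ} {s M : ℝ}
    (hc : ContinuousOn W (closedBall 0 s)) (hW : ∀ x ∈ ball (0 : Eucl n) s, LineHarm W x)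
    (hM : ∀ x ∈ sphere (0 : Eucl n) s, ‖W x‖ ≤ M) : ∀ x ∈ closedBall (0 : Eucl n) s, ‖W x‖ ≤ M := by
  intro x hx
  -- after multiplication by a unimodular constant, `‖W x‖` is the real part of `W x`
  obtain ⟨c, hc1, hcW⟩ : ∃ c : ℂ, ‖c‖ = 1 ∧ (c * W x).re = ‖W x‖ := by
    obtain ⟨c, hc1, h2⟩ := RCLike.exists_norm_eq_mul_self (W x)
    exact ⟨c, hc1, by rw [← h2]; simp⟩
  have key : ∀ ε > 0, ‖W x‖ ≤ M + ε * s ^ 2 := by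
    intro ε hε
    set g : Eucl n → ℝ := fun y => (c * W y).re + ε * ‖y‖ ^ 2 with hg
    have hgc : ContinuousOn g (closedBall 0 s) :=
      (Complex.continuous_re.comp_continuousOn (continuousOn_const.mul hc)).add
        (by fun_prop)
    obtain ⟨z, hz, hzmax⟩ := (isCompact_closedBall (0 : Eucl n) s).exists_isMaxOn ⟨x, hx⟩ hgc
    have hzs : z ∈ sphere (0 : Eucl n) s := by
      by_contra hzs
      have hzb : z ∈ ball (0 : Eucl n) s := by
        rw [mem_ball]; exact lt_of_le_of_ne hz hzs
      obtain ⟨D, d, h1, h2, h3⟩ := (hW z hzb).const_mul c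
      -- along every coordinate line the second derivative of `g` is `re (d i) + 2 ε`
      have hpos : ∃ i, 0 < (d i).re + 2 * ε := by
        by_contra hcon
        push Not at hcon
        have h4 : ∑ i, ((d i).re + 2 * ε) ≤ 0 := Finset.sum_nonpos fun i _ => hcon i
        have h5 : ∑ i, (d i).re = 0 := by rw [← Complex.re_sum, h3, Complex.zero_re]
        rw [Finset.sum_add_distrib, h5] at h4
        simp at h4
        have : (0 : ℝ) < n := by exact_mod_cast hn
        nlinarith
      obtain ⟨i, hi⟩ := hpos
      have hexp : ∀ t : ℝ, ‖z + t • basisV n i‖ ^ 2 = ‖z‖ ^ 2 + 2 * t * ⟪z, basisV n i⟫_ℝ + t ^ 2 := by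
        intro t
        rw [norm_add_sq_real, inner_smul_right, norm_smul]
        have : ‖basisV n i‖ = 1 := by simp [basisV]
        rw [this, mul_one, Real.norm_eq_abs, sq_abs]; ring
      have hq : ∀ t : ℝ, HasDerivAt (fun t : ℝ => ε * ‖z + t • basisV n i‖ ^ 2)
          (ε * (2 * ⟪z, basisV n i⟫_ℝ + 2 * t)) t := by
        intro t
        simp_rw [hexp]
        have : HasDerivAt (fun t : ℝ => ‖z‖ ^ 2 + 2 * t * ⟪z, basisV n i⟫_ℝ + t ^ 2)
          (2 * ⟪z, basisV n i⟫_ℝ + 2 * t) t := by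
          have h6 := (((hasDerivAt_id t).const_mul 2).mul_const ⟪z, basisV n i⟫_ℝ).const_add (‖z‖ ^ 2)
          exact (h6.add ((hasDerivAt_id t).pow 2)).congr_deriv (by simp)
        exact this.const_mul ε
      refine not_isLocalMax_of_deriv2_pos (g := fun t : ℝ => g (z + t • basisV n i))
        (D := fun t => (D i t).re + ε * (2 * ⟪z, basisV n i⟫_ℝ + 2 * t)) (d := (d i).re + 2 * ε)
        ?_ ?_ hi ?_
      · filter_upwards [h1 i] with t ht
        have h6 := (Complex.reCLM.hasFDerivAt.comp_hasDerivAt t ht).add (hq t)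
        exact h6
      · have h6 := Complex.reCLM.hasFDerivAt.comp_hasDerivAt (0 : ℝ) (h2 i)
        have h7 : HasDerivAt (fun t : ℝ => ε * (2 * ⟪z, basisV n i⟫_ℝ + 2 * t)) (2 * ε) 0 := by
          have := (((hasDerivAt_id (0 : ℝ)).const_mul 2).const_add (2 * ⟪z, basisV n i⟫_ℝ)).const_mul ε
          simpa [mul_comm] using this
        exact h6.add h7
      · have h8 : IsLocalMax g z :=
          hzmax.isLocalMax (mem_of_superset (isOpen_ball.mem_nhds hzb) ball_subset_closedBall)
        have h9 := (tendsto_line z (basisV n i)).eventually h8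
        show ∀ᶠ t in 𝓝 (0 : ℝ), g (z + t • basisV n i) ≤ g (z + (0 : ℝ) • basisV n i)
        simpa using h9
    have hzn : ‖z‖ = s := by simpa using hzs
    have h1 : g x ≤ g z := hzmax hx
    have h2 : (c * W z).re ≤ M := by
      refine (Complex.re_le_norm _).trans ?_
      rw [norm_mul, hc1, one_mul]; exact hM z hzs
    simp only [hg] at h1
    rw [hcW, hzn] at h1
    nlinarith [mul_nonneg hε.le (sq_nonneg ‖x‖)]
  have hlim : Tendsto (fun ε : ℝ => M + ε * s ^ 2) (𝓝[>] 0) (𝓝 M) := by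
    have : Tendsto (fun ε : ℝ => M + ε * s ^ 2) (𝓝 0) (𝓝 (M + 0 * s ^ 2)) := by
      apply Continuous.tendsto; fun_prop
    simpa using this.mono_left nhdsWithin_le_nhds
  exact ge_of_tendsto hlim (eventually_mem_nhdsWithin.mono fun ε hε => key ε hε)

/-! ### Harmonic kernels with a pole -/

/-- The functions `(b·v + C|v|²)/|v|ⁿ`, which are harmonic away from the origin. The Poisson kernel,
in either of its variables, is a translate of such a function. -/
noncomputable def kern {n : ℕ} (b : Eucl n) (C : ℝ) (v : Eucl n) : ℝ :=
  (⟪b, v⟫_ℝ + C * ‖v‖ ^ 2) * (‖v‖ ^ 2) ^ (-(n : ℝ) / 2)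

/-- First derivative of `kern b C` at `v` in the direction `e`. -/
noncomputable def kern1 {n : ℕ} (b : Eucl n) (C : ℝ) (e v : Eucl n) : ℝ :=
  (⟪b, e⟫_ℝ + 2 * C * ⟪v, e⟫_ℝ) * (‖v‖ ^ 2) ^ (-(n : ℝ) / 2) +
    (⟪b, v⟫_ℝ + C * ‖v‖ ^ 2) * (-(n : ℝ) * ⟪v, e⟫_ℝ * (‖v‖ ^ 2) ^ (-(n : ℝ) / 2 - 1))

/-- Second derivative of `kern b C` at `v` in the direction `e`. -/
noncomputable def kern2 {n : ℕ} (b : Eucl n) (C : ℝ) (e v : Eucl n) : ℝ :=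
  2 * C * ‖e‖ ^ 2 * (‖v‖ ^ 2) ^ (-(n : ℝ) / 2) +
    2 * ((⟪b, e⟫_ℝ + 2 * C * ⟪v, e⟫_ℝ) * (-(n : ℝ) * ⟪v, e⟫_ℝ * (‖v‖ ^ 2) ^ (-(n : ℝ) / 2 - 1))) +
    (⟪b, v⟫_ℝ + C * ‖v‖ ^ 2) * (-(n : ℝ) * ‖e‖ ^ 2 * (‖v‖ ^ 2) ^ (-(n : ℝ) / 2 - 1)) +
    (⟪b, v⟫_ℝ + C * ‖v‖ ^ 2) * ((n : ℝ) * (n + 2) * ⟪v, e⟫_ℝ ^ 2 *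
      (‖v‖ ^ 2) ^ (-(n : ℝ) / 2 - 1 - 1))

lemma hasDerivAt_norm_sq_line {n : ℕ} (v e : Eucl n) (t : ℝ) :
    HasDerivAt (fun t : ℝ => ‖v + t • e‖ ^ 2) (2 * ⟪v + t • e, e⟫_ℝ) t :=
  (hasDerivAt_line v e t).norm_sq

lemma hasDerivAt_inner_line {n : ℕ} (b v e : Eucl n) (t : ℝ) :
    HasDerivAt (fun t : ℝ => ⟪b, v + t • e⟫_ℝ) ⟪b, e⟫_ℝ t := by
  simpa using (hasDerivAt_const t b).inner ℝ (hasDerivAt_line v e t)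

lemma hasDerivAt_kern {n : ℕ} (b : Eucl n) (C : ℝ) (e v : Eucl n) (t : ℝ) (h : v + t • e ≠ 0) :
    HasDerivAt (fun t : ℝ => kern b C (v + t • e)) (kern1 b C e (v + t • e)) t := by
  have h0 : ‖v + t • e‖ ^ 2 ≠ 0 := by positivity
  have hN := hasDerivAt_norm_sq_line v e t
  have hL := (hasDerivAt_inner_line b v e t).add (hN.const_mul C)
  refine (hL.mul (hN.rpow_const (p := -(n : ℝ) / 2) (Or.inl h0))).congr_deriv ?_
  simp only [kern1, Pi.add_apply]
  ring

lemma hasDerivAt_kern1 {n : ℕ} (b : Eucl n) (C : ℝ) (e v : Eucl n) (t : ℝ) (h : v + t • e ≠ 0) :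
    HasDerivAt (fun t : ℝ => kern1 b C e (v + t • e)) (kern2 b C e (v + t • e)) t := by
  have h0 : ‖v + t • e‖ ^ 2 ≠ 0 := by positivity
  have hN := hasDerivAt_norm_sq_line v e t
  have hI : HasDerivAt (fun t : ℝ => ⟪v + t • e, e⟫_ℝ) (‖e‖ ^ 2) t := by
    have := hasDerivAt_inner_line e v e t
    simp_rw [real_inner_comm _ e] at this
    rwa [real_inner_self_eq_norm_sq] at this
  have hL := (hasDerivAt_inner_line b v e t).add (hN.const_mul C)
  have h1 := hN.rpow_const (p := -(n : ℝ) / 2) (Or.inl h0)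
  have h2 := hN.rpow_const (p := -(n : ℝ) / 2 - 1) (Or.inl h0)
  have h3 := ((hI.const_mul (2 * C)).const_add ⟪b, e⟫_ℝ).mul h1
  have h4 := hL.mul ((hI.const_mul (-(n : ℝ))).mul h2)
  refine (h3.add h4).congr_deriv ?_
  simp only [kern2, Pi.add_apply, Pi.mul_apply]
  ring

lemma sum_kern2 {n : ℕ} (b : Eucl n) (C : ℝ) {v : Eucl n} (h : v ≠ 0) :
    ∑ i, kern2 b C (basisV n i) v = 0 := by
  have h0 : 0 < ‖v‖ ^ 2 := by positivity
  set N := ‖v‖ ^ 2 with hN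
  have e1 : ∀ i, ‖basisV n i‖ ^ 2 = 1 := fun i => by simp [basisV]
  have e2 : ∀ w : Eucl n, ∀ i, ⟪w, basisV n i⟫_ℝ = w i := fun w i => by
    simp [basisV, EuclideanSpace.inner_single_right]
  have s1 : ∑ i, v i ^ 2 = N := by rw [hN, EuclideanSpace.norm_sq_eq]; simp
  have s2 : ∑ i, b i * v i = ⟪b, v⟫_ℝ := by
    rw [PiLp.inner_apply]; simp [mul_comm]
  have p1 : N ^ (-(n : ℝ) / 2) = N ^ (-(n : ℝ) / 2 - 1) * N := by
    rw [← Real.rpow_add_one h0.ne']; congr 1; ring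
  have p2 : N ^ (-(n : ℝ) / 2 - 1) = N ^ (-(n : ℝ) / 2 - 1 - 1) * N := by
    rw [← Real.rpow_add_one h0.ne']; congr 1; ring
  simp only [kern2, e1, e2, ← hN]
  rw [p1, p2]
  set Q := N ^ (-(n : ℝ) / 2 - 1 - 1)
  have : ∀ i, 2 * C * 1 * (Q * N * N) + 2 * ((b i + 2 * C * v i) * (-(n : ℝ) * v i * (Q * N))) +
      (⟪b, v⟫_ℝ + C * N) * (-(n : ℝ) * 1 * (Q * N)) +
      (⟪b, v⟫_ℝ + C * N) * ((n : ℝ) * (n + 2) * v i ^ 2 * Q) =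
      (2 * C * N * N * Q - (⟪b, v⟫_ℝ + C * N) * n * N * Q) + (-(2 * n * N * Q)) * (b i * v i) +
      (-(4 * n * C * N * Q) + (⟪b, v⟫_ℝ + C * N) * (n * (n + 2)) * Q) * v i ^ 2 := fun i => by ring
  simp_rw [this]
  rw [Finset.sum_add_distrib, Finset.sum_add_distrib, ← Finset.mul_sum, ← Finset.mul_sum, s1, s2]
  simp
  ring

lemma basisV_norm {n : ℕ} (i : Fin n) : ‖basisV n i‖ = 1 := by simp [basisV]

lemma lineHarm_kern {n : ℕ} (b ω : Eucl n) (C : ℝ) {x : Eucl n} (h : x ≠ ω) :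
    LineHarm (fun y => ((kern b C (y - ω) : ℝ) : ℂ)) x := by
  have hsub : ∀ (t : ℝ) (e : Eucl n), x + t • e - ω = (x - ω) + t • e := fun t e => by abel
  refine ⟨fun i t => (kern1 b C (basisV n i) ((x - ω) + t • basisV n i) : ℝ),
    fun i => (kern2 b C (basisV n i) (x - ω) : ℝ), fun i => ?_, fun i => ?_, ?_⟩
  · have h1 : ∀ᶠ t in 𝓝 (0 : ℝ), (x - ω) + t • basisV n i ≠ 0 :=
      (tendsto_line (x - ω) (basisV n i)).eventually_ne (sub_ne_zero.2 h)
    filter_upwards [h1] with t ht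
    simp_rw [hsub]
    exact (hasDerivAt_kern b C _ _ t ht).ofReal_comp
  · have := (hasDerivAt_kern1 b C (basisV n i) (x - ω) 0 (by simpa using sub_ne_zero.2 h)).ofReal_comp
    simpa using this
  · rw [← Complex.ofReal_sum, sum_kern2 b C (sub_ne_zero.2 h), Complex.ofReal_zero]

lemma contDiffAt_kern {n : ℕ} (b ω : Eucl n) (C : ℝ) {x : Eucl n} (h : x ≠ ω) :
    ContDiffAt ℝ 2 (fun y => ((kern b C (y - ω) : ℝ) : ℂ)) x := by
  have h0 : ‖x - ω‖ ^ 2 ≠ 0 := by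
    have := sub_ne_zero.2 h
    positivity
  apply Complex.ofRealCLM.contDiff.contDiffAt.comp
  have h1 : ContDiffAt ℝ 2 (fun y : Eucl n => ‖y - ω‖ ^ 2) x :=
    (contDiffAt_id.sub contDiffAt_const).norm_sq ℝ
  have h2 : ContDiffAt ℝ 2 (fun y : Eucl n => ⟪b, y - ω⟫_ℝ) x :=
    contDiffAt_const.inner ℝ (contDiffAt_id.sub contDiffAt_const)
  exact (h2.add (contDiffAt_const.mul h1)).mul (h1.rpow_const_of_ne h0)

lemma harmOn_kern {n : ℕ} (b ω : Eucl n) (C : ℝ) (c : ℂ) (h : 1 ≤ ‖ω‖) :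
    HarmOn (fun y => c * ((kern b C (y - ω) : ℝ) : ℂ)) (uBall n) := by
  have hne : ∀ x ∈ uBall n, x ≠ ω := by
    rintro x hx rfl
    have : ‖x‖ < 1 := by simpa [uBall] using hx
    linarith
  exact harmOn_of_lineHarm isOpen_ball
    (fun x hx => (contDiffAt_const.mul (contDiffAt_kern b ω C (hne x hx))).contDiffWithinAt)
    fun x hx => (lineHarm_kern b ω C (hne x hx)).const_mul c

lemma continuousAt_kern {n : ℕ} (b ω : Eucl n) (C : ℝ) {x : Eucl n} (h : x ≠ ω) :
    ContinuousAt (fun y => ((kern b C (y - ω) : ℝ) : ℂ)) x := (contDiffAt_kern b ω C h).continuousAt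

lemma aesm_of_continuousOn {n : ℕ} {F : Type*} [NormedAddCommGroup F] {f : Eucl n → F}
    (hf : ContinuousOn f (uSphere n)) : AEStronglyMeasurable f (sphMeasure n) := by
  rw [sphMeasure]
  exact ((hf.aestronglyMeasurable_of_isCompact (isCompact_sphere _ _)
    isClosed_sphere.measurableSet)).smul_measure _

lemma integrable_of_continuousOn {n : ℕ} (hn : 2 ≤ n) {F : Type*} [NormedAddCommGroup F]
    {f : Eucl n → F} (hf : ContinuousOn f (uSphere n)) : Integrable f (sphMeasure n) := by
  have := isProbabilityMeasure_sphMeasure hn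
  obtain ⟨M, hM⟩ := (isCompact_sphere (0 : Eucl n) 1).exists_bound_of_continuousOn hf
  exact Integrable.of_bound (aesm_of_continuousOn hf) M
    ((ae_sphMeasure_mem n).mono fun z hz => hM z hz)

/-- Differentiation under the integral sign along a line. -/
lemma hasDerivAt_integral_line {n : ℕ} (hn : 2 ≤ n) {u : Eucl n → ℂ}
    (hu : ContinuousOn u (uSphere n)) {η : ℝ} {F F' : ℝ → Eucl n → ℝ}
    (hF : ∀ t ∈ ball (0 : ℝ) η, ∀ z ∈ uSphere n, HasDerivAt (fun t => F t z) (F' t z) t)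
    (hFc : ContinuousOn (fun w : ℝ × Eucl n => F w.1 w.2) (closedBall 0 η ×ˢ uSphere n))
    (hFc' : ContinuousOn (fun w : ℝ × Eucl n => F' w.1 w.2) (closedBall 0 η ×ˢ uSphere n))
    {t : ℝ} (ht : t ∈ ball (0 : ℝ) η) :
    HasDerivAt (fun t => ∫ z, u z * (F t z : ℂ) ∂(sphMeasure n))
      (∫ z, u z * (F' t z : ℂ) ∂(sphMeasure n)) t := by
  have := isProbabilityMeasure_sphMeasure hn
  have hslice : ∀ {G : ℝ → Eucl n → ℝ},
      ContinuousOn (fun w : ℝ × Eucl n => G w.1 w.2) (closedBall 0 η ×ˢ uSphere n) →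
      ∀ s ∈ ball (0 : ℝ) η, ContinuousOn (fun z => u z * (G s z : ℂ)) (uSphere n) := by
    intro G hG s hs
    refine hu.mul (Complex.continuous_ofReal.comp_continuousOn ?_)
    exact hG.comp (f := fun z => (s, z)) (by fun_prop) fun z hz => ⟨ball_subset_closedBall hs, hz⟩
  have hcpt : IsCompact (closedBall (0 : ℝ) η ×ˢ uSphere n) :=
    (isCompact_closedBall _ _).prod (isCompact_sphere _ _)
  obtain ⟨M, hM⟩ := hcpt.exists_bound_of_continuousOn hFc'
  obtain ⟨M', hM'⟩ := (isCompact_sphere (0 : Eucl n) 1).exists_bound_of_continuousOn hu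
  have hs : ball (0 : ℝ) η ∈ 𝓝 t := isOpen_ball.mem_nhds ht
  refine (hasDerivAt_integral_of_dominated_loc_of_deriv_le (bound := fun _ => M' * M)
    (F' := fun t z => u z * (F' t z : ℂ)) hs ?_
    (integrable_of_continuousOn hn (hslice hFc t ht))
    (aesm_of_continuousOn (hslice hFc' t ht)) ?_ (integrable_const _) ?_).2
  · filter_upwards [hs] with s hs using aesm_of_continuousOn (hslice hFc s hs)
  · filter_upwards [ae_sphMeasure_mem n] with z hz s hs
    rw [norm_mul, Complex.norm_real]
    have h1 := hM' z hz
    have h2 := hM (s, z) ⟨ball_subset_closedBall hs, hz⟩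
    exact mul_le_mul h1 h2 (norm_nonneg _) ((norm_nonneg _).trans h1)
  · filter_upwards [ae_sphMeasure_mem n] with z hz s hs
    exact (hF s hs z hz).ofReal_comp.const_mul (u z)

lemma lineHarm_integral_kern {n : ℕ} (hn : 2 ≤ n) {u : Eucl n → ℂ}
    (hu : ContinuousOn u (uSphere n)) {x : Eucl n} (hx : x ∈ uBall n) :
    LineHarm (fun y => ∫ z, u z * ((kern ((-2 : ℝ) • z) (-1) (y - z) : ℝ) : ℂ) ∂(sphMeasure n)) x := by
  have hx1 : ‖x‖ < 1 := by simpa [uBall] using hx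
  set η : ℝ := (1 - ‖x‖) / 2 with hη
  have hη0 : 0 < η := by rw [hη]; linarith
  have hsub : ∀ (t : ℝ) (e z : Eucl n), x + t • e - z = (x - z) + t • e := fun t e z => by abel
  have hne : ∀ i, ∀ w ∈ closedBall (0 : ℝ) η ×ˢ uSphere n, (x - w.2) + w.1 • basisV n i ≠ 0 := by
    rintro i ⟨t, z⟩ ⟨ht, hz⟩ h0
    have hz1 : ‖z‖ = 1 := by simpa [uSphere] using hz
    have ht1 : ‖t‖ ≤ η := by simpa using ht
    have hz2 : z = x + t • basisV n i := by
      rw [← hsub] at h0; exact (sub_eq_zero.1 h0).symm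
    have := norm_add_le x (t • basisV n i)
    rw [← hz2, hz1, norm_smul, basisV_norm, mul_one] at this
    linarith
  have hpow : ∀ i (q : ℝ), ContinuousOn (fun w : ℝ × Eucl n =>
      (‖(x - w.2) + w.1 • basisV n i‖ ^ 2) ^ q) (closedBall 0 η ×ˢ uSphere n) := by
    intro i q
    refine ContinuousOn.rpow_const (by fun_prop) fun w hw => Or.inl ?_
    have := hne i w hw
    positivity
  have c0 : ∀ i, ContinuousOn (fun w : ℝ × Eucl n => kern ((-2 : ℝ) • w.2) (-1)
      ((x - w.2) + w.1 • basisV n i)) (closedBall 0 η ×ˢ uSphere n) := by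
    intro i
    unfold kern
    exact ContinuousOn.mul (by fun_prop) (hpow i _)
  have c1 : ∀ i, ContinuousOn (fun w : ℝ × Eucl n => kern1 ((-2 : ℝ) • w.2) (-1) (basisV n i)
      ((x - w.2) + w.1 • basisV n i)) (closedBall 0 η ×ˢ uSphere n) := by
    intro i
    unfold kern1
    have := hpow i (-(n : ℝ) / 2)
    have := hpow i (-(n : ℝ) / 2 - 1)
    fun_prop
  have c2 : ∀ i, ContinuousOn (fun w : ℝ × Eucl n => kern2 ((-2 : ℝ) • w.2) (-1) (basisV n i)
      ((x - w.2) + w.1 • basisV n i)) (closedBall 0 η ×ˢ uSphere n) := by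
    intro i
    unfold kern2
    have := hpow i (-(n : ℝ) / 2)
    have := hpow i (-(n : ℝ) / 2 - 1)
    have := hpow i (-(n : ℝ) / 2 - 1 - 1)
    fun_prop
  refine ⟨fun i t => ∫ z, u z * ((kern1 ((-2 : ℝ) • z) (-1) (basisV n i)
      ((x - z) + t • basisV n i) : ℝ) : ℂ) ∂(sphMeasure n),
    fun i => ∫ z, u z * ((kern2 ((-2 : ℝ) • z) (-1) (basisV n i)
      ((x - z) + (0 : ℝ) • basisV n i) : ℝ) : ℂ) ∂(sphMeasure n), fun i => ?_, fun i => ?_, ?_⟩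
  · filter_upwards [ball_mem_nhds (0 : ℝ) hη0] with t ht
    simp_rw [hsub]
    refine hasDerivAt_integral_line hn hu
      (F := fun t z => kern ((-2 : ℝ) • z) (-1) ((x - z) + t • basisV n i))
      (F' := fun t z => kern1 ((-2 : ℝ) • z) (-1) (basisV n i) ((x - z) + t • basisV n i))
      (fun t ht z hz => ?_) (c0 i) (c1 i) ht
    exact hasDerivAt_kern _ _ _ _ t (hne i (t, z) ⟨ball_subset_closedBall ht, hz⟩)
  · refine hasDerivAt_integral_line hn hu
      (F := fun t z => kern1 ((-2 : ℝ) • z) (-1) (basisV n i) ((x - z) + t • basisV n i))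
      (F' := fun t z => kern2 ((-2 : ℝ) • z) (-1) (basisV n i) ((x - z) + t • basisV n i))
      (fun t ht z hz => ?_) (c1 i) (c2 i) (mem_ball_self hη0)
    exact hasDerivAt_kern1 _ _ _ _ t (hne i (t, z) ⟨ball_subset_closedBall ht, hz⟩)
  · rw [← integral_finsetSum]
    · refine integral_eq_zero_of_ae ?_
      filter_upwards [ae_sphMeasure_mem n] with z hz
      have hxz : x - z ≠ 0 := by
        have hz1 : ‖z‖ = 1 := by simpa [uSphere] using hz
        intro h; rw [sub_eq_zero.1 h] at hx1; linarith
      rw [← Finset.mul_sum, ← Complex.ofReal_sum]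
      simp [sum_kern2 _ _ hxz]
    · intro i _
      refine integrable_of_continuousOn hn (hu.mul (Complex.continuous_ofReal.comp_continuousOn ?_))
      exact (c2 i).comp (f := fun z => ((0 : ℝ), z)) (by fun_prop)
        fun z hz => ⟨mem_closedBall_self hη0.le, hz⟩

/-! ### The extended Poisson kernel and the Poisson formula -/

lemma one_sub_mul_sq_le {n : ℕ} (x y : Eucl n) :
    (1 - ‖x‖ * ‖y‖) ^ 2 ≤ 1 - 2 * ⟪x, y⟫_ℝ + ‖x‖ ^ 2 * ‖y‖ ^ 2 := by
  have := real_inner_le_norm x y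
  nlinarith

lemma denom_pos {n : ℕ} {x y : Eucl n} (h : ‖x‖ * ‖y‖ < 1) :
    0 < 1 - 2 * ⟪x, y⟫_ℝ + ‖x‖ ^ 2 * ‖y‖ ^ 2 :=
  lt_of_lt_of_le (by have : 0 < 1 - ‖x‖ * ‖y‖ := by linarith
                     positivity) (one_sub_mul_sq_le x y)

lemma norm_mul_lt_one {n : ℕ} {x y : Eucl n} (hx : ‖x‖ ≤ 1) (hy : ‖y‖ < 1) : ‖x‖ * ‖y‖ < 1 := by
  nlinarith [norm_nonneg x, norm_nonneg y]

lemma extPoisson_comm {n : ℕ} (x y : Eucl n) : extPoisson n y x = extPoisson n x y := by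
  simp only [extPoisson, real_inner_comm x y, mul_comm (‖x‖ ^ 2)]

lemma extPoisson_smul {n : ℕ} (r : ℝ) (x y : Eucl n) :
    extPoisson n y (r • x) = extPoisson n (r • y) x := by
  simp only [extPoisson, norm_smul, real_inner_smul_left, real_inner_smul_right, mul_pow]
  congr 2 <;> ring_nf

lemma extPoisson_isometry {n : ℕ} (A : Eucl n ≃ₗᵢ[ℝ] Eucl n) (x y : Eucl n) :
    extPoisson n (A y) (A x) = extPoisson n y x := by
  simp [extPoisson]

lemma extPoisson_pos {n : ℕ} {x y : Eucl n} (h : ‖x‖ * ‖y‖ < 1) : 0 < extPoisson n y x := by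
  have h0 : 0 ≤ ‖x‖ * ‖y‖ := by positivity
  have h1 : 0 < 1 - ‖x‖ ^ 2 * ‖y‖ ^ 2 := by nlinarith
  exact div_pos h1 (Real.rpow_pos_of_pos (denom_pos h) _)

lemma extPoisson_zero {n : ℕ} (x : Eucl n) : extPoisson n 0 x = 1 := by simp [extPoisson]

lemma continuousAt_extPoisson {n : ℕ} {x y : Eucl n} (h : ‖x‖ * ‖y‖ < 1) :
    ContinuousAt (fun w : Eucl n × Eucl n => extPoisson n w.1 w.2) (y, x) := by
  unfold extPoisson
  have h1 := denom_pos h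
  refine ContinuousAt.div (by fun_prop) ?_ (Real.rpow_pos_of_pos h1 _).ne'
  exact ContinuousAt.rpow_const (by fun_prop) (Or.inl h1.ne')

lemma extPoisson_le {n : ℕ} {x y : Eucl n} (hx : ‖x‖ ≤ 1) (hy : ‖y‖ < 1) :
    extPoisson n y x ≤ 2 * (1 - ‖y‖) ^ (-((n : ℝ) - 1)) ∨ n = 0 := by
  rcases Nat.eq_zero_or_pos n with h | hn
  · exact Or.inr h
  left
  set t := ‖x‖ * ‖y‖ with ht
  have ht0 : 0 ≤ t := by positivity
  have hts : t ≤ ‖y‖ := by nlinarith [norm_nonneg y]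
  have h1 : 0 < 1 - t := by linarith
  have h2 : ((1 - t) ^ 2) ^ ((n : ℝ) / 2) ≤ (1 - 2 * ⟪x, y⟫_ℝ + ‖x‖ ^ 2 * ‖y‖ ^ 2) ^ ((n : ℝ) / 2) :=
    Real.rpow_le_rpow (by positivity) (one_sub_mul_sq_le x y) (by positivity)
  have h3 : ((1 - t) ^ 2) ^ ((n : ℝ) / 2) = (1 - t) ^ (n : ℝ) := by
    rw [← Real.rpow_natCast (1 - t) 2, ← Real.rpow_mul h1.le]; congr 1; push_cast; ring
  rw [h3] at h2
  have h4 : 0 < (1 - t) ^ (n : ℝ) := Real.rpow_pos_of_pos h1 _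
  calc extPoisson n y x ≤ (1 - ‖x‖ ^ 2 * ‖y‖ ^ 2) / (1 - t) ^ (n : ℝ) := by
        refine div_le_div_of_nonneg_left ?_ h4 h2
        nlinarith
    _ = (1 + t) * (1 - t) ^ (-((n : ℝ) - 1)) := by
        rw [neg_sub, Real.rpow_sub h1, Real.rpow_one]
        have : 1 - ‖x‖ ^ 2 * ‖y‖ ^ 2 = (1 + t) * (1 - t) := by rw [ht]; ring
        rw [this]; ring
    _ ≤ 2 * (1 - ‖y‖) ^ (-((n : ℝ) - 1)) := by
        have hn1 : (1 : ℝ) ≤ n := by exact_mod_cast hn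
        have h5 : (1 - t) ^ (-((n : ℝ) - 1)) ≤ (1 - ‖y‖) ^ (-((n : ℝ) - 1)) :=
          Real.rpow_le_rpow_of_nonpos (by linarith) (by linarith) (by linarith)
        exact mul_le_mul (by linarith) h5 (Real.rpow_nonneg h1.le _) (by norm_num)

lemma extPoisson_eq_kern_sphere {n : ℕ} {y z : Eucl n} (hz : z ∈ uSphere n) :
    extPoisson n y z = kern ((-2 : ℝ) • z) (-1) (y - z) := by
  have hz1 : ‖z‖ = 1 := by simpa [uSphere] using hz
  have h1 : ‖y - z‖ ^ 2 = 1 - 2 * ⟪z, y⟫_ℝ + ‖z‖ ^ 2 * ‖y‖ ^ 2 := by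
    rw [norm_sub_sq_real, hz1, real_inner_comm]; ring
  rw [kern, extPoisson, ← h1, neg_div, Real.rpow_neg (by positivity), div_eq_mul_inv]
  congr 1
  rw [h1, hz1, inner_sub_right, real_inner_smul_left, real_inner_smul_left,
    real_inner_self_eq_norm_sq, hz1]
  ring

/-- For `ω = y/|y|²`, the denominator of the Poisson kernel is `|y|²|x - ω|²`. -/
lemma denom_eq {n : ℕ} {y : Eucl n} (hy : y ≠ 0) (x : Eucl n) :
    1 - 2 * ⟪x, y⟫_ℝ + ‖x‖ ^ 2 * ‖y‖ ^ 2 = ‖y‖ ^ 2 * ‖x - (‖y‖ ^ 2)⁻¹ • y‖ ^ 2 := by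
  have h0 : ‖y‖ ≠ 0 := by simpa using hy
  rw [norm_sub_sq_real, inner_smul_right, norm_smul, Real.norm_eq_abs, abs_of_nonneg (by positivity)]
  field_simp
  ring

lemma one_le_norm_pole {n : ℕ} {y : Eucl n} (hy : y ≠ 0) (hy1 : ‖y‖ < 1) :
    1 < ‖(‖y‖ ^ 2)⁻¹ • y‖ := by
  have h0 : 0 < ‖y‖ := by simpa using hy
  rw [norm_smul, Real.norm_eq_abs, abs_of_nonneg (by positivity)]
  have : (‖y‖ ^ 2)⁻¹ * ‖y‖ = ‖y‖⁻¹ := by field_simp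
  rw [this]
  exact (one_lt_inv₀ h0).2 hy1

/-- A quotient of a quadratic polynomial of the form `b·v + C|v|²`, `v = x - y/|y|²`, by the
denominator of the Poisson kernel is a multiple of `kern`. -/
lemma kern_eq_div {n : ℕ} {y : Eucl n} (hy : y ≠ 0) (b : Eucl n) (C : ℝ) (x : Eucl n) :
    (⟪b, x - (‖y‖ ^ 2)⁻¹ • y⟫_ℝ + C * ‖x - (‖y‖ ^ 2)⁻¹ • y‖ ^ 2) /
      (1 - 2 * ⟪x, y⟫_ℝ + ‖x‖ ^ 2 * ‖y‖ ^ 2) ^ ((n : ℝ) / 2) =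
    ((‖y‖ ^ 2) ^ ((n : ℝ) / 2))⁻¹ * kern b C (x - (‖y‖ ^ 2)⁻¹ • y) := by
  rw [denom_eq hy, Real.mul_rpow (by positivity) (by positivity), kern, neg_div,
    Real.rpow_neg (by positivity), div_eq_mul_inv, mul_inv]
  ring

lemma extPoisson_eq_kern {n : ℕ} {y : Eucl n} (hy : y ≠ 0) (x : Eucl n) :
    extPoisson n y x = ((‖y‖ ^ 2) ^ ((n : ℝ) / 2))⁻¹ *
      kern ((-2 : ℝ) • y) (-‖y‖ ^ 2) (x - (‖y‖ ^ 2)⁻¹ • y) := by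
  have h0 : ‖y‖ ≠ 0 := by simpa using hy
  rw [← kern_eq_div hy, extPoisson]
  congr 1
  rw [norm_sub_sq_real, inner_sub_right, inner_smul_right, inner_smul_right, norm_smul,
    Real.norm_eq_abs, abs_of_nonneg (by positivity), real_inner_smul_left, real_inner_smul_left,
    real_inner_self_eq_norm_sq, real_inner_comm x y]
  field_simp
  ring

lemma harmOn_congr {n : ℕ} {f g : Eucl n → ℂ} (hf : HarmOn f (uBall n))
    (h : ∀ x ∈ uBall n, f x = g x) : HarmOn g (uBall n) := by
  refine harmOn_of_lineHarm isOpen_ball (hf.1.congr fun x hx => (h x hx).symm) fun x hx => ?_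
  exact (lineHarm_of_harmOn isOpen_ball hf hx).congr
    (mem_of_superset (isOpen_ball.mem_nhds hx) h)

lemma harmOn_extPoisson {n : ℕ} {y : Eucl n} (hy1 : ‖y‖ < 1) :
    HarmOn (fun x => (extPoisson n y x : ℂ)) (uBall n) := by
  by_cases hy : y = 0
  · subst hy
    simp_rw [extPoisson_zero]
    exact harmOn_of_lineHarm isOpen_ball contDiffOn_const fun x _ => lineHarm_const _ x
  · simp_rw [extPoisson_eq_kern hy, Complex.ofReal_mul]
    exact harmOn_kern _ _ _ _ (one_le_norm_pole hy hy1).le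

lemma continuousOn_extPoisson {n : ℕ} {y : Eucl n} (hy1 : ‖y‖ < 1) :
    ContinuousOn (fun x => extPoisson n y x) (closedBall 0 1) := by
  intro x hx
  have h := continuousAt_extPoisson (norm_mul_lt_one (x := x) (by simpa using hx) hy1)
  exact (h.comp (f := fun x => (y, x)) (by fun_prop)).continuousWithinAt

lemma uSphere_subset {n : ℕ} : uSphere n ⊆ closedBall 0 1 := sphere_subset_closedBall

lemma lineHarm_poissonInt {n : ℕ} (hn : 2 ≤ n) {u : Eucl n → ℂ} (hu : ContinuousOn u (uSphere n))
    {x : Eucl n} (hx : x ∈ uBall n) :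
    LineHarm (fun y => ∫ z, u z * (extPoisson n y z : ℂ) ∂(sphMeasure n)) x := by
  refine (lineHarm_integral_kern hn hu hx).congr (Eventually.of_forall fun y => ?_)
  refine integral_congr_ae ?_
  filter_upwards [ae_sphMeasure_mem n] with z hz
  rw [extPoisson_eq_kern_sphere hz]

lemma continuousOn_poissonInt {n : ℕ} (hn : 2 ≤ n) {u : Eucl n → ℂ}
    (hu : ContinuousOn u (uSphere n)) {s : ℝ} (hs : s < 1) :
    ContinuousOn (fun y => ∫ z, u z * (extPoisson n y z : ℂ) ∂(sphMeasure n)) (closedBall 0 s) := by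
  have := isProbabilityMeasure_sphMeasure hn
  obtain ⟨M', hM'⟩ := (isCompact_sphere (0 : Eucl n) 1).exists_bound_of_continuousOn hu
  have hprod : ∀ w ∈ closedBall (0 : Eucl n) s ×ˢ uSphere n, ‖w.2‖ * ‖w.1‖ < 1 := by
    rintro ⟨y, z⟩ ⟨hy, hz⟩
    have hz1 : ‖z‖ = 1 := by simpa [uSphere] using hz
    have hy1 : ‖y‖ ≤ s := by simpa using hy
    simp only [hz1, one_mul]; linarith
  have hc : ContinuousOn (fun w : Eucl n × Eucl n => extPoisson n w.1 w.2)
      (closedBall 0 s ×ˢ uSphere n) := fun w hw =>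
    (continuousAt_extPoisson (hprod w hw)).continuousWithinAt
  obtain ⟨M, hM⟩ := ((isCompact_closedBall (0 : Eucl n) s).prod
    (isCompact_sphere (0 : Eucl n) 1)).exists_bound_of_continuousOn hc
  refine continuousOn_of_dominated (bound := fun _ => M' * M) ?_ ?_ (integrable_const _) ?_
  · intro y hy
    refine aesm_of_continuousOn (hu.mul (Complex.continuous_ofReal.comp_continuousOn ?_))
    exact (continuousOn_extPoisson (lt_of_le_of_lt (by simpa using hy) hs)).mono uSphere_subset
  · intro y hy
    filter_upwards [ae_sphMeasure_mem n] with z hz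
    rw [norm_mul, Complex.norm_real]
    have h1 := hM' z hz
    exact mul_le_mul h1 (hM (y, z) ⟨hy, hz⟩) (norm_nonneg _) ((norm_nonneg _).trans h1)
  · filter_upwards [ae_sphMeasure_mem n] with z hz
    refine continuousOn_const.mul (Complex.continuous_ofReal.comp_continuousOn ?_)
    exact hc.comp (f := fun y => (y, z)) (by fun_prop) fun y hy => ⟨hy, hz⟩

/-- The Poisson kernel has total mass one: the integral is a rotation invariant harmonic function of
`y`, hence constant by the maximum principle. -/
lemma integral_extPoisson {n : ℕ} (hn : 2 ≤ n) {y : Eucl n} (hy : ‖y‖ < 1) :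
    ∫ z, extPoisson n y z ∂(sphMeasure n) = 1 := by
  have := isProbabilityMeasure_sphMeasure hn
  set F : Eucl n → ℂ := fun y => ∫ z, (1 : ℂ) * (extPoisson n y z : ℂ) ∂(sphMeasure n) with hF
  have h1 : ∀ w : Eucl n, ‖w‖ = ‖y‖ → F w = F y := by
    intro w hw
    obtain ⟨A, rfl⟩ := exists_isometry_eq hw.symm
    simp only [hF]
    rw [← integral_comp_isometry hn A]
    simp_rw [extPoisson_isometry]
  have hcu : ContinuousOn (fun _ : Eucl n => (1 : ℂ)) (uSphere n) := continuousOn_const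
  have h2 := norm_le_of_lineHarm (by omega) (W := fun x => F x - F y) (s := ‖y‖) (M := 0)
    ((continuousOn_poissonInt hn hcu hy).sub continuousOn_const)
    (fun x hx => (lineHarm_poissonInt hn hcu (ball_subset_ball hy.le hx)).sub (lineHarm_const _ x))
    (fun x hx => by rw [h1 x (by simpa using hx)]; simp) 0 (by simp)
  have h3 : F 0 = F y := by
    rw [← sub_eq_zero]; exact norm_le_zero_iff.1 h2
  have h4 : F 0 = 1 := by simp [hF, extPoisson_zero]
  have h5 : F y = ((∫ z, extPoisson n y z ∂(sphMeasure n) : ℝ) : ℂ) := by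
    simp only [hF, one_mul]; exact integral_ofReal
  rw [← h3, h4] at h5
  exact_mod_cast h5.symm

lemma extPoisson_le_of_dist {n : ℕ} {z w : Eucl n} {s δ : ℝ} (hz : z ∈ uSphere n) (hδ : 0 < δ)
    (hw : w ∈ uSphere n) (hs : 0 ≤ s) (hs1 : 1 - s < δ / 2) (hs2 : s < 1) (hd : δ ≤ ‖z - w‖) :
    extPoisson n (s • z) w ≤ (1 - s ^ 2) / ((δ / 2) ^ 2) ^ ((n : ℝ) / 2) := by
  have hz1 : ‖z‖ = 1 := by simpa [uSphere] using hz
  have hw1 : ‖w‖ = 1 := by simpa [uSphere] using hw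
  have hsz : ‖s • z‖ = s := by rw [norm_smul, hz1, mul_one, Real.norm_eq_abs, abs_of_nonneg hs]
  have h1 : ‖s • z - w‖ ^ 2 = 1 - 2 * ⟪w, s • z⟫_ℝ + ‖w‖ ^ 2 * ‖s • z‖ ^ 2 := by
    rw [norm_sub_sq_real, hw1, real_inner_comm]; ring
  have h2 : δ / 2 ≤ ‖s • z - w‖ := by
    have h3 : z - w = (s • z - w) + (1 - s) • z := by module
    have h4 := norm_add_le (s • z - w) ((1 - s) • z)
    rw [← h3, norm_smul, hz1, mul_one, Real.norm_eq_abs, abs_of_nonneg (by linarith)] at h4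
    linarith
  rw [extPoisson, ← h1, hsz, hw1]
  have h5 : ((δ / 2) ^ 2) ^ ((n : ℝ) / 2) ≤ (‖s • z - w‖ ^ 2) ^ ((n : ℝ) / 2) :=
    Real.rpow_le_rpow (by positivity) (by gcongr) (by positivity)
  have h6 : (0 : ℝ) < ((δ / 2) ^ 2) ^ ((n : ℝ) / 2) := by positivity
  have h7 : 0 ≤ 1 - s ^ 2 := by nlinarith
  calc _ ≤ (1 - 1 ^ 2 * s ^ 2) / ((δ / 2) ^ 2) ^ ((n : ℝ) / 2) := by
        apply div_le_div_of_nonneg_left _ h6 h5; linarith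
    _ = _ := by ring

/-- The Poisson integral formula on the unit ball. -/
lemma poisson_formula {n : ℕ} (hn : 2 ≤ n) {u : Eucl n → ℂ} (hc : ContinuousOn u (closedBall 0 1))
    (hu : ∀ x ∈ uBall n, LineHarm u x) {y : Eucl n} (hy : ‖y‖ < 1) :
    u y = ∫ z, u z * (extPoisson n y z : ℂ) ∂(sphMeasure n) := by
  have := isProbabilityMeasure_sphMeasure hn
  have hcS : ContinuousOn u (uSphere n) := hc.mono uSphere_subset
  set v : Eucl n → ℂ := fun y => ∫ z, u z * (extPoisson n y z : ℂ) ∂(sphMeasure n) with hv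
  obtain ⟨M, hM⟩ := (isCompact_closedBall (0 : Eucl n) 1).exists_bound_of_continuousOn hc
  have hM0 : 0 ≤ M := (norm_nonneg _).trans (hM 0 (by simp))
  suffices h : ∀ ε > 0, ‖u y - v y‖ ≤ 3 * ε by
    have h0 : ‖u y - v y‖ ≤ 0 := by
      refine le_of_forall_pos_le_add fun ε hε => ?_
      have := h (ε / 3) (by positivity)
      linarith
    exact sub_eq_zero.1 (norm_le_zero_iff.1 h0)
  intro ε hε
  have huc := (isCompact_closedBall (0 : Eucl n) 1).uniformContinuousOn_of_continuous hc
  obtain ⟨δ, hδ, hδu⟩ := Metric.uniformContinuousOn_iff.1 huc ε hε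
  -- a radius `s < 1` close to `1`, for which the maximum principle is applied on `closedBall 0 s`
  have hlim : Tendsto (fun s : ℝ => 2 * M * ((1 - s ^ 2) / ((δ / 2) ^ 2) ^ ((n : ℝ) / 2))) (𝓝[<] 1)
      (𝓝 0) := by
    have : Tendsto (fun s : ℝ => 2 * M * ((1 - s ^ 2) / ((δ / 2) ^ 2) ^ ((n : ℝ) / 2))) (𝓝 1)
      (𝓝 (2 * M * ((1 - 1 ^ 2) / ((δ / 2) ^ 2) ^ ((n : ℝ) / 2)))) := by
      apply Continuous.tendsto; fun_prop
    simpa using this.mono_left nhdsWithin_le_nhds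
  have e1 := hlim.eventually (gt_mem_nhds hε)
  have e2 : ∀ᶠ s in 𝓝[<] (1 : ℝ), max ‖y‖ (1 - δ / 2) < s :=
    mem_nhdsWithin_of_mem_nhds (lt_mem_nhds (max_lt hy (by linarith)))
  obtain ⟨s, hs1, hs2, hs3⟩ := (e1.and (e2.and eventually_mem_nhdsWithin)).exists
  have hs3 : s < 1 := hs3
  have hys : ‖y‖ < s := (le_max_left _ _).trans_lt hs2
  have hδs : 1 - s < δ / 2 := by have := (le_max_right ‖y‖ (1 - δ / 2)).trans_lt hs2; linarith
  have hs0 : 0 < s := (norm_nonneg _).trans_lt hys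
  refine norm_le_of_lineHarm (by omega) (W := fun x => u x - v x) (s := s)
    ((hc.mono (closedBall_subset_closedBall hs3.le)).sub (continuousOn_poissonInt hn hcS hs3))
    (fun x hx => (hu x (ball_subset_ball hs3.le hx)).sub
      (lineHarm_poissonInt hn hcS (ball_subset_ball hs3.le hx))) ?_ y (by simpa using hys.le)
  intro x hx
  have hxn : ‖x‖ = s := by simpa using hx
  set z : Eucl n := s⁻¹ • x with hz
  have hzx : s • z = x := by rw [hz, smul_smul, mul_inv_cancel₀ hs0.ne', one_smul]
  have hz1 : ‖z‖ = 1 := by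
    rw [hz, norm_smul, hxn, norm_inv, Real.norm_eq_abs, abs_of_pos hs0, inv_mul_cancel₀ hs0.ne']
  have hzS : z ∈ uSphere n := by simpa [uSphere] using hz1
  have hx1 : ‖x‖ < 1 := by linarith
  have hdist : dist x z < δ := by
    rw [dist_eq_norm, ← hzx]
    have : s • z - z = (-(1 - s)) • z := by module
    rw [this, norm_smul, hz1, norm_neg, Real.norm_eq_abs, abs_of_nonneg (by linarith)]
    linarith
  have hP : ContinuousOn (fun w => extPoisson n x w) (uSphere n) :=
    (continuousOn_extPoisson hx1).mono uSphere_subset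
  have hPc : ContinuousOn (fun w => (extPoisson n x w : ℂ)) (uSphere n) :=
    Complex.continuous_ofReal.comp_continuousOn hP
  have hP0 : ∀ w ∈ uSphere n, 0 < extPoisson n x w := fun w hw =>
    extPoisson_pos (norm_mul_lt_one (by simpa using uSphere_subset hw) hx1)
  have hone : ∫ w, (extPoisson n x w : ℂ) ∂(sphMeasure n) = 1 := by
    have h := integral_ofReal (𝕜 := ℂ) (μ := sphMeasure n) (f := fun w => extPoisson n x w)
    rw [integral_extPoisson hn hx1] at h
    exact h.trans (by simp)
  have hdiff : u z - v x = ∫ w, (u z - u w) * (extPoisson n x w : ℂ) ∂(sphMeasure n) := by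
    simp_rw [sub_mul]
    rw [integral_sub, integral_const_mul, hone, mul_one]
    · exact (integrable_of_continuousOn hn hPc).const_mul _
    · exact integrable_of_continuousOn hn (hcS.mul hPc)
  have hbd : ‖u z - v x‖ ≤ ε + ε := by
    rw [hdiff]
    have hInt : Integrable (fun w => ε * extPoisson n x w + ε) (sphMeasure n) :=
      ((integrable_of_continuousOn hn hP).const_mul _).add (integrable_const _)
    refine (norm_integral_le_of_norm_le hInt ?_).trans (le_of_eq ?_)
    · filter_upwards [ae_sphMeasure_mem n] with w hw
      rw [norm_mul, Complex.norm_real, Real.norm_eq_abs, abs_of_pos (hP0 w hw)]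
      have hP0w := hP0 w hw
      by_cases hd : ‖z - w‖ < δ
      · have := hδu z (uSphere_subset hzS) w (uSphere_subset hw) (by rwa [dist_eq_norm])
        rw [dist_eq_norm] at this
        nlinarith
      · have h1 := extPoisson_le_of_dist hzS hδ hw hs0.le hδs hs3 (not_lt.1 hd)
        rw [hzx] at h1
        have h2 : ‖u z - u w‖ ≤ 2 * M := by
          have := norm_sub_le (u z) (u w)
          linarith [hM z (uSphere_subset hzS), hM w (uSphere_subset hw)]
        have h3 := mul_le_mul h2 h1 hP0w.le (by positivity)
        have h4 : 0 ≤ ε * extPoisson n x w := by positivity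
        linarith
    · rw [integral_add ((integrable_of_continuousOn hn hP).const_mul _) (integrable_const _),
        integral_const_mul, integral_extPoisson hn hx1]
      simp
  have hux : ‖u x - u z‖ < ε := by
    rw [← dist_eq_norm]
    exact hδu x (by simpa using hx1.le) z (uSphere_subset hzS) hdist
  calc ‖u x - v x‖ = ‖(u x - u z) + (u z - v x)‖ := by congr 1; ring
    _ ≤ ‖u x - u z‖ + ‖u z - v x‖ := norm_add_le _ _
    _ ≤ 3 * ε := by linarith

/-! ### Functions in the harmonic Hardy spaces -/

/-- A sequence bounded in `L^q`, `q > 1`, on a probability space and convergent almost everywhere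
has convergent integrals: it is uniformly integrable, so Vitali's theorem applies. -/
lemma tendsto_integral_of_bdd_Lq {α : Type*} [MeasurableSpace α] {μ : Measure α}
    [IsProbabilityMeasure μ] {q : ℝ≥0∞} (hq : 1 < q) {F : ℕ → α → ℂ} {G : α → ℂ}
    (hF : ∀ k, AEStronglyMeasurable (F k) μ) {K : ℝ} (hK : ∀ k, eLpNorm (F k) q μ ≤ ENNReal.ofReal K)
    (hlim : ∀ᵐ x ∂μ, Tendsto (fun k => F k x) atTop (𝓝 (G x))) :
    Tendsto (fun k => ∫ x, F k x ∂μ) atTop (𝓝 (∫ x, G x ∂μ)) := by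
  have hGm : AEStronglyMeasurable G μ := aestronglyMeasurable_of_tendsto_ae atTop hF hlim
  have hGq : MemLp G q μ := by
    refine ⟨hGm, lt_of_le_of_lt (Lp.eLpNorm_lim_le_liminf_eLpNorm hF G hlim) ?_⟩
    exact lt_of_le_of_lt (liminf_le_of_frequently_le' (Eventually.of_forall hK).frequently)
      ENNReal.ofReal_lt_top
  have hG1 : MemLp G 1 μ := hGq.mono_exponent hq.le
  have hFq : ∀ k, MemLp (F k) q μ := fun k => ⟨hF k, (hK k).trans_lt ENNReal.ofReal_lt_top⟩
  set θ : ℝ := 1 - 1 / q.toReal with hθ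
  have hθ0 : 0 < θ := by
    rw [hθ]
    by_cases h : q = ⊤
    · simp [h]
    · have h1 : 1 < q.toReal := by
        have := (ENNReal.toReal_lt_toReal ENNReal.one_ne_top h).2 hq
        simpa using this
      rw [sub_pos, div_lt_one (by linarith)]
      exact h1
  have hui : UnifIntegrable F 1 μ := by
    intro ε hε
    set K' := max K 1 with hK'
    have hK'0 : 0 < K' := lt_of_lt_of_le one_pos (le_max_right _ _)
    refine ⟨(ε / K') ^ (1 / θ), by positivity, fun k s hs hsμ => ?_⟩
    rw [eLpNorm_indicator_eq_eLpNorm_restrict hs]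
    refine (eLpNorm_le_eLpNorm_mul_rpow_measure_univ hq.le (hF k).restrict).trans ?_
    have e1 : (1 : ℝ) / ENNReal.toReal 1 - 1 / q.toReal = θ := by simp [hθ]
    rw [e1, Measure.restrict_apply_univ]
    calc eLpNorm (F k) q (μ.restrict s) * μ s ^ θ
        ≤ ENNReal.ofReal K' * (ENNReal.ofReal ((ε / K') ^ (1 / θ))) ^ θ := by
          gcongr
          exact ((eLpNorm_restrict_le _ _ _ _).trans (hK k)).trans
            (ENNReal.ofReal_le_ofReal (le_max_left _ _))
      _ = ENNReal.ofReal ε := by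
          rw [ENNReal.ofReal_rpow_of_pos (by positivity), ← Real.rpow_mul (by positivity),
            one_div_mul_cancel hθ0.ne', Real.rpow_one, ← ENNReal.ofReal_mul hK'0.le,
            mul_div_cancel₀ _ hK'0.ne']
  refine tendsto_integral_of_L1' G hGm (Eventually.of_forall fun k => ?_)
    (tendsto_Lp_finite_of_tendsto_ae le_rfl ENNReal.one_ne_top hF hG1 hui hlim)
  exact memLp_one_iff_integrable.1 ((hFq k).mono_exponent hq.le)

lemma smul_mem_uBall {n : ℕ} {r : ℝ} {z : Eucl n} (hr : r ∈ Ico (0 : ℝ) 1) (hz : z ∈ uSphere n) :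
    r • z ∈ uBall n := by
  have hz1 : ‖z‖ = 1 := by simpa [uSphere] using hz
  simp only [uBall, mem_ball_zero_iff, norm_smul, hz1, mul_one, Real.norm_eq_abs, abs_of_nonneg hr.1]
  exact hr.2

lemma hpNormSet_le {n : ℕ} (hn : 2 ≤ n) {P : ℝ} (hP : 0 < P) {f : Eucl n → ℂ} {M : ℝ} (hM0 : 0 ≤ M)
    (hM : ∀ x ∈ uBall n, ‖f x‖ ≤ M) : ∀ t ∈ hpNormSet n P f, t ≤ M := by
  have := isProbabilityMeasure_sphMeasure hn
  rintro _ ⟨r, hr, rfl⟩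
  have h0 : 0 ≤ ∫ z, ‖f (r • z)‖ ^ P ∂(sphMeasure n) := integral_nonneg fun z => by positivity
  have h : ∫ z, ‖f (r • z)‖ ^ P ∂(sphMeasure n) ≤ M ^ P := by
    have := norm_integral_le_of_norm_le_const (μ := sphMeasure n) (C := M ^ P)
      (f := fun z => ‖f (r • z)‖ ^ P) (by
        filter_upwards [ae_sphMeasure_mem n] with z hz
        rw [Real.norm_of_nonneg (by positivity)]
        exact Real.rpow_le_rpow (norm_nonneg _) (hM _ (smul_mem_uBall hr hz)) hP.le)
    simpa using (le_abs_self _).trans this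
  calc _ ≤ (M ^ P) ^ (1 / P) := Real.rpow_le_rpow h0 h (by positivity)
    _ = M := by rw [← Real.rpow_mul hM0, mul_one_div_cancel hP.ne', Real.rpow_one]

lemma toReal_pos_of_one_le {q : ℝ≥0∞} (hq : 1 ≤ q) (h : q ≠ ⊤) : 0 < q.toReal :=
  ENNReal.toReal_pos (by rintro rfl; simp at hq) h

lemma memHp_of_continuousOn {n : ℕ} (hn : 2 ≤ n) {q : ℝ≥0∞} (hq : 1 ≤ q) {f : Eucl n → ℂ}
    (hc : ContinuousOn f (closedBall 0 1)) (hf : HarmOn f (uBall n)) : MemHp n q f := by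
  obtain ⟨M, hM⟩ := (isCompact_closedBall (0 : Eucl n) 1).exists_bound_of_continuousOn hc
  have hM0 : 0 ≤ M := (norm_nonneg _).trans (hM 0 (by simp))
  refine ⟨hf, ?_⟩
  split_ifs with h
  · refine ⟨M, ?_⟩
    rintro _ ⟨x, hx, rfl⟩
    exact hM x (ball_subset_closedBall hx)
  · exact ⟨M, hpNormSet_le hn (toReal_pos_of_one_le hq h) hM0
      fun x hx => hM x (ball_subset_closedBall hx)⟩

lemma hpNormSet_congr {n : ℕ} {P : ℝ} {f g : Eucl n → ℂ} (h : ∀ x ∈ uBall n, ‖f x‖ = ‖g x‖) :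
    hpNormSet n P f = hpNormSet n P g := by
  refine image_congr fun r hr => ?_
  have : ∫ z, ‖f (r • z)‖ ^ P ∂(sphMeasure n) = ∫ z, ‖g (r • z)‖ ^ P ∂(sphMeasure n) := by
    refine integral_congr_ae ?_
    filter_upwards [ae_sphMeasure_mem n] with z hz
    rw [h _ (smul_mem_uBall hr hz)]
  simp only [this]

lemma hInfSet_congr {n : ℕ} {f g : Eucl n → ℂ} (h : ∀ x ∈ uBall n, ‖f x‖ = ‖g x‖) :
    hInfSet n f = hInfSet n g := image_congr fun x hx => h x hx

lemma hpNorm_congr {n : ℕ} {q : ℝ≥0∞} {f g : Eucl n → ℂ} (h : ∀ x ∈ uBall n, ‖f x‖ = ‖g x‖) :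
    hpNorm n q f = hpNorm n q g := by
  rw [hpNorm, hpNorm, hpNormSet_congr h, hInfSet_congr h]

lemma memHp_congr {n : ℕ} {q : ℝ≥0∞} {f g : Eucl n → ℂ} (hf : MemHp n q f)
    (h : ∀ x ∈ uBall n, f x = g x) : MemHp n q g := by
  have h' : ∀ x ∈ uBall n, ‖f x‖ = ‖g x‖ := fun x hx => by rw [h x hx]
  exact ⟨harmOn_congr hf.1 h, by rw [← hpNormSet_congr h', ← hInfSet_congr h']; exact hf.2⟩

lemma hpNorm_smul {n : ℕ} {q : ℝ≥0∞} (hq : 1 ≤ q) (c : ℝ) (hc : 0 < c) (f : Eucl n → ℂ) :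
    hpNorm n q (fun x => (c : ℂ) * f x) = c * hpNorm n q f := by
  have key : ∀ S : Set ℝ, sSup ((fun t => c * t) '' S) = c * sSup S := fun S => by
    have := Real.sSup_smul_of_nonneg hc.le S
    rw [smul_eq_mul] at this
    rw [← this]; rfl
  unfold hpNorm
  split_ifs with h
  · rw [← key, hInfSet, hInfSet, image_image]
    congr 1
    refine image_congr fun x _ => ?_
    rw [norm_mul, Complex.norm_real, Real.norm_eq_abs, abs_of_pos hc]
  · have hP := toReal_pos_of_one_le hq h
    set P := q.toReal
    rw [← key, hpNormSet, hpNormSet, image_image]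
    congr 1
    refine image_congr fun r _ => ?_
    have e : ∀ z, ‖(c : ℂ) * f (r • z)‖ ^ P = c ^ P * ‖f (r • z)‖ ^ P := fun z => by
      rw [norm_mul, Complex.norm_real, Real.norm_eq_abs, abs_of_pos hc,
        Real.mul_rpow hc.le (norm_nonneg _)]
    simp_rw [e]
    rw [integral_const_mul, Real.mul_rpow (by positivity) (integral_nonneg fun z => by positivity),
      ← Real.rpow_mul hc.le, mul_one_div_cancel hP.ne', Real.rpow_one]

lemma hpNorm_comp_isometry {n : ℕ} (hn : 2 ≤ n) (q : ℝ≥0∞) (A : Eucl n ≃ₗᵢ[ℝ] Eucl n)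
    (f : Eucl n → ℂ) : hpNorm n q (fun x => f (A x)) = hpNorm n q f := by
  unfold hpNorm
  congr 2
  · ext t
    simp only [hInfSet, mem_image, uBall, mem_ball_zero_iff]
    constructor
    · rintro ⟨x, hx, rfl⟩
      exact ⟨A x, by simpa using hx, rfl⟩
    · rintro ⟨x, hx, rfl⟩
      exact ⟨A.symm x, by simpa using hx, by simp⟩
  · refine image_congr fun r _ => ?_
    have := integral_comp_isometry hn A (fun z => ‖f (r • z)‖ ^ q.toReal)
    simp only [map_smul]
    rw [this]

lemma radial_mem_ntRegion {n : ℕ} {z : Eucl n} (hz : z ∈ uSphere n) {r : ℝ} (h0 : 0 < r)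
    (h1 : r < 1) : r • z ∈ ntRegion n 2 z := by
  have hz1 : ‖z‖ = 1 := by simpa [uSphere] using hz
  refine ⟨smul_mem_uBall ⟨h0.le, h1⟩ hz, ?_⟩
  have e : r • z - z = (-(1 - r)) • z := by module
  rw [e, norm_smul, norm_smul, hz1, norm_neg, Real.norm_eq_abs, Real.norm_eq_abs,
    abs_of_pos h0, abs_of_pos (by linarith)]
  nlinarith

/-- Radii increasing to `1`. -/
noncomputable def radSeq (k : ℕ) : ℝ := 1 - 1 / ((k : ℝ) + 2)

lemma radSeq_pos (k : ℕ) : 0 < radSeq k := by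
  have : (0 : ℝ) ≤ k := by positivity
  rw [radSeq, sub_pos, div_lt_one (by linarith)]; linarith

lemma radSeq_lt (k : ℕ) : radSeq k < 1 := by
  have : (0 : ℝ) ≤ k := by positivity
  rw [radSeq]; have : 0 < 1 / ((k : ℝ) + 2) := by positivity
  linarith

lemma tendsto_radSeq : Tendsto radSeq atTop (𝓝 1) := by
  have h : Tendsto (fun k : ℕ => 1 / (((k + 1 : ℕ) : ℝ) + 1)) atTop (𝓝 0) :=
    (tendsto_one_div_add_atTop_nhds_zero_nat (𝕜 := ℝ)).comp (tendsto_add_atTop_nat 1)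
  have := h.const_sub 1
  rw [sub_zero] at this
  refine this.congr fun k => ?_
  rw [radSeq]; push_cast; ring_nf

lemma tendsto_radial {n : ℕ} {z : Eucl n} (hz : z ∈ uSphere n) :
    Tendsto (fun k => radSeq k • z) atTop (𝓝[ntRegion n 2 z] z) := by
  refine tendsto_nhdsWithin_iff.2 ⟨?_, Eventually.of_forall fun k =>
    radial_mem_ntRegion hz (radSeq_pos k) (radSeq_lt k)⟩
  simpa using tendsto_radSeq.smul_const z

lemma HasNTLimit.tendsto_radial {n : ℕ} {f : Eucl n → ℂ} {z : Eucl n} {L : ℂ}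
    (h : HasNTLimit n f z L) (hz : z ∈ uSphere n) :
    Tendsto (fun k => f (radSeq k • z)) atTop (𝓝 L) :=
  (h 2 (by norm_num)).comp (_root_.tendsto_radial hz)

lemma HasNTLimit.eq_of_continuousOn {n : ℕ} {f F : Eucl n → ℂ} {z : Eucl n} {L : ℂ}
    (h : HasNTLimit n f z L) (hz : z ∈ uSphere n) (hF : ContinuousOn F (closedBall 0 1))
    (hfF : ∀ x ∈ uBall n, f x = F x) : L = F z := by
  refine tendsto_nhds_unique (h.tendsto_radial hz) ?_
  have hmem : ∀ k, radSeq k • z ∈ uBall n := fun k =>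
    smul_mem_uBall ⟨(radSeq_pos k).le, radSeq_lt k⟩ hz
  have : Tendsto (fun k => F (radSeq k • z)) atTop (𝓝 (F z)) := by
    refine (hF z (uSphere_subset hz)).tendsto.comp (tendsto_nhdsWithin_iff.2 ⟨?_,
      Eventually.of_forall fun k => ball_subset_closedBall (hmem k)⟩)
    simpa using tendsto_radSeq.smul_const z
  exact this.congr fun k => (hfF _ (hmem k)).symm

/-- Functions in `h^q` are bounded in `L^q` on concentric spheres. -/
lemma MemHp.eLpNorm_le {n : ℕ} (hn : 2 ≤ n) {q : ℝ≥0∞} (hq : 1 ≤ q) {h : Eucl n → ℂ}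
    (hh : MemHp n q h) : ∃ K : ℝ, ∀ r ∈ Ico (0 : ℝ) 1,
      eLpNorm (fun z => h (r • z)) q (sphMeasure n) ≤ ENNReal.ofReal K := by
  have := isProbabilityMeasure_sphMeasure hn
  by_cases hqt : q = ⊤
  · obtain ⟨K, hK⟩ : BddAbove (hInfSet n h) := by have := hh.2; rwa [if_pos hqt] at this
    refine ⟨K, fun r hr => ?_⟩
    rw [hqt, eLpNorm_exponent_top]
    refine eLpNormEssSup_le_of_ae_bound ?_
    filter_upwards [ae_sphMeasure_mem n] with z hz
    exact hK ⟨_, smul_mem_uBall hr hz, rfl⟩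
  · obtain ⟨K, hK⟩ : BddAbove (hpNormSet n q.toReal h) := by
      have := hh.2; rwa [if_neg hqt] at this
    refine ⟨K, fun r hr => ?_⟩
    have hP := toReal_pos_of_one_le hq hqt
    have hcont : ContinuousOn (fun z => h (r • z)) (uSphere n) :=
      hh.1.1.continuousOn.comp (by fun_prop) fun z hz => smul_mem_uBall hr hz
    have hmem : MemLp (fun z => h (r • z)) q (sphMeasure n) := by
      obtain ⟨M, hM⟩ := (isCompact_sphere (0 : Eucl n) 1).exists_bound_of_continuousOn hcont
      exact MemLp.of_bound (aesm_of_continuousOn hcont) M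
        ((ae_sphMeasure_mem n).mono fun z hz => hM z hz)
    rw [hmem.eLpNorm_eq_integral_rpow_norm (by rintro rfl; simp at hq) hqt]
    refine ENNReal.ofReal_le_ofReal (hK ⟨r, hr, ?_⟩)
    simp only [one_div]

/-- A function in `h^q`, `q > 1`, is the Poisson integral of its boundary function. -/
lemma MemHp.poisson {n : ℕ} (hn : 2 ≤ n) {q : ℝ≥0∞} (hq : 1 < q) {h g : Eucl n → ℂ}
    (hh : MemHp n q h) (hg : ∀ᵐ z ∂(sphMeasure n), HasNTLimit n h z (g z)) {x : Eucl n}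
    (hx : x ∈ uBall n) : ∫ z, (extPoisson n x z : ℂ) * g z ∂(sphMeasure n) = h x := by
  have := isProbabilityMeasure_sphMeasure hn
  have hx1 : ‖x‖ < 1 := by simpa [uBall] using hx
  obtain ⟨K, hK⟩ := hh.eLpNorm_le hn hq.le
  have hr : ∀ k, radSeq k ∈ Ico (0 : ℝ) 1 := fun k => ⟨(radSeq_pos k).le, radSeq_lt k⟩
  have hP : ContinuousOn (fun w => (extPoisson n x w : ℂ)) (uSphere n) :=
    Complex.continuous_ofReal.comp_continuousOn ((continuousOn_extPoisson hx1).mono uSphere_subset)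
  obtain ⟨M, hM⟩ := (isCompact_sphere (0 : Eucl n) 1).exists_bound_of_continuousOn hP
  have hcb : ∀ k, ContinuousOn (fun z => h (radSeq k • z)) (closedBall 0 1) := fun k => by
    refine hh.1.1.continuousOn.comp (by fun_prop) fun z hz => ?_
    have hz1 : ‖z‖ ≤ 1 := by simpa using hz
    simp only [uBall, mem_ball_zero_iff, norm_smul, Real.norm_eq_abs, abs_of_pos (radSeq_pos k)]
    nlinarith [radSeq_pos k, radSeq_lt k]
  have hc : ∀ k, ContinuousOn (fun z => h (radSeq k • z)) (uSphere n) := fun k =>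
    (hcb k).mono uSphere_subset
  have key : ∀ k, h (radSeq k • x) = ∫ z, (extPoisson n x z : ℂ) * h (radSeq k • z) ∂(sphMeasure n) := by
    intro k
    rw [poisson_formula hn (hcb k) (fun y hy => ?_) hx1]
    · simp_rw [mul_comm]
    · refine LineHarm.comp_smul (radSeq k) (lineHarm_of_harmOn isOpen_ball hh.1 ?_)
      have hy1 : ‖y‖ < 1 := by simpa [uBall] using hy
      simp only [mem_ball_zero_iff, norm_smul, Real.norm_eq_abs, abs_of_pos (radSeq_pos k)]
      nlinarith [radSeq_pos k, radSeq_lt k, norm_nonneg y]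
  have h1 : Tendsto (fun k => ∫ z, (extPoisson n x z : ℂ) * h (radSeq k • z) ∂(sphMeasure n)) atTop
      (𝓝 (∫ z, (extPoisson n x z : ℂ) * g z ∂(sphMeasure n))) := by
    refine tendsto_integral_of_bdd_Lq hq (K := M * K) (fun k => aesm_of_continuousOn (hP.mul (hc k)))
      (fun k => ?_) ?_
    · by_cases hM0 : 0 ≤ M
      · rw [ENNReal.ofReal_mul hM0]
        refine (eLpNorm_le_mul_eLpNorm_of_ae_le_mul (g := fun z => h (radSeq k • z)) (c := M) ?_ q).trans ?_
        · filter_upwards [ae_sphMeasure_mem n] with z hz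
          rw [norm_mul]
          exact mul_le_mul_of_nonneg_right (hM z hz) (norm_nonneg _)
        · gcongr
          exact hK _ (hr k)
      · exfalso
        obtain ⟨z, hz⟩ := (ae_sphMeasure_mem n).exists
        exact hM0 ((norm_nonneg _).trans (hM z hz))
    · filter_upwards [ae_sphMeasure_mem n, hg] with z hz hgz
      exact (hgz.tendsto_radial hz).const_mul _
  have h2 : Tendsto (fun k => h (radSeq k • x)) atTop (𝓝 (h x)) := by
    have hxa : ContinuousAt h x := hh.1.1.continuousOn.continuousAt (isOpen_ball.mem_nhds hx)
    refine hxa.tendsto.comp ?_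
    simpa using tendsto_radSeq.smul_const x
  exact tendsto_nhds_unique (h1.congr fun k => (key k).symm) h2

/-! ### Norms of the extended Poisson kernels -/

lemma le_extPoisson_smul_self {n : ℕ} {r : ℝ} (h0 : 0 ≤ r) (h1 : r ≤ 1) {y : Eucl n}
    (hy : ‖y‖ < 1) : (1 - r * ‖y‖ ^ 2) ^ (-((n : ℝ) - 1)) ≤ extPoisson n (r • y) y := by
  have hs : 0 ≤ ‖y‖ := norm_nonneg y
  have hrs : r * ‖y‖ ^ 2 < 1 := by nlinarith
  have hrs0 : 0 ≤ r * ‖y‖ ^ 2 := by positivity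
  have hpos : 0 < 1 - r * ‖y‖ ^ 2 := by linarith
  have e1 : 1 - 2 * ⟪y, r • y⟫_ℝ + ‖y‖ ^ 2 * ‖r • y‖ ^ 2 = (1 - r * ‖y‖ ^ 2) ^ 2 := by
    rw [inner_smul_right, real_inner_self_eq_norm_sq, norm_smul, Real.norm_eq_abs, abs_of_nonneg h0]
    ring
  have e2 : 1 - ‖y‖ ^ 2 * ‖r • y‖ ^ 2 = (1 - r * ‖y‖ ^ 2) * (1 + r * ‖y‖ ^ 2) := by
    rw [norm_smul, Real.norm_eq_abs, abs_of_nonneg h0]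
    ring
  rw [extPoisson, e1, e2, ← Real.rpow_natCast (1 - r * ‖y‖ ^ 2) 2, ← Real.rpow_mul hpos.le]
  have e3 : ((2 : ℕ) : ℝ) * ((n : ℝ) / 2) = n := by push_cast; ring
  rw [e3, le_div_iff₀ (Real.rpow_pos_of_pos hpos _), ← Real.rpow_add hpos]
  have e4 : -((n : ℝ) - 1) + n = 1 := by ring
  rw [e4, Real.rpow_one]
  nlinarith

/-- A nonnegative function of mean `1` bounded by `M` has `L^Q` norm at most `M ^ (1 - 1 / Q)`. -/
lemma rpow_integral_extPoisson_le {n : ℕ} (hn : 2 ≤ n) {Q : ℝ} (hQ : 1 < Q) {y : Eucl n}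
    (hy : ‖y‖ < 1) {M : ℝ} (hM : ∀ z ∈ uSphere n, extPoisson n y z ≤ M) (hM0 : 0 ≤ M) :
    (∫ z, extPoisson n y z ^ Q ∂(sphMeasure n)) ^ (1 / Q) ≤ M ^ (1 - 1 / Q) := by
  have hP : ContinuousOn (fun w => extPoisson n y w) (uSphere n) :=
    (continuousOn_extPoisson hy).mono uSphere_subset
  have hP0 : ∀ w ∈ uSphere n, 0 < extPoisson n y w := fun w hw =>
    extPoisson_pos (norm_mul_lt_one (by simpa using uSphere_subset hw) hy)
  have h1 : ∫ z, extPoisson n y z ^ Q ∂(sphMeasure n) ≤ M ^ (Q - 1) := by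
    calc _ ≤ ∫ z, M ^ (Q - 1) * extPoisson n y z ∂(sphMeasure n) := by
          refine integral_mono_ae (integrable_of_continuousOn hn
            (hP.rpow_const fun z hz => Or.inl (hP0 z hz).ne'))
            ((integrable_of_continuousOn hn hP).const_mul _) ?_
          filter_upwards [ae_sphMeasure_mem n] with z hz
          have h := hP0 z hz
          have : extPoisson n y z ^ Q = extPoisson n y z ^ (Q - 1) * extPoisson n y z := by
            rw [← Real.rpow_add_one h.ne']; congr 1; ring
          simp only [this]
          exact mul_le_mul_of_nonneg_right
            (Real.rpow_le_rpow h.le (hM z hz) (by linarith)) h.le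
      _ = _ := by rw [integral_const_mul, integral_extPoisson hn hy, mul_one]
  have h0 : 0 ≤ ∫ z, extPoisson n y z ^ Q ∂(sphMeasure n) := by
    refine integral_nonneg_of_ae ?_
    filter_upwards [ae_sphMeasure_mem n] with z hz
    exact Real.rpow_nonneg (hP0 z hz).le _
  calc _ ≤ (M ^ (Q - 1)) ^ (1 / Q) := Real.rpow_le_rpow h0 h1 (by positivity)
    _ = M ^ (1 - 1 / Q) := by
      rw [← Real.rpow_mul hM0]; congr 1
      have : Q ≠ 0 := by linarith
      field_simp

lemma memHp_extPoisson {n : ℕ} (hn : 2 ≤ n) {q : ℝ≥0∞} (hq : 1 ≤ q) {y : Eucl n} (hy : ‖y‖ < 1) :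
    MemHp n q (fun x => (extPoisson n y x : ℂ)) :=
  memHp_of_continuousOn hn hq
    (Complex.continuous_ofReal.comp_continuousOn (continuousOn_extPoisson hy)) (harmOn_extPoisson hy)

/-- The size of the Poisson kernel on the sphere. -/
lemma extPoisson_le' {n : ℕ} (hn : 2 ≤ n) {x y : Eucl n} (hx : ‖x‖ ≤ 1) (hy : ‖y‖ < 1) :
    extPoisson n y x ≤ 2 * (1 - ‖y‖) ^ (-((n : ℝ) - 1)) :=
  (extPoisson_le hx hy).resolve_right (by omega)

lemma norm_extPoisson {n : ℕ} {x y : Eucl n} (hx : ‖x‖ ≤ 1) (hy : ‖y‖ < 1) :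
    ‖(extPoisson n y x : ℂ)‖ = extPoisson n y x := by
  rw [Complex.norm_real, Real.norm_of_nonneg (extPoisson_pos (norm_mul_lt_one hx hy)).le]

lemma rpow_norm_extPoisson_le {n : ℕ} (hn : 2 ≤ n) {Q : ℝ} (hQ : 1 < Q) {y : Eucl n}
    (hy : ‖y‖ < 1) : ∀ t ∈ hpNormSet n Q (fun x => (extPoisson n y x : ℂ)),
      t ≤ (2 * (1 - ‖y‖) ^ (-((n : ℝ) - 1))) ^ (1 - 1 / Q) := by
  rintro _ ⟨r, hr, rfl⟩
  have hry : ‖r • y‖ < 1 := by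
    rw [norm_smul, Real.norm_eq_abs, abs_of_nonneg hr.1]
    nlinarith [norm_nonneg y, hr.1, hr.2]
  have hM0 : 0 ≤ 2 * (1 - ‖y‖) ^ (-((n : ℝ) - 1)) :=
    mul_nonneg two_pos.le (Real.rpow_nonneg (by linarith) _)
  refine le_trans (le_of_eq ?_) (rpow_integral_extPoisson_le hn hQ hry (fun z hz => ?_) hM0)
  · simp only
    congr 1
    refine integral_congr_ae ?_
    filter_upwards [ae_sphMeasure_mem n] with z hz
    have := ball_subset_closedBall (smul_mem_uBall hr hz)
    rw [norm_extPoisson (by simpa using this) hy,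
      extPoisson_smul]
  · rw [← extPoisson_smul]
    have := ball_subset_closedBall (smul_mem_uBall hr hz)
    exact extPoisson_le' hn (by simpa using this) hy

lemma norm_sq_le_aux {s r : ℝ} (hs : 0 ≤ s) (hs1 : s < 1) (hr : s ≤ r) (hr1 : r ≤ 1) :
    0 < 1 - r * s ^ 2 ∧ 1 - r * s ^ 2 ≤ 3 * (1 - s) := by
  have h2 : s * s ^ 2 ≤ r * s ^ 2 := mul_le_mul_of_nonneg_right hr (by positivity)
  have h3 : r * s ^ 2 ≤ s ^ 2 := by nlinarith [sq_nonneg s]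
  constructor
  · nlinarith
  · nlinarith [mul_nonneg (mul_nonneg hs hs) (sub_nonneg.2 hs1.le), mul_nonneg hs (sub_nonneg.2 hs1.le)]

/-- The growth of the `h^q` norm of the Poisson kernel: it is comparable to
`(1 - ‖y‖) ^ (-(n - 1) (1 - 1 / q))`. -/
lemma hpNorm_extPoisson_bounds {n : ℕ} (hn : 2 ≤ n) {q : ℝ≥0∞} (hq : 1 < q) :
    ∃ c C : ℝ, 0 < c ∧ 0 < C ∧ ∀ y : Eucl n, ‖y‖ < 1 →
      c * (1 - ‖y‖) ^ (-(((n : ℝ) - 1) * (1 - 1 / q.toReal))) ≤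
          hpNorm n q (fun x => (extPoisson n y x : ℂ)) ∧
      hpNorm n q (fun x => (extPoisson n y x : ℂ)) ≤
        C * (1 - ‖y‖) ^ (-(((n : ℝ) - 1) * (1 - 1 / q.toReal))) := by
  set d : ℝ := (n : ℝ) - 1 with hd
  have hn' : (2 : ℝ) ≤ n := by exact_mod_cast hn
  have hd0 : 0 < d := by rw [hd]; linarith
  refine ⟨3 ^ (-d) / 2, 2, by positivity, two_pos, fun y hy => ?_⟩
  have hs0 : 0 ≤ ‖y‖ := norm_nonneg y
  have hs : 0 < 1 - ‖y‖ := by linarith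
  have hMp : 0 < 2 * (1 - ‖y‖) ^ (-d) := mul_pos two_pos (Real.rpow_pos_of_pos hs _)
  have hmem := memHp_extPoisson hn hq.le hy
  have hlow : ∀ r, ‖y‖ ≤ r → r ≤ 1 → 3 ^ (-d) * (1 - ‖y‖) ^ (-d) ≤ extPoisson n (r • y) y := by
    intro r h1 h2
    refine le_trans ?_ (le_extPoisson_smul_self (hs0.trans h1) h2 hy)
    rw [← Real.mul_rpow (by norm_num) hs.le]
    obtain ⟨h3, h4⟩ := norm_sq_le_aux hs0 hy h1 h2
    exact Real.rpow_le_rpow_of_nonpos h3 h4 (by linarith)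
  by_cases hqt : q = ⊤
  · have hb : BddAbove (hInfSet n fun x => (extPoisson n y x : ℂ)) := by
      have := hmem.2; rwa [if_pos hqt] at this
    rw [hpNorm, if_pos hqt]
    have e : -(d * (1 - 1 / q.toReal)) = -d := by simp [hqt]
    rw [e]
    constructor
    · refine le_trans ?_ (le_csSup hb ⟨y, by simpa [uBall] using hy, rfl⟩)
      simp only
      rw [norm_extPoisson hy.le hy]
      have h := hlow 1 hy.le le_rfl
      rw [one_smul] at h
      refine le_trans ?_ h
      have : (0 : ℝ) < 3 ^ (-d) * (1 - ‖y‖) ^ (-d) :=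
        mul_pos (by positivity) (Real.rpow_pos_of_pos hs _)
      rw [div_mul_eq_mul_div]
      linarith
    · refine csSup_le ⟨_, ⟨y, by simpa [uBall] using hy, rfl⟩⟩ ?_
      rintro _ ⟨x, hx, rfl⟩
      have hx1 : ‖x‖ ≤ 1 := by simpa using ball_subset_closedBall hx
      simp only
      rw [norm_extPoisson hx1 hy]
      exact extPoisson_le' hn hx1 hy
  · have hb : BddAbove (hpNormSet n q.toReal fun x => (extPoisson n y x : ℂ)) := by
      have := hmem.2; rwa [if_neg hqt] at this
    rw [hpNorm, if_neg hqt]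
    set Q := q.toReal with hQdef
    have hQ : 1 < Q := by
      have := (ENNReal.toReal_lt_toReal ENNReal.one_ne_top hqt).2 hq
      simpa using this
    have hQ0 : 0 < Q := by linarith
    have hQ1 : 1 / Q < 1 := by rw [div_lt_one hQ0]; exact hQ
    have hQ2 : 0 < 1 / Q := by positivity
    constructor
    · refine le_trans ?_ (le_csSup hb ⟨‖y‖, ⟨hs0, hy⟩, rfl⟩)
      simp only
      set r := ‖y‖ with hr
      have hry : ‖r • y‖ < 1 := by
        rw [norm_smul, Real.norm_eq_abs, abs_of_nonneg hs0]; nlinarith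
      have ec : ∫ z, ‖(extPoisson n y (r • z) : ℂ)‖ ^ Q ∂(sphMeasure n) =
          ∫ z, extPoisson n (r • y) z ^ Q ∂(sphMeasure n) := by
        refine integral_congr_ae ?_
        filter_upwards [ae_sphMeasure_mem n] with z hz
        have := ball_subset_closedBall (smul_mem_uBall ⟨hs0, hy⟩ hz)
        rw [norm_extPoisson (by simpa using this) hy, extPoisson_smul]
      rw [ec]
      -- Hölder's inequality applied to `P_{ry}(y) = ∫ P_{ry} P_y`
      have hconj := Real.HolderConjugate.conjExponent hQ
      set R := Q.conjExponent with hR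
      have hR1 : 1 < R := hconj.symm.lt
      have hRe : 1 - 1 / R = 1 / Q := by
        have := hconj.inv_add_inv_eq_one
        simp only [one_div]; linarith
      have hcont : ∀ w : Eucl n, ‖w‖ < 1 → ContinuousOn (fun z => extPoisson n w z) (uSphere n) :=
        fun w hw => (continuousOn_extPoisson hw).mono uSphere_subset
      have hmemL : ∀ w : Eucl n, ‖w‖ < 1 → ∀ a, MemLp (fun z => extPoisson n w z) a (sphMeasure n) := by
        intro w hw a
        have := isProbabilityMeasure_sphMeasure hn
        obtain ⟨M, hM⟩ := (isCompact_sphere (0 : Eucl n) 1).exists_bound_of_continuousOn (hcont w hw)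
        exact MemLp.of_bound (aesm_of_continuousOn (hcont w hw)) M
          ((ae_sphMeasure_mem n).mono fun z hz => hM z hz)
      have hnn : ∀ w : Eucl n, ‖w‖ < 1 → 0 ≤ᵐ[sphMeasure n] fun z => extPoisson n w z := by
        intro w hw
        filter_upwards [ae_sphMeasure_mem n] with z hz
        exact (extPoisson_pos (norm_mul_lt_one (by simpa using uSphere_subset hz) hw)).le
      have hH := integral_mul_le_Lp_mul_Lq_of_nonneg hconj (hnn _ hry) (hnn _ hy)
        (hmemL _ hry _) (hmemL _ hy _)
      have hform : extPoisson n (r • y) y =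
          ∫ z, extPoisson n (r • y) z * extPoisson n y z ∂(sphMeasure n) := by
        have h := poisson_formula hn (u := fun x => (extPoisson n (r • y) x : ℂ))
          (Complex.continuous_ofReal.comp_continuousOn (continuousOn_extPoisson hry))
          (fun x hx => lineHarm_of_harmOn isOpen_ball (harmOn_extPoisson hry) hx) hy
        have h2 := integral_ofReal (𝕜 := ℂ) (μ := sphMeasure n)
          (f := fun z => extPoisson n (r • y) z * extPoisson n y z)
        have h3 : (extPoisson n (r • y) y : ℂ) =
            ((∫ z, extPoisson n (r • y) z * extPoisson n y z ∂(sphMeasure n) : ℝ) : ℂ) := by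
          refine h.trans (Eq.trans ?_ h2)
          simp
        exact_mod_cast h3
      rw [← hform] at hH
      have hR2 := rpow_integral_extPoisson_le hn hR1 hy
        (fun z hz => extPoisson_le' hn (by simpa using uSphere_subset hz) hy) hMp.le
      rw [hRe] at hR2
      set I := (∫ z, extPoisson n (r • y) z ^ Q ∂(sphMeasure n)) ^ (1 / Q) with hI
      have hI0 : 0 ≤ I := by
        refine Real.rpow_nonneg (integral_nonneg_of_ae ?_) _
        filter_upwards [hnn _ hry] with z hz using Real.rpow_nonneg hz _
      have h5 : 3 ^ (-d) * (1 - r) ^ (-d) ≤ I * (2 * (1 - r) ^ (-d)) ^ (1 / Q) :=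
        (hlow r le_rfl hy.le).trans (hH.trans (mul_le_mul_of_nonneg_left hR2 hI0))
      have h6 : (2 * (1 - r) ^ (-d)) ^ (1 / Q) ≤ 2 * (1 - r) ^ (-d * (1 / Q)) := by
        rw [Real.mul_rpow two_pos.le (Real.rpow_nonneg hs.le _), ← Real.rpow_mul hs.le]
        refine mul_le_mul_of_nonneg_right ?_ (Real.rpow_nonneg hs.le _)
        calc (2 : ℝ) ^ (1 / Q) ≤ 2 ^ (1 : ℝ) :=
              Real.rpow_le_rpow_of_exponent_le (by norm_num) hQ1.le
          _ = 2 := Real.rpow_one 2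
      have h7 : 3 ^ (-d) * (1 - r) ^ (-d) ≤ I * (2 * (1 - r) ^ (-d * (1 / Q))) :=
        h5.trans (mul_le_mul_of_nonneg_left h6 hI0)
      have h8 : (1 - r) ^ (-(d * (1 - 1 / Q))) = (1 - r) ^ (-d) / (1 - r) ^ (-d * (1 / Q)) := by
        rw [← Real.rpow_sub hs]; congr 1; ring
      have h9 : 0 < (1 - r) ^ (-d * (1 / Q)) := Real.rpow_pos_of_pos hs _
      rw [h8, div_mul_div_comm, div_le_iff₀ (by positivity)]
      linarith
    · refine csSup_le ⟨_, ⟨0, ⟨le_rfl, one_pos⟩, rfl⟩⟩ fun t ht => ?_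
      refine (rpow_norm_extPoisson_le hn hQ hy t ht).trans ?_
      rw [Real.mul_rpow two_pos.le (Real.rpow_nonneg hs.le _), ← Real.rpow_mul hs.le]
      have e : -((n : ℝ) - 1) * (1 - 1 / Q) = -(d * (1 - 1 / Q)) := by rw [hd]; ring
      rw [e]
      refine mul_le_mul_of_nonneg_right ?_ (Real.rpow_nonneg hs.le _)
      calc (2 : ℝ) ^ (1 - 1 / Q) ≤ 2 ^ (1 : ℝ) :=
            Real.rpow_le_rpow_of_exponent_le (by norm_num) (by linarith)
        _ = 2 := Real.rpow_one 2

lemma hpNorm_extPoisson_congr {n : ℕ} (hn : 2 ≤ n) (q : ℝ≥0∞) {x y : Eucl n} (h : ‖x‖ = ‖y‖) :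
    hpNorm n q (fun z => (extPoisson n x z : ℂ)) = hpNorm n q (fun z => (extPoisson n y z : ℂ)) := by
  obtain ⟨A, rfl⟩ := exists_isometry_eq h
  rw [← hpNorm_comp_isometry hn q A (fun z => (extPoisson n (A x) z : ℂ))]
  simp only [extPoisson_isometry]

/-! ### Normal form of Möbius transformations -/

/-- The similarity `x ↦ b + c A x` of `ℝⁿ`, extended to `ℝ̂ⁿ` by `∞ ↦ ∞`. -/
noncomputable def simHat {n : ℕ} (b : Eucl n) (c : ℝ) (A : Eucl n ≃ₗᵢ[ℝ] Eucl n) : EuclHat n → EuclHat n :=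
  OnePoint.map fun x => b + c • A x

@[simp] lemma simHat_coe {n : ℕ} (b : Eucl n) (c : ℝ) (A : Eucl n ≃ₗᵢ[ℝ] Eucl n) (x : Eucl n) :
    simHat b c A (x : EuclHat n) = ((b + c • A x : Eucl n) : EuclHat n) := rfl

@[simp] lemma simHat_infty {n : ℕ} (b : Eucl n) (c : ℝ) (A : Eucl n ≃ₗᵢ[ℝ] Eucl n) :
    simHat b c A OnePoint.infty = OnePoint.infty := rfl

@[simp] lemma sphereRefl_infty {n : ℕ} (a : Eucl n) (r : ℝ) :
    sphereRefl n a r OnePoint.infty = (a : EuclHat n) := rfl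

@[simp] lemma sphereRefl_self {n : ℕ} (a : Eucl n) (r : ℝ) :
    sphereRefl n a r (a : EuclHat n) = OnePoint.infty := if_pos rfl

lemma sphereRefl_coe {n : ℕ} {a x : Eucl n} (r : ℝ) (h : x ≠ a) :
    sphereRefl n a r (x : EuclHat n) =
      ((a + (r ^ 2 / ‖x - a‖ ^ 2) • (x - a) : Eucl n) : EuclHat n) := if_neg h

/-- The normal form of a Möbius transformation: a similarity, or a similarity following the
reflection in a unit sphere. -/
def IsNF {n : ℕ} (g : EuclHat n → EuclHat n) : Prop :=
  ∃ (b : Eucl n) (c : ℝ) (A : Eucl n ≃ₗᵢ[ℝ] Eucl n), 0 < c ∧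
    (g = simHat b c A ∨ ∃ a, g = simHat b c A ∘ sphereRefl n a 1)

lemma simHat_comp {n : ℕ} (b b' : Eucl n) (c c' : ℝ) (A A' : Eucl n ≃ₗᵢ[ℝ] Eucl n) :
    simHat b c A ∘ simHat b' c' A' = simHat (b + c • A b') (c * c') (A'.trans A) := by
  funext x
  induction x using OnePoint.rec with
  | infty => simp
  | coe x => simp [smul_add, mul_smul, add_assoc]

lemma IsNF.sim_comp {n : ℕ} {g : EuclHat n → EuclHat n} (hg : IsNF g) (b : Eucl n) {c : ℝ}
    (hc : 0 < c) (A : Eucl n ≃ₗᵢ[ℝ] Eucl n) : IsNF (simHat b c A ∘ g) := by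
  obtain ⟨b', c', A', hc', rfl | ⟨a, rfl⟩⟩ := hg
  · exact ⟨_, _, _, mul_pos hc hc', Or.inl (simHat_comp ..)⟩
  · exact ⟨_, _, _, mul_pos hc hc', Or.inr ⟨a, by rw [← Function.comp_assoc, simHat_comp]⟩⟩

/-- Moving an inversion past a similarity. -/
lemma sphereRefl_comp_sim {n : ℕ} (d b : Eucl n) {c : ℝ} (hc : 0 < c) (A : Eucl n ≃ₗᵢ[ℝ] Eucl n) :
    ∃ b' a', sphereRefl n d 1 ∘ simHat b c A = simHat b' c⁻¹ A ∘ sphereRefl n a' 1 := by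
  set a' := A.symm (c⁻¹ • (d - b)) with ha'
  have h0 : ∀ x, b + c • A x - d = c • A (x - a') := fun x => by
    rw [map_sub, ha', A.apply_symm_apply, smul_sub, smul_smul, mul_inv_cancel₀ hc.ne', one_smul]
    abel
  refine ⟨d - c⁻¹ • A a', a', ?_⟩
  funext x
  induction x using OnePoint.rec with
  | infty => simp
  | coe x =>
    by_cases hx : x = a'
    · have : b + c • A x = d := by rw [← sub_eq_zero, h0, hx]; simp
      simp only [Function.comp_apply, simHat_coe, this, sphereRefl_self]
      rw [hx]; simp
    · have hne : b + c • A x ≠ d := by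
        rw [← sub_ne_zero, h0]
        exact smul_ne_zero hc.ne' (by simpa [sub_eq_zero] using hx)
      have hN : ‖x - a'‖ ≠ 0 := by simpa [sub_eq_zero] using hx
      rw [Function.comp_apply, simHat_coe, sphereRefl_coe _ hne, Function.comp_apply,
        sphereRefl_coe _ hx, simHat_coe, h0, norm_smul, LinearIsometryEquiv.norm_map,
        Real.norm_eq_abs, abs_of_pos hc]
      congr 1
      simp only [map_add, map_smul, map_sub]
      match_scalars <;> field_simp <;> ring

/-- The composition of two inversions with distinct centres. -/
lemma sphereRefl_comp_sphereRefl {n : ℕ} {d a : Eucl n} (h : a ≠ d) :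
    ∃ (b' : Eucl n) (c : ℝ) (A : Eucl n ≃ₗᵢ[ℝ] Eucl n) (a' : Eucl n), 0 < c ∧
      sphereRefl n d 1 ∘ sphereRefl n a 1 = simHat b' c A ∘ sphereRefl n a' 1 := by
  obtain ⟨β, hβ⟩ : ∃ β, β = a - d := ⟨_, rfl⟩
  have hβ0 : β ≠ 0 := hβ ▸ sub_ne_zero.2 h
  have hNe : ‖β‖ ≠ 0 := by simpa using hβ0
  set R : Eucl n ≃ₗᵢ[ℝ] Eucl n := (ℝ ∙ β)ᗮ.reflection with hR
  have hRv : ∀ v, R v = v - (2 * (⟪v, β⟫_ℝ / ‖β‖ ^ 2)) • β := fun v => by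
    rw [hR, Submodule.reflection_orthogonal_apply, Submodule.reflection_singleton_apply,
      real_inner_comm]
    simp only [RCLike.ofReal_real_eq_id, id, two_nsmul]
    module
  set a' := a - (‖β‖ ^ 2)⁻¹ • β with ha'
  have hRa : R β = -β := by
    rw [hR]; exact Submodule.reflection_orthogonalComplement_singleton_eq_neg β
  refine ⟨d + (‖β‖ ^ 2)⁻¹ • β - (‖β‖ ^ 2)⁻¹ • R a', (‖β‖ ^ 2)⁻¹, R, a', by positivity, ?_⟩
  funext x
  induction x using OnePoint.rec with
  | infty =>
    simp only [Function.comp_apply, sphereRefl_infty, simHat_coe]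
    rw [sphereRefl_coe _ h]
    congr 1
    rw [← hβ]
    simp
  | coe x =>
    by_cases hxa : x = a
    · subst hxa
      have hne : x ≠ a' := by
        rw [ha', ← sub_ne_zero, sub_sub_cancel]
        exact smul_ne_zero (by positivity) hβ0
      have hxa' : x - a' = (‖β‖ ^ 2)⁻¹ • β := by rw [ha', sub_sub_cancel]
      rw [Function.comp_apply, sphereRefl_self, sphereRefl_infty, Function.comp_apply,
        sphereRefl_coe _ hne, simHat_coe, hxa', norm_smul, norm_inv, norm_pow, norm_norm]
      congr 1
      simp only [map_add, map_smul, hRa]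
      match_scalars <;> field_simp <;> ring
    by_cases hxa' : x = a'
    · rw [Function.comp_apply, Function.comp_apply, sphereRefl_coe _ hxa]
      have e : a + ((1 : ℝ) ^ 2 / ‖x - a‖ ^ 2) • (x - a) = d := by
        have : x - a = -((‖β‖ ^ 2)⁻¹ • β) := by rw [hxa', ha']; abel
        rw [this, norm_neg, norm_smul, norm_inv, norm_pow, norm_norm]
        have hd : d = a - β := by rw [hβ]; abel
        rw [hd]
        match_scalars
        · ring
        · field_simp
      rw [e, sphereRefl_self, hxa', sphereRefl_self, simHat_infty]
    obtain ⟨v, hv⟩ : ∃ v, v = x - a' := ⟨_, rfl⟩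
    have hv0 : v ≠ 0 := hv ▸ sub_ne_zero.2 hxa'
    have hV : ‖v‖ ≠ 0 := by simpa using hv0
    have hu : x - a = v - (‖β‖ ^ 2)⁻¹ • β := by rw [hv, ha']; abel
    have hU : ‖x - a‖ ≠ 0 := by simpa [sub_eq_zero] using hxa
    have hw : a + ((1 : ℝ) ^ 2 / ‖x - a‖ ^ 2) • (x - a) - d =
        β + (‖x - a‖ ^ 2)⁻¹ • (v - (‖β‖ ^ 2)⁻¹ • β) := by
      have hd : d = a - β := by rw [hβ]; abel
      rw [hd, hu]; simp only [one_pow, one_div]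
      abel
    set p := ⟪v, β⟫_ℝ with hp
    have hUeq : ‖x - a‖ ^ 2 = ‖v‖ ^ 2 - 2 * p / ‖β‖ ^ 2 + (‖β‖ ^ 2)⁻¹ := by
      rw [hu, norm_sub_sq_real, inner_smul_right, norm_smul, norm_inv, norm_pow, norm_norm, ← hp]
      field_simp
    have hW : ‖a + ((1 : ℝ) ^ 2 / ‖x - a‖ ^ 2) • (x - a) - d‖ ^ 2 =
        ‖β‖ ^ 2 * ‖v‖ ^ 2 / ‖x - a‖ ^ 2 := by
      have e1 : ⟪β, v⟫_ℝ = p := real_inner_comm _ _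
      rw [hw, norm_add_sq_real, norm_smul, norm_inv, norm_pow, norm_norm, ← hu, mul_pow, inner_smul_right,
        hu, inner_sub_right, inner_smul_right, real_inner_self_eq_norm_sq, e1, ← hu]
      field_simp
      rw [hUeq]
      field_simp
      ring
    have hWne : a + ((1 : ℝ) ^ 2 / ‖x - a‖ ^ 2) • (x - a) ≠ d := by
      rw [← sub_ne_zero, ← norm_ne_zero_iff, ← pow_ne_zero_iff (two_ne_zero), hW]
      positivity
    rw [Function.comp_apply, sphereRefl_coe _ hxa, sphereRefl_coe _ hWne, Function.comp_apply,
      sphereRefl_coe _ hxa', simHat_coe, hW, hw, ← hv]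
    congr 1
    simp only [map_add, map_smul, hRv v]
    rw [← hp]
    have hk : (‖x - a‖ ^ 2) / (‖β‖ ^ 2 * ‖v‖ ^ 2) - (‖β‖ ^ 2 * (‖β‖ ^ 2 * ‖v‖ ^ 2))⁻¹ =
        (‖β‖ ^ 2)⁻¹ - 2 * p / (‖β‖ ^ 2 * ‖β‖ ^ 2 * ‖v‖ ^ 2) := by
      rw [hUeq]; field_simp; ring
    obtain ⟨U, hUdef⟩ : ∃ U, U = ‖x - a‖ := ⟨_, rfl⟩
    rw [← hUdef] at hk hU ⊢
    match_scalars
    · ring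
    · refine Eq.trans ?_ (hk.trans ?_)
      · field_simp; try ring
      · field_simp; try ring
    · field_simp
    · ring

lemma IsReflection.comp_NF {n : ℕ} {f g : EuclHat n → EuclHat n} (hf : IsReflection n f)
    (hg : IsNF g) : IsNF (f ∘ g) := by
  rcases hf with ⟨d, r, hr, rfl⟩ | ⟨d, t, hd, rfl⟩
  · have hsplit : sphereRefl n d r =
        simHat ((1 - r ^ 2) • d) (r ^ 2) (LinearIsometryEquiv.refl ℝ (Eucl n)) ∘ sphereRefl n d 1 := by
      funext x
      induction x using OnePoint.rec with
      | infty => simp [← add_smul]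
      | coe x =>
        by_cases hx : x = d
        · subst hx; simp
        · rw [Function.comp_apply, sphereRefl_coe _ hx, sphereRefl_coe _ hx, simHat_coe]
          congr 1
          simp only [LinearIsometryEquiv.coe_refl, id]
          match_scalars <;> ring
    rw [hsplit, Function.comp_assoc]
    refine IsNF.sim_comp ?_ _ (by positivity) _
    obtain ⟨b, c, A, hc, rfl | ⟨a, rfl⟩⟩ := hg
    · obtain ⟨b', a', h⟩ := sphereRefl_comp_sim d b hc A
      exact ⟨_, _, _, inv_pos.2 hc, Or.inr ⟨_, h⟩⟩
    · obtain ⟨b', a', h⟩ := sphereRefl_comp_sim d b hc A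
      rw [← Function.comp_assoc, h, Function.comp_assoc]
      refine IsNF.sim_comp ?_ _ (inv_pos.2 hc) _
      by_cases haa : a = a'
      · subst haa
        refine ⟨0, 1, LinearIsometryEquiv.refl ℝ (Eucl n), one_pos, Or.inl ?_⟩
        funext x
        induction x using OnePoint.rec with
        | infty => simp
        | coe x =>
          by_cases hx : x = a
          · subst hx; simp
          · have hN : ‖x - a‖ ≠ 0 := by simpa [sub_eq_zero] using hx
            have hne : a + ((1 : ℝ) ^ 2 / ‖x - a‖ ^ 2) • (x - a) ≠ a := by
              rw [← sub_ne_zero, add_sub_cancel_left]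
              exact smul_ne_zero (by positivity) (sub_ne_zero.2 hx)
            rw [Function.comp_apply, sphereRefl_coe _ hx, sphereRefl_coe _ hne, simHat_coe,
              add_sub_cancel_left, norm_smul, norm_div, norm_pow, norm_pow, norm_norm]
            congr 1
            simp only [LinearIsometryEquiv.coe_refl, id]
            match_scalars <;> field_simp <;> simp
      · obtain ⟨b'', c', A', a'', hc', h'⟩ := sphereRefl_comp_sphereRefl haa
        exact ⟨_, _, _, hc', Or.inr ⟨_, h'⟩⟩
  · have : hyperRefl n d t = simHat ((2 * t) • d) 1 (ℝ ∙ d)ᗮ.reflection := by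
      funext x
      induction x using OnePoint.rec with
      | infty => rfl
      | coe x =>
        rw [simHat_coe, Submodule.reflection_orthogonal_apply, Submodule.reflection_singleton_apply]
        change ((x - (2 * (⟪x, d⟫_ℝ - t)) • d : Eucl n) : EuclHat n) = _
        congr 1
        rw [real_inner_comm]
        simp only [RCLike.ofReal_real_eq_id, id, two_nsmul, hd]
        module
    rw [this]
    exact hg.sim_comp _ one_pos _

lemma IsMobiusHat.isNF {n : ℕ} {g : EuclHat n → EuclHat n} (hg : IsMobiusHat n g) : IsNF g := by
  obtain ⟨L, -, hL, rfl⟩ := hg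
  induction L with
  | nil =>
    refine ⟨0, 1, LinearIsometryEquiv.refl ℝ (Eucl n), one_pos, Or.inl ?_⟩
    funext x
    induction x using OnePoint.rec with
    | infty => rfl
    | coe x => simp
  | cons f L ih =>
    exact (hL f (by simp)).comp_NF (ih fun f' hf' => hL f' (by simp [hf']))

/-! ### Möbius transformations of the ball -/

/-- The reflection of `ℝⁿ` in the sphere with centre `a` and squared radius `‖a‖² - 1`, which is
orthogonal to the unit sphere when `1 < ‖a‖`. -/
noncomputable def ballRefl {n : ℕ} (a x : Eucl n) : Eucl n := a + ((‖a‖ ^ 2 - 1) / ‖x - a‖ ^ 2) • (x - a)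

lemma ballRefl_sub {n : ℕ} (a x : Eucl n) :
    ballRefl a x - a = ((‖a‖ ^ 2 - 1) / ‖x - a‖ ^ 2) • (x - a) := by
  rw [ballRefl, add_sub_cancel_left]

lemma one_sub_norm_ballRefl {n : ℕ} {a x : Eucl n} (h : x ≠ a) :
    1 - ‖ballRefl a x‖ ^ 2 = (‖a‖ ^ 2 - 1) / ‖x - a‖ ^ 2 * (1 - ‖x‖ ^ 2) := by
  have hN : ‖x - a‖ ≠ 0 := by simpa [sub_eq_zero] using h
  have e : ‖x - a‖ ^ 2 = ‖x‖ ^ 2 - 2 * ⟪x, a⟫_ℝ + ‖a‖ ^ 2 := norm_sub_sq_real x a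
  have e1 : ⟪a, x - a⟫_ℝ = ⟪x, a⟫_ℝ - ‖a‖ ^ 2 := by
    rw [inner_sub_right, real_inner_self_eq_norm_sq, real_inner_comm]
  rw [ballRefl, norm_add_sq_real, inner_smul_right, norm_smul, mul_pow, e1, Real.norm_eq_abs, sq_abs]
  field_simp
  have e2 : ⟪x, a⟫_ℝ = (‖x‖ ^ 2 + ‖a‖ ^ 2 - ‖x - a‖ ^ 2) / 2 := by rw [e]; ring
  rw [e2]
  ring

lemma ballRefl_ballRefl {n : ℕ} {a x : Eucl n} (ha : 1 < ‖a‖) (h : x ≠ a) :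
    ballRefl a (ballRefl a x) = x := by
  have hN : ‖x - a‖ ≠ 0 := by simpa [sub_eq_zero] using h
  have hR : ‖a‖ ^ 2 - 1 ≠ 0 := by nlinarith
  have e : ballRefl a (ballRefl a x) - a = x - a := by
    rw [ballRefl_sub, ballRefl_sub, norm_smul, mul_pow, Real.norm_eq_abs, sq_abs, smul_smul]
    have : (‖a‖ ^ 2 - 1) / (((‖a‖ ^ 2 - 1) / ‖x - a‖ ^ 2) ^ 2 * ‖x - a‖ ^ 2) *
        ((‖a‖ ^ 2 - 1) / ‖x - a‖ ^ 2) = 1 := by field_simp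
    rw [this, one_smul]
  exact sub_left_injective e

lemma ne_of_mem_ball {n : ℕ} {a x : Eucl n} (ha : 1 < ‖a‖) (hx : ‖x‖ ≤ 1) : x ≠ a := by
  rintro rfl; linarith

lemma norm_ballRefl_lt {n : ℕ} {a x : Eucl n} (ha : 1 < ‖a‖) (hx : ‖x‖ < 1) :
    ‖ballRefl a x‖ < 1 := by
  have h := one_sub_norm_ballRefl (ne_of_mem_ball ha hx.le)
  have hN : 0 < ‖x - a‖ := by
    rw [norm_pos_iff, sub_ne_zero]; exact ne_of_mem_ball ha hx.le
  have hR : 0 < ‖a‖ ^ 2 - 1 := by nlinarith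
  have h2 : 0 < 1 - ‖x‖ ^ 2 := by nlinarith [norm_nonneg x]
  have : 0 < 1 - ‖ballRefl a x‖ ^ 2 := by rw [h]; positivity
  nlinarith [norm_nonneg (ballRefl a x)]

/-- A similarity mapping the unit ball onto itself is orthogonal. -/
lemma similarity_ball {n : ℕ} (hn : 2 ≤ n) {b : Eucl n} {c : ℝ} (hc : 0 < c)
    (A : Eucl n ≃ₗᵢ[ℝ] Eucl n) (h : (fun x => b + c • A x) '' uBall n = uBall n) : b = 0 ∧ c = 1 := by
  have hball : ball b c = ball (0 : Eucl n) 1 := by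
    rw [← uBall, ← h]
    ext y
    simp only [mem_ball, dist_eq_norm, uBall, mem_image, sub_zero]
    constructor
    · intro hy
      refine ⟨A.symm (c⁻¹ • (y - b)), ?_, ?_⟩
      · rw [LinearIsometryEquiv.norm_map, norm_smul, norm_inv, Real.norm_eq_abs, abs_of_pos hc]
        rw [inv_mul_lt_iff₀ hc]; linarith
      · rw [A.apply_symm_apply, smul_smul, mul_inv_cancel₀ hc.ne', one_smul]; abel
    · rintro ⟨x, hx, rfl⟩
      rw [add_sub_cancel_left, norm_smul, LinearIsometryEquiv.norm_map, Real.norm_eq_abs,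
        abs_of_pos hc]
      nlinarith
  have hcl : closedBall b c = closedBall (0 : Eucl n) 1 := by
    rw [← closure_ball _ hc.ne', ← closure_ball _ one_ne_zero, hball]
  obtain ⟨e, he, hbe⟩ : ∃ e : Eucl n, ‖e‖ = 1 ∧ b = ‖b‖ • e := by
    by_cases hb : b = 0
    · exact ⟨basisV n ⟨0, by omega⟩, basisV_norm _, by simp [hb]⟩
    · have : ‖b‖ ≠ 0 := by simpa using hb
      exact ⟨‖b‖⁻¹ • b, by rw [norm_smul, norm_inv, norm_norm, inv_mul_cancel₀ this],
        by rw [smul_smul, mul_inv_cancel₀ this, one_smul]⟩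
  have h1 : b + c • e ∈ closedBall (0 : Eucl n) 1 := by
    rw [← hcl, mem_closedBall, dist_eq_norm, add_sub_cancel_left, norm_smul, he,
      Real.norm_eq_abs, abs_of_pos hc, mul_one]
  have h2 : -e ∈ closedBall b c := by rw [hcl]; simp [he]
  have e1 : b + c • e = (‖b‖ + c) • e := by rw [add_smul, ← hbe]
  have e2 : -e - b = -((1 + ‖b‖) • e) := by rw [add_smul, ← hbe, one_smul]; abel
  rw [mem_closedBall_zero_iff, e1, norm_smul, he, mul_one, Real.norm_of_nonneg (by positivity)] at h1
  rw [mem_closedBall, dist_eq_norm, e2, norm_neg, norm_smul, he, mul_one,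
    Real.norm_of_nonneg (by positivity)] at h2
  have hb0 := norm_nonneg b
  exact ⟨norm_eq_zero.1 (by linarith), by linarith⟩

/-- The Möbius transformations of the ball: orthogonal maps, possibly composed with a reflection in
a sphere orthogonal to the unit sphere. -/
lemma IsMobiusBall.form {n : ℕ} (hn : 2 ≤ n) {φ : Eucl n → Eucl n} (hφ : IsMobiusBall n φ) :
    ∃ A : Eucl n ≃ₗᵢ[ℝ] Eucl n, (∀ x ∈ uBall n, φ x = A x) ∨
      ∃ a, 1 < ‖a‖ ∧ ∀ x ∈ uBall n, φ x = A (ballRefl a x) := by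
  obtain ⟨⟨U, hU, hBU, g, hg, hgφ⟩, hbij⟩ := hφ
  have hball : ∀ x ∈ uBall n, x ∈ U := fun x hx => hBU (ball_subset_closedBall hx)
  obtain ⟨b, c, A, hc, rfl | ⟨a, rfl⟩⟩ := hg.isNF
  · have hφ' : ∀ x ∈ uBall n, b + c • A x = φ x := fun x hx =>
      OnePoint.coe_injective (hgφ x (hball x hx))
    obtain ⟨rfl, rfl⟩ := similarity_ball hn hc A (by
      exact (image_congr hφ').trans hbij.image_eq)
    exact ⟨A, Or.inl fun x hx => by rw [← hφ' x hx]; simp⟩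
  · have haU : a ∉ U := fun h => by
      have := hgφ a h
      rw [Function.comp_apply, sphereRefl_self, simHat_infty] at this
      exact OnePoint.infty_ne_coe _ this
    have ha : 1 < ‖a‖ := by
      by_contra! h
      exact haU (hBU (by simpa using h))
    have hR : 0 < ‖a‖ ^ 2 - 1 := by nlinarith
    set c' := c / (‖a‖ ^ 2 - 1) with hc'
    set b' := b + c • A a - c' • A a with hb'
    have hφ' : ∀ x ∈ uBall n, b' + c' • A (ballRefl a x) = φ x := fun x hx => by
      have hx1 : ‖x‖ ≤ 1 := by simpa using ball_subset_closedBall hx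
      have hxa := ne_of_mem_ball ha hx1
      have h := hgφ x (hball x hx)
      rw [Function.comp_apply, sphereRefl_coe _ hxa, simHat_coe] at h
      rw [← OnePoint.coe_injective h, hb', ballRefl, hc']
      simp only [map_add, map_smul]
      match_scalars
      · simp
      · field_simp; ring
      · field_simp
    have himg : (fun x => b' + c' • A x) '' uBall n = uBall n := by
      refine Eq.trans (b := φ '' uBall n) ?_ hbij.image_eq
      ext y
      constructor
      · rintro ⟨x, hx, rfl⟩
        have hx1 : ‖x‖ < 1 := by simpa [uBall] using hx
        have hm : ballRefl a x ∈ uBall n := by simpa [uBall] using norm_ballRefl_lt ha hx1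
        refine ⟨ballRefl a x, hm, ?_⟩
        rw [← hφ' _ hm, ballRefl_ballRefl ha (ne_of_mem_ball ha hx1.le)]
      · rintro ⟨x, hx, rfl⟩
        have hx1 : ‖x‖ < 1 := by simpa [uBall] using hx
        exact ⟨ballRefl a x, by simpa [uBall] using norm_ballRefl_lt ha hx1, hφ' x hx⟩
    obtain ⟨h0, h1⟩ := similarity_ball hn (by positivity) A himg
    refine ⟨A, Or.inr ⟨a, ha, fun x hx => ?_⟩⟩
    rw [← hφ' x hx, h0, h1]; simp

/-- The conformal factor of a map whose derivative is a multiple of an isometry. -/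
lemma normDeriv_of_hasFDerivAt {n : ℕ} (hn : 2 ≤ n) {φ : Eucl n → Eucl n} {x : Eucl n} {c : ℝ}
    (hc : 0 < c) (A : Eucl n ≃ₗᵢ[ℝ] Eucl n)
    (h : HasFDerivAt φ (c • (A : Eucl n →L[ℝ] Eucl n)) x) : normDeriv φ x = c := by
  have hdet : |(jacMatrix φ x).det| = c ^ n := by
    have e : jacMatrix φ x = LinearMap.toMatrix (EuclideanSpace.basisFun (Fin n) ℝ).toBasis
        (EuclideanSpace.basisFun (Fin n) ℝ).toBasis (c • A.toLinearIsometry.toLinearMap) := by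
      ext i j
      rw [LinearMap.toMatrix_apply, jacMatrix, Matrix.of_apply, h.fderiv]
      simp [basisV]
    rw [e, LinearMap.det_toMatrix, LinearMap.det_smul, abs_mul, ← Real.norm_eq_abs (LinearMap.det _),
      ← LinearMap.normDet_eq_norm_det, LinearIsometry.normDet_eq_one, finrank_euclideanSpace_fin,
      mul_one, abs_pow, abs_of_pos hc]
  rw [normDeriv, hdet, ← Real.rpow_natCast, ← Real.rpow_mul hc.le, mul_inv_cancel₀, Real.rpow_one]
  have : 0 < n := by omega
  positivity

lemma normDeriv_isometry {n : ℕ} (hn : 2 ≤ n) {φ : Eucl n → Eucl n} (A : Eucl n ≃ₗᵢ[ℝ] Eucl n)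
    (h : ∀ x ∈ uBall n, φ x = A x) {x : Eucl n} (hx : x ∈ uBall n) : normDeriv φ x = 1 := by
  refine normDeriv_of_hasFDerivAt hn one_pos A ?_
  rw [one_smul]
  refine HasFDerivAt.congr_of_eventuallyEq A.toContinuousLinearEquiv.hasFDerivAt ?_
  filter_upwards [isOpen_ball.mem_nhds hx] with z hz using h z hz

lemma normDeriv_ballRefl {n : ℕ} (hn : 2 ≤ n) {φ : Eucl n → Eucl n} (A : Eucl n ≃ₗᵢ[ℝ] Eucl n)
    {a : Eucl n} (ha : 1 < ‖a‖) (h : ∀ x ∈ uBall n, φ x = A (ballRefl a x)) {x : Eucl n}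
    (hx : x ∈ uBall n) : normDeriv φ x = (‖a‖ ^ 2 - 1) / ‖x - a‖ ^ 2 := by
  have hx1 : ‖x‖ ≤ 1 := by simpa using ball_subset_closedBall hx
  have hxa := ne_of_mem_ball ha hx1
  have hN : 0 < ‖x - a‖ := by rw [norm_pos_iff, sub_ne_zero]; exact hxa
  have hR : 0 < ‖a‖ ^ 2 - 1 := by nlinarith
  have hinv : ∀ z, EuclideanGeometry.inversion a (Real.sqrt (‖a‖ ^ 2 - 1)) z = ballRefl a z := by
    intro z
    rw [EuclideanGeometry.inversion, ballRefl, vsub_eq_sub, vadd_eq_add, div_pow, Real.sq_sqrt hR.le,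
      dist_eq_norm, add_comm]
  have hd := EuclideanGeometry.hasFDerivAt_inversion (R := Real.sqrt (‖a‖ ^ 2 - 1)) hxa
  have hd2 := A.toContinuousLinearEquiv.hasFDerivAt.comp x hd
  refine normDeriv_of_hasFDerivAt hn (by positivity) ((ℝ ∙ (x - a))ᗮ.reflection.trans A) ?_
  have hd3 : HasFDerivAt φ _ x := HasFDerivAt.congr_of_eventuallyEq hd2 (by
    filter_upwards [isOpen_ball.mem_nhds hx] with z hz
    rw [h z hz, Function.comp_apply, hinv]; rfl)
  refine hd3.congr_fderiv ?_
  rw [div_pow, Real.sq_sqrt hR.le, dist_eq_norm]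
  ext1 v
  simp

/-! ### The action on Poisson kernels -/

lemma denom_eq_dist {n : ℕ} (x z : Eucl n) : 1 - 2 * ⟪x, z⟫_ℝ + ‖x‖ ^ 2 * ‖z‖ ^ 2 =
    ‖x - z‖ ^ 2 + (1 - ‖x‖ ^ 2) * (1 - ‖z‖ ^ 2) := by
  rw [norm_sub_sq_real]; ring

/-- Conformal covariance of the denominator of the extended Poisson kernel. -/
lemma denom_ballRefl {n : ℕ} {a x z : Eucl n} (ha : 1 < ‖a‖) (hx : x ≠ a) (hz : z ≠ a) :
    1 - 2 * ⟪ballRefl a x, ballRefl a z⟫_ℝ + ‖ballRefl a x‖ ^ 2 * ‖ballRefl a z‖ ^ 2 =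
      ((‖a‖ ^ 2 - 1) / ‖x - a‖ ^ 2) * ((‖a‖ ^ 2 - 1) / ‖z - a‖ ^ 2) *
        (1 - 2 * ⟪x, z⟫_ℝ + ‖x‖ ^ 2 * ‖z‖ ^ 2) := by
  have hR : 0 < ‖a‖ ^ 2 - 1 := by nlinarith
  have hinv : ∀ z, EuclideanGeometry.inversion a (Real.sqrt (‖a‖ ^ 2 - 1)) z = ballRefl a z := by
    intro z
    rw [EuclideanGeometry.inversion, ballRefl, vsub_eq_sub, vadd_eq_add, div_pow, Real.sq_sqrt hR.le,
      dist_eq_norm, add_comm]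
  have hd := EuclideanGeometry.dist_inversion_inversion hx hz (Real.sqrt (‖a‖ ^ 2 - 1))
  rw [hinv, hinv, Real.sq_sqrt hR.le, dist_eq_norm, dist_eq_norm, dist_eq_norm, dist_eq_norm] at hd
  have hN : ‖x - a‖ ≠ 0 := by simpa [sub_eq_zero] using hx
  have hN2 : ‖z - a‖ ≠ 0 := by simpa [sub_eq_zero] using hz
  rw [denom_eq_dist, denom_eq_dist, one_sub_norm_ballRefl hx, one_sub_norm_ballRefl hz, hd]
  field_simp

/-- The numerator of the transformed kernel vanishes at the pole `ω = x / ‖x‖²`, so that its Taylor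
expansion there has no constant term. -/
lemma numerator_expand {n : ℕ} {a x : Eucl n} (ha : 1 < ‖a‖) (hx : x ≠ a) (hx0 : x ≠ 0) (z : Eucl n) :
    (1 - ‖ballRefl a x‖ ^ 2) / (‖a‖ ^ 2 - 1) * ‖z - a‖ ^ 2 + ‖ballRefl a x‖ ^ 2 * (1 - ‖z‖ ^ 2) =
      ⟪(2 * ((1 - ‖ballRefl a x‖ ^ 2) / (‖a‖ ^ 2 - 1))) • ((‖x‖ ^ 2)⁻¹ • x - a) -
          (2 * ‖ballRefl a x‖ ^ 2) • ((‖x‖ ^ 2)⁻¹ • x), z - (‖x‖ ^ 2)⁻¹ • x⟫_ℝ +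
        ((1 - ‖ballRefl a x‖ ^ 2) / (‖a‖ ^ 2 - 1) - ‖ballRefl a x‖ ^ 2) *
          ‖z - (‖x‖ ^ 2)⁻¹ • x‖ ^ 2 := by
  have hR : ‖a‖ ^ 2 - 1 ≠ 0 := by nlinarith
  have hN : ‖x - a‖ ≠ 0 := by simpa [sub_eq_zero] using hx
  have h0 : ‖x‖ ≠ 0 := by simpa using hx0
  set α := (1 - ‖ballRefl a x‖ ^ 2) / (‖a‖ ^ 2 - 1) with hα
  set β := ‖ballRefl a x‖ ^ 2 with hβ
  set ω := (‖x‖ ^ 2)⁻¹ • x with hω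
  have hα1 : α = (1 - ‖x‖ ^ 2) / ‖x - a‖ ^ 2 := by
    rw [hα, hβ, one_sub_norm_ballRefl hx]; field_simp
  have hβ1 : β = 1 - (‖a‖ ^ 2 - 1) * α := by rw [hα]; field_simp; ring
  have hzero : α * ‖ω - a‖ ^ 2 + β * (1 - ‖ω‖ ^ 2) = 0 := by
    have e1 : ‖ω‖ ^ 2 = (‖x‖ ^ 2)⁻¹ := by
      rw [hω, norm_smul, mul_pow, Real.norm_eq_abs, sq_abs]; field_simp
    have e2 : ‖x - a‖ ^ 2 = ‖x‖ ^ 2 - 2 * ⟪x, a⟫_ℝ + ‖a‖ ^ 2 := norm_sub_sq_real x a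
    have e3 : ⟪x, a⟫_ℝ = (‖x‖ ^ 2 + ‖a‖ ^ 2 - ‖x - a‖ ^ 2) / 2 := by rw [e2]; ring
    rw [norm_sub_sq_real, e1, hω, real_inner_smul_left, e3, hβ1, hα1]
    field_simp
    ring
  have hz : z = ω + (z - ω) := by abel
  generalize z - ω = v at hz
  subst hz
  have e4 : ‖ω + v - a‖ ^ 2 = ‖ω - a‖ ^ 2 + 2 * ⟪ω - a, v⟫_ℝ + ‖v‖ ^ 2 := by
    rw [show ω + v - a = (ω - a) + v by abel, norm_add_sq_real]
  clear_value ω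
  simp only [e4, norm_add_sq_real, inner_sub_left, real_inner_smul_left]
  linear_combination hzero

/-- The image of a Poisson kernel under the weighted composition operator extends continuously to
the closed ball and is harmonic: up to a constant it is a Kelvin-type kernel with its pole outside
the closed ball. -/
lemma wco_extPoisson {n : ℕ} (hn : 2 ≤ n) {φ : Eucl n → Eucl n} (hφ : IsMobiusBall n φ)
    {ψ : Eucl n → ℂ} (hψ : ∀ x, ψ x = (↑(normDeriv φ x ^ (((n : ℝ) - 2) / 2)) : ℂ))
    {x : Eucl n} (hx : x ∈ uBall n) (hx0 : x ≠ φ 0) :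
    ∃ F : Eucl n → ℂ, ContinuousOn F (closedBall 0 1) ∧ HarmOn F (uBall n) ∧
      ∀ z ∈ uBall n, F z = wco φ ψ (fun w => (extPoisson n x w : ℂ)) z := by
  have hx1 : ‖x‖ < 1 := by simpa [uBall] using hx
  obtain ⟨A, h | ⟨a, ha, h⟩⟩ := hφ.form hn
  · have hA : ‖A.symm x‖ < 1 := by simpa using hx1
    refine ⟨_, Complex.continuous_ofReal.comp_continuousOn (continuousOn_extPoisson hA),
      harmOn_extPoisson hA, fun z hz => ?_⟩
    rw [wco, hψ, normDeriv_isometry hn A h hz, Real.one_rpow, h z hz, Function.comp_apply,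
      ← extPoisson_isometry A, A.apply_symm_apply]
    simp
  · have hR : 0 < ‖a‖ ^ 2 - 1 := by nlinarith
    have hA : ‖A.symm x‖ < 1 := by simpa using hx1
    set x' := ballRefl a (A.symm x) with hx'
    have hx'1 : ‖x'‖ < 1 := norm_ballRefl_lt ha hA
    have hTx' : ballRefl a x' = A.symm x := ballRefl_ballRefl ha (ne_of_mem_ball ha hA.le)
    have hx'a := ne_of_mem_ball ha hx'1.le
    have hx'0 : x' ≠ 0 := by
      intro h0
      apply hx0
      rw [h 0 (by simp [uBall]), ← h0, hTx', A.apply_symm_apply]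
    have hN : 0 < ‖x' - a‖ := by rw [norm_pos_iff, sub_ne_zero]; exact hx'a
    set ω := (‖x'‖ ^ 2)⁻¹ • x' with hω
    have hω1 : 1 < ‖ω‖ := one_le_norm_pole hx'0 hx'1
    set b := (2 * ((1 - ‖ballRefl a x'‖ ^ 2) / (‖a‖ ^ 2 - 1))) • (ω - a) -
          (2 * ‖ballRefl a x'‖ ^ 2) • ω with hb
    set C := (1 - ‖ballRefl a x'‖ ^ 2) / (‖a‖ ^ 2 - 1) - ‖ballRefl a x'‖ ^ 2 with hC
    set c : ℝ := (((‖a‖ ^ 2 - 1) / ‖x' - a‖ ^ 2) ^ ((n : ℝ) / 2))⁻¹ *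
      ((‖x'‖ ^ 2) ^ ((n : ℝ) / 2))⁻¹ with hc
    refine ⟨fun z => (c : ℂ) * ((kern b C (z - ω) : ℝ) : ℂ), fun z hz => ?_,
      harmOn_kern b ω C c hω1.le, fun z hz => ?_⟩
    · have hzω : z ≠ ω := by
        rintro rfl
        have : ‖ω‖ ≤ 1 := by simpa using hz
        linarith
      exact (continuousAt_const.mul (continuousAt_kern b ω C hzω)).continuousWithinAt
    · have hz1 : ‖z‖ < 1 := by simpa [uBall] using hz
      have hza := ne_of_mem_ball ha hz1.le
      have hNz : 0 < ‖z - a‖ := by rw [norm_pos_iff, sub_ne_zero]; exact hza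
      have hD : 0 < 1 - 2 * ⟪x', z⟫_ℝ + ‖x'‖ ^ 2 * ‖z‖ ^ 2 :=
        denom_pos (norm_mul_lt_one hx'1.le hz1)
      rw [wco, hψ, normDeriv_ballRefl hn A ha h hz]
      simp only
      rw [h z hz, show extPoisson n x (A (ballRefl a z)) =
        extPoisson n (ballRefl a x') (ballRefl a z) by
          rw [← extPoisson_isometry A (ballRefl a z), hTx', A.apply_symm_apply], extPoisson_comm]
      rw [extPoisson, denom_ballRefl ha hx'a hza, ← Complex.ofReal_mul, ← Complex.ofReal_mul]
      congr 1
      set δ := (‖a‖ ^ 2 - 1) / ‖z - a‖ ^ 2 with hδ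
      have hδ0 : 0 < δ := by positivity
      set δ' := (‖a‖ ^ 2 - 1) / ‖x' - a‖ ^ 2 with hδ'
      have hδ'0 : 0 < δ' := by positivity
      rw [Real.mul_rpow (by positivity) hD.le, Real.mul_rpow hδ'0.le hδ0.le]
      have e1 : δ ^ (((n : ℝ) - 2) / 2) = δ ^ ((n : ℝ) / 2) / δ := by
        rw [sub_div, div_self two_ne_zero, Real.rpow_sub hδ0, Real.rpow_one]
      have e2 : 1 - ‖ballRefl a x'‖ ^ 2 * ‖ballRefl a z‖ ^ 2 =
          δ * (⟪b, z - ω⟫_ℝ + C * ‖z - ω‖ ^ 2) := by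
        rw [hb, hC, hω, ← numerator_expand ha hx'a hx'0 z,
          show ‖ballRefl a z‖ ^ 2 = 1 - δ * (1 - ‖z‖ ^ 2) by
            rw [hδ, ← one_sub_norm_ballRefl hza]; ring, hδ]
        field_simp
        ring
      have e3 := kern_eq_div hx'0 b C z
      rw [← hω, real_inner_comm x' z, mul_comm (‖z‖ ^ 2)] at e3
      rw [hc, mul_assoc, ← e3, e1, e2]
      have p1 : 0 < δ ^ ((n : ℝ) / 2) := by positivity
      have p2 : 0 < δ' ^ ((n : ℝ) / 2) := by positivity
      have p3 : 0 < (1 - 2 * ⟪x', z⟫_ℝ + ‖x'‖ ^ 2 * ‖z‖ ^ 2) ^ ((n : ℝ) / 2) := by positivity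
      field_simp

/-- `W* P_y = ψ(y) P_{φ(y)}`. -/
lemma Wstar_extPoisson {n : ℕ} (hn : 2 ≤ n) {p q : ℝ≥0∞} (hp : 1 ≤ p) (hq : 1 < q)
    {φ : Eucl n → Eucl n} (hφ : IsMobiusBall n φ)
    {ψ : Eucl n → ℂ} (hψ : ∀ x, ψ x = (↑(normDeriv φ x ^ (((n : ℝ) - 2) / 2)) : ℂ))
    {bd : (Eucl n → ℂ) → (Eucl n → ℂ)}
    (hbd : ∀ f, MemHp n p f ∨ MemHp n q f →
      ∀ᵐ ζ ∂(sphMeasure n), HasNTLimit n f ζ (bd f ζ))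
    {Wstar : (Eucl n → ℂ) → (Eucl n → ℂ)}
    (hWmaps : ∀ g, MemHp n q g → MemHp n q (Wstar g))
    (hadj : ∀ f g, MemHp n p f → MemHp n q g →
      hpPairing n bd (wco φ ψ f) g = hpPairing n bd f (Wstar g)) {y : Eucl n} (hy : y ∈ uBall n) :
    ∀ x ∈ uBall n, Wstar (fun z => (extPoisson n y z : ℂ)) x =
      ((normDeriv φ y ^ (((n : ℝ) - 2) / 2) : ℝ) : ℂ) * (extPoisson n (φ y) x : ℂ) := by
  have hy1 : ‖y‖ < 1 := by simpa [uBall] using hy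
  have hφy : ‖φ y‖ < 1 := by simpa [uBall] using hφ.2.mapsTo hy
  set h := Wstar (fun z => (extPoisson n y z : ℂ)) with hh
  have hPy : MemHp n q (fun z => (extPoisson n y z : ℂ)) := memHp_extPoisson hn hq.le hy1
  have hhm : MemHp n q h := hWmaps _ hPy
  have key : ∀ x ∈ uBall n, x ≠ φ 0 → h x =
      ((normDeriv φ y ^ (((n : ℝ) - 2) / 2) : ℝ) : ℂ) * (extPoisson n (φ y) x : ℂ) := by
    intro x hx hx0
    have hx1 : ‖x‖ < 1 := by simpa [uBall] using hx
    obtain ⟨F, hFc, hFh, hF⟩ := wco_extPoisson hn hφ hψ hx hx0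
    have hPx := memHp_extPoisson hn hp hx1
    have hW : MemHp n p (wco φ ψ (fun w => (extPoisson n x w : ℂ))) :=
      memHp_congr (memHp_of_continuousOn hn hp hFc hFh) hF
    have h1 := hadj _ _ hPx hPy
    have e1 : hpPairing n bd (wco φ ψ (fun w => (extPoisson n x w : ℂ)))
        (fun z => (extPoisson n y z : ℂ)) = F y := by
      rw [poisson_formula hn hFc (fun z hz => lineHarm_of_harmOn isOpen_ball hFh hz) hy1, hpPairing]
      refine integral_congr_ae ?_
      filter_upwards [hbd _ (Or.inl hW), hbd _ (Or.inr hPy), ae_sphMeasure_mem n] with z hz1 hz2 hz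
      rw [hz1.eq_of_continuousOn hz hFc fun w hw => (hF w hw).symm,
        hz2.eq_of_continuousOn hz
          (Complex.continuous_ofReal.comp_continuousOn (continuousOn_extPoisson hy1)) fun w _ => rfl]
      rfl
    have e2 : hpPairing n bd (fun w => (extPoisson n x w : ℂ)) h = h x := by
      rw [← hhm.poisson hn hq (hbd _ (Or.inr hhm)) hx, hpPairing]
      refine integral_congr_ae ?_
      filter_upwards [hbd _ (Or.inl hPx), ae_sphMeasure_mem n] with z hz1 hz
      rw [hz1.eq_of_continuousOn hz
          (Complex.continuous_ofReal.comp_continuousOn (continuousOn_extPoisson hx1)) fun w _ => rfl]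
      rfl
    rw [← e2, ← h1, e1, hF y hy, wco, hψ, extPoisson_comm]
  intro x hx
  by_cases hx0 : x = φ 0
  -- the exceptional point is reached by continuity
  · have : Nontrivial (Fin n) := Fin.nontrivial_iff_two_le.2 hn
    have : Nonempty (Fin n) := inferInstance
    have : Nontrivial (Eucl n) := inferInstance
    have hne : (𝓝[≠] x).NeBot := inferInstance
    have hc1 : ContinuousAt h x := hhm.1.1.continuousOn.continuousAt (isOpen_ball.mem_nhds hx)
    have hc2 : ContinuousAt (fun x => ((normDeriv φ y ^ (((n : ℝ) - 2) / 2) : ℝ) : ℂ) *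
        (extPoisson n (φ y) x : ℂ)) x :=
      continuousAt_const.mul ((harmOn_extPoisson hφy).1.continuousOn.continuousAt
        (isOpen_ball.mem_nhds hx))
    refine tendsto_nhds_unique (hc1.tendsto.mono_left nhdsWithin_le_nhds : Tendsto h (𝓝[≠] x) _) ?_
    refine (hc2.tendsto.mono_left nhdsWithin_le_nhds).congr' ?_
    filter_upwards [self_mem_nhdsWithin, mem_nhdsWithin_of_mem_nhds (isOpen_ball.mem_nhds hx)]
      with z hz hzB
    exact (key z hzB (by rw [← hx0]; exact hz)).symm
  · exact key x hx hx0

/-! ### Sequences of hyperbolically equidistant points -/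

/-- A positive sequence that grows at least like `T ^ k` has consecutive quotients frequently at
least `T'`, for any `T' < T`. -/
lemma frequently_le_quotient {X : ℕ → ℝ} {c T T' : ℝ} (hX : ∀ k, 0 < X k) (hc : 0 < c) (hT : 0 < T)
    (h : ∀ k, c * T ^ k ≤ X k) (hT' : T' < T) : ∃ᶠ k in atTop, T' ≤ X (k + 1) / X k := by
  by_contra hf
  rw [not_frequently] at hf
  obtain ⟨K, hK⟩ := eventually_atTop.1 hf
  have hstep : ∀ k, K ≤ k → X (k + 1) ≤ T' * X k := fun k hk => by
    have := not_le.1 (hK k hk)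
    rw [div_lt_iff₀ (hX k)] at this
    exact this.le
  have hT0 : 0 < T' := by
    have h1 := hstep K le_rfl
    have h2 := hX (K + 1)
    by_contra! h3
    nlinarith [hX K]
  have hpow : ∀ j, X (K + j) ≤ T' ^ j * X K := by
    intro j
    induction j with
    | zero => simp
    | succ j ih =>
      have := hstep (K + j) (by omega)
      calc X (K + (j + 1)) ≤ T' * X (K + j) := this
        _ ≤ T' * (T' ^ j * X K) := by gcongr
        _ = _ := by ring
  have h1 : 1 < T / T' := (one_lt_div hT0).2 hT'
  obtain ⟨j, hj⟩ := ((tendsto_pow_atTop_atTop_of_one_lt h1).eventually_gt_atTop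
    (X K / (c * T ^ K))).exists
  have h2 := (h (K + j)).trans (hpow j)
  rw [div_pow, div_lt_div_iff₀ (by positivity) (by positivity)] at hj
  rw [pow_add] at h2
  linarith

/-- The radii `tanh (k log λ / 2)`, where `μ = 1 / λ`: consecutive ones are equidistant in the
hyperbolic metric. -/
noncomputable def hypRad (μ : ℝ) (k : ℕ) : ℝ := (1 - μ ^ k) / (1 + μ ^ k)

lemma hypRad_nonneg {μ : ℝ} (h0 : 0 < μ) (h1 : μ < 1) (k : ℕ) : 0 ≤ hypRad μ k := by
  have : μ ^ k ≤ 1 := pow_le_one₀ h0.le h1.le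
  have : 0 ≤ 1 - μ ^ k := by linarith
  rw [hypRad]; positivity

lemma one_sub_hypRad {μ : ℝ} (h0 : 0 < μ) (k : ℕ) : 1 - hypRad μ k = 2 * μ ^ k / (1 + μ ^ k) := by
  have : 0 < μ ^ k := by positivity
  rw [hypRad]; field_simp; ring

lemma hypRad_lt {μ : ℝ} (h0 : 0 < μ) (k : ℕ) : hypRad μ k < 1 := by
  have : 0 < 1 - hypRad μ k := by rw [one_sub_hypRad h0]; positivity
  linarith

lemma le_one_sub_hypRad {μ : ℝ} (h0 : 0 < μ) (h1 : μ < 1) (k : ℕ) : μ ^ k ≤ 1 - hypRad μ k := by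
  have h2 : μ ^ k ≤ 1 := pow_le_one₀ h0.le h1.le
  have h3 : 0 < μ ^ k := by positivity
  rw [one_sub_hypRad h0, le_div_iff₀ (by positivity)]
  nlinarith

lemma one_sub_hypRad_le {μ : ℝ} (h0 : 0 < μ) (k : ℕ) : 1 - hypRad μ k ≤ 2 * μ ^ k := by
  have h3 : 0 < μ ^ k := by positivity
  rw [one_sub_hypRad h0, div_le_iff₀ (by positivity)]
  nlinarith

lemma tendsto_hypRad {μ : ℝ} (h0 : 0 < μ) (h1 : μ < 1) : Tendsto (hypRad μ) atTop (𝓝[<] 1) := by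
  refine tendsto_nhdsWithin_iff.2 ⟨?_, Eventually.of_forall fun k => hypRad_lt h0 k⟩
  have hp := tendsto_pow_atTop_nhds_zero_of_lt_one h0.le h1
  have := (tendsto_const_nhds (x := (1 : ℝ)).sub hp).div (tendsto_const_nhds (x := (1 : ℝ)).add hp)
    (by norm_num)
  rw [sub_zero, add_zero, div_one] at this
  exact this

lemma hypRad_succ {ρ : ℝ} (h : 1 < ρ) (k : ℕ) :
    hypRad ((ρ - 1) / (ρ + 1)) (k + 1) =
      (1 + ρ * hypRad ((ρ - 1) / (ρ + 1)) k) / (ρ + hypRad ((ρ - 1) / (ρ + 1)) k) := by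
  have h0 : 0 < (ρ - 1) / (ρ + 1) := div_pos (by linarith) (by linarith)
  have hp : 0 < ((ρ - 1) / (ρ + 1)) ^ k := by positivity
  rw [hypRad, hypRad, pow_succ]
  set t := ((ρ - 1) / (ρ + 1)) ^ k
  have h1 : ρ + (1 - t) / (1 + t) ≠ 0 := by
    have : ρ + (1 - t) / (1 + t) = ((ρ + 1) + (ρ - 1) * t) / (1 + t) := by field_simp; ring
    rw [this]
    have : 0 < (ρ - 1) * t := mul_pos (by linarith) hp
    positivity
  have h2 : 1 + t * ((ρ - 1) / (ρ + 1)) ≠ 0 := by positivity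
  have h3 : ρ + 1 ≠ 0 := by linarith
  rw [div_eq_div_iff h2 h1]
  field_simp
  ring

/-- Action of the reflection on the diameter through its centre. -/
lemma ballRefl_smul {n : ℕ} {a e : Eucl n} {ρ t : ℝ} (he : ‖e‖ = 1) (ha : a = ρ • e) (ht : t ≠ ρ) :
    ballRefl a (t • e) = ((1 - ρ * t) / (ρ - t)) • e := by
  have h1 : t - ρ ≠ 0 := sub_ne_zero.2 ht
  have h2 : ρ - t ≠ 0 := sub_ne_zero.2 ht.symm
  rw [ballRefl, ha, ← sub_smul, norm_smul, norm_smul, he, mul_one, mul_one, Real.norm_eq_abs,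
    Real.norm_eq_abs, sq_abs, sq_abs, smul_smul, ← add_smul]
  congr 1
  field_simp
  ring

/-- Two-sided bounds for the kernel norms, weighted by a power of `1 - s ^ 2`, along the radii
`hypRad`. -/
lemma weighted_bounds {μ β γ c C s N : ℝ} {k : ℕ} (h0 : 0 < μ) (h1 : μ < 1) (hβ : 0 ≤ β) (hγ : 0 ≤ γ)
    (hc : 0 < c) (hC : 0 < C) (hs : s = hypRad μ k) (hN : c * (1 - s) ^ (-β) ≤ N)
    (hN' : N ≤ C * (1 - s) ^ (-β)) :
    c * 2 ^ (-β) * (μ ^ k) ^ (γ - β) ≤ N * (1 - s ^ 2) ^ γ ∧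
      N * (1 - s ^ 2) ^ γ ≤ C * 4 ^ γ * (μ ^ k) ^ (γ - β) := by
  have hm : 0 < μ ^ k := by positivity
  have hs0 : 0 ≤ s := hs ▸ hypRad_nonneg h0 h1 k
  have hs1 : s < 1 := hs ▸ hypRad_lt h0 k
  have hl : μ ^ k ≤ 1 - s := hs ▸ le_one_sub_hypRad h0 h1 k
  have hu : 1 - s ≤ 2 * μ ^ k := hs ▸ one_sub_hypRad_le h0 k
  have hl2 : μ ^ k ≤ 1 - s ^ 2 := by nlinarith
  have hu2 : 1 - s ^ 2 ≤ 4 * μ ^ k := by nlinarith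
  have hpos : 0 < 1 - s := by linarith
  have hpos2 : 0 < 1 - s ^ 2 := by linarith
  have e : (μ ^ k) ^ (γ - β) = (μ ^ k) ^ (-β) * (μ ^ k) ^ γ := by
    rw [← Real.rpow_add hm]; congr 1; ring
  constructor
  · calc c * 2 ^ (-β) * (μ ^ k) ^ (γ - β) = (c * (2 * μ ^ k) ^ (-β)) * (μ ^ k) ^ γ := by
          rw [e, Real.mul_rpow (by norm_num) hm.le]; ring
      _ ≤ (c * (1 - s) ^ (-β)) * (1 - s ^ 2) ^ γ := by
          have h3 := Real.rpow_le_rpow_of_nonpos hpos hu (neg_nonpos.2 hβ)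
          have h4 := Real.rpow_le_rpow hm.le hl2 hγ
          gcongr
      _ ≤ _ := by gcongr
  · calc N * (1 - s ^ 2) ^ γ ≤ (C * (1 - s) ^ (-β)) * (1 - s ^ 2) ^ γ := by gcongr
      _ ≤ (C * (μ ^ k) ^ (-β)) * (4 * μ ^ k) ^ γ := by
          have h3 := Real.rpow_le_rpow_of_nonpos hm hl (neg_nonpos.2 hβ)
          have h4 := Real.rpow_le_rpow hpos2.le hu2 hγ
          gcongr
      _ = _ := by rw [e, Real.mul_rpow (by norm_num) hm.le]; ring

/-! ### The quotient of norms -/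

/-- The quotients `|Dφ(y)|^γ N(φ(y)) / N(y)` stay bounded on the ball. -/
lemma exists_quotient_le {n : ℕ} (hn : 2 ≤ n) {φ : Eucl n → Eucl n} (hφ : IsMobiusBall n φ)
    {N : Eucl n → ℝ} {β γ c C : ℝ} (hβ : 0 ≤ β) (hγ : 0 ≤ γ) (hc : 0 < c) (hC : 0 < C)
    (hN : ∀ y, ‖y‖ < 1 → c * (1 - ‖y‖) ^ (-β) ≤ N y ∧ N y ≤ C * (1 - ‖y‖) ^ (-β)) :
    ∃ M, ∀ y ∈ uBall n, normDeriv φ y ^ γ * N (φ y) / N y ≤ M := by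
  have hδ : ∃ L : ℝ, 0 < L ∧ ∀ y ∈ uBall n, L⁻¹ ≤ normDeriv φ y ∧ normDeriv φ y ≤ L ∧
      1 - ‖φ y‖ ^ 2 = normDeriv φ y * (1 - ‖y‖ ^ 2) := by
    obtain ⟨A, h | ⟨a, ha, h⟩⟩ := hφ.form hn
    · refine ⟨1, one_pos, fun y hy => ?_⟩
      rw [normDeriv_isometry hn A h hy, h y hy]
      simp
    · have hp : 0 < ‖a‖ - 1 := by linarith
      have hR : 0 < ‖a‖ ^ 2 - 1 := by nlinarith
      refine ⟨(‖a‖ + 1) / (‖a‖ - 1), by positivity, fun y hy => ?_⟩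
      have hy1 : ‖y‖ < 1 := by simpa [uBall] using hy
      have hya := ne_of_mem_ball ha hy1.le
      have hpos : 0 < ‖y - a‖ := by rw [norm_pos_iff, sub_ne_zero]; exact hya
      have hl : ‖a‖ - 1 ≤ ‖y - a‖ := by
        have := norm_sub_norm_le a y
        rw [norm_sub_rev] at this
        linarith
      have hu : ‖y - a‖ ≤ ‖a‖ + 1 := (norm_sub_le _ _).trans (by linarith)
      rw [normDeriv_ballRefl hn A ha h hy, h y hy, A.norm_map, one_sub_norm_ballRefl hya]
      refine ⟨?_, ?_, rfl⟩
      · rw [inv_div, div_le_div_iff₀ (by positivity) (by positivity)]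
        have : ‖y - a‖ ^ 2 ≤ (‖a‖ + 1) ^ 2 := by gcongr
        nlinarith
      · rw [div_le_div_iff₀ (by positivity) (by positivity)]
        have : (‖a‖ - 1) ^ 2 ≤ ‖y - a‖ ^ 2 := by gcongr
        nlinarith
  obtain ⟨L, hL, hδ⟩ := hδ
  refine ⟨L ^ γ * (C * (L⁻¹ / 2) ^ (-β)) / c, fun y hy => ?_⟩
  obtain ⟨h1, h2, h3⟩ := hδ y hy
  have hy1 : ‖y‖ < 1 := by simpa [uBall] using hy
  have hφy : ‖φ y‖ < 1 := by simpa [uBall] using hφ.2.mapsTo hy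
  have hL' : 0 < L⁻¹ := by positivity
  have hy2 : 0 < 1 - ‖y‖ := by linarith
  have hlow : L⁻¹ / 2 * (1 - ‖y‖) ≤ 1 - ‖φ y‖ := by
    have h4 : L⁻¹ * (1 - ‖y‖) ≤ normDeriv φ y * (1 - ‖y‖ ^ 2) :=
      mul_le_mul h1 (by nlinarith [norm_nonneg y]) hy2.le (by linarith)
    nlinarith [norm_nonneg (φ y)]
  have h5 : (1 - ‖φ y‖) ^ (-β) ≤ (L⁻¹ / 2) ^ (-β) * (1 - ‖y‖) ^ (-β) := by
    rw [← Real.mul_rpow (by positivity) hy2.le]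
    exact Real.rpow_le_rpow_of_nonpos (by positivity) hlow (neg_nonpos.2 hβ)
  have hE : 0 < (1 - ‖y‖) ^ (-β) := Real.rpow_pos_of_pos hy2 _
  obtain ⟨hN1, -⟩ := hN y hy1
  obtain ⟨-, hN2⟩ := hN (φ y) hφy
  have hNy : 0 < N y := lt_of_lt_of_le (by positivity) hN1
  have h6 : normDeriv φ y ^ γ ≤ L ^ γ := Real.rpow_le_rpow (by linarith) h2 hγ
  rw [div_le_div_iff₀ hNy hc]
  calc normDeriv φ y ^ γ * N (φ y) * c
      ≤ L ^ γ * (C * ((L⁻¹ / 2) ^ (-β) * (1 - ‖y‖) ^ (-β))) * c := by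
        gcongr
        · exact le_trans (by have := hN (φ y) hφy; have h7 : 0 < (1 - ‖φ y‖) ^ (-β) :=
            Real.rpow_pos_of_pos (by linarith) _
                             positivity) (hN (φ y) hφy).1
        · exact hN2.trans (by gcongr)
    _ = L ^ γ * (C * (L⁻¹ / 2) ^ (-β)) * (c * (1 - ‖y‖) ^ (-β)) := by ring
    _ ≤ _ := by gcongr

lemma rpow_neg_pow_aux {lam : ℝ} (h : 0 < lam) (k : ℕ) (x : ℝ) :
    ((lam⁻¹) ^ k) ^ (-x) = (lam ^ x) ^ k := by
  rw [inv_pow, Real.inv_rpow (by positivity), Real.rpow_neg (by positivity), inv_inv,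
    ← Real.rpow_natCast, ← Real.rpow_natCast, ← Real.rpow_mul h.le, ← Real.rpow_mul h.le, mul_comm]

/-- The quotients come frequently close to the extremal value. On the diameter through the centre of
reflection, `φ` moves the points at the radii `hypRad` one hyperbolic step outwards or inwards, so
that the quotients there are consecutive quotients of a geometrically growing sequence. -/
lemma frequently_quotient {n : ℕ} (hn : 2 ≤ n) {φ : Eucl n → Eucl n} (hφ : IsMobiusBall n φ)
    {N : Eucl n → ℝ} {β γ c C T' : ℝ} (hβ : 0 ≤ β) (hγ : 0 ≤ γ) (hc : 0 < c) (hC : 0 < C)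
    (hN : ∀ y, ‖y‖ < 1 → c * (1 - ‖y‖) ^ (-β) ≤ N y ∧ N y ≤ C * (1 - ‖y‖) ^ (-β))
    (hrad : ∀ x y, ‖x‖ = ‖y‖ → N x = N y)
    (hT' : T' < ((1 + ‖φ 0‖) / (1 - ‖φ 0‖)) ^ |β - γ|) :
    ∃ᶠ y in comap (fun y : Eucl n => ‖y‖) (𝓝[<] 1),
      T' ≤ normDeriv φ y ^ γ * N (φ y) / N y := by
  have hNpos : ∀ y, ‖y‖ < 1 → 0 < N y := fun y hy => lt_of_lt_of_le
    (mul_pos hc (Real.rpow_pos_of_pos (by linarith) _)) (hN y hy).1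
  have h0 : (0 : Eucl n) ∈ uBall n := by simp [uBall]
  obtain ⟨A, h | ⟨a, ha, h⟩⟩ := hφ.form hn
  · obtain ⟨e, he⟩ : ∃ e : Eucl n, ‖e‖ = 1 := ⟨basisV n ⟨0, by omega⟩, basisV_norm _⟩
    have hnrm : ∀ k, ‖hypRad 2⁻¹ k • e‖ = hypRad 2⁻¹ k := fun k => by
      rw [norm_smul, he, mul_one, Real.norm_of_nonneg (hypRad_nonneg (by norm_num) (by norm_num) k)]
    have hu : Tendsto (fun k => hypRad 2⁻¹ k • e) atTop (comap (fun y : Eucl n => ‖y‖) (𝓝[<] 1)) := by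
      rw [tendsto_comap_iff]
      exact (tendsto_hypRad (by norm_num) (by norm_num)).congr fun k => (hnrm k).symm
    refine hu.frequently (Eventually.frequently (Eventually.of_forall fun k => ?_))
    have hk : ‖hypRad 2⁻¹ k • e‖ < 1 := by rw [hnrm]; exact hypRad_lt (by norm_num) k
    have hkB : hypRad 2⁻¹ k • e ∈ uBall n := by simpa [uBall] using hk
    rw [h 0 h0, map_zero, norm_zero, add_zero, sub_zero, div_one, Real.one_rpow] at hT'
    rw [normDeriv_isometry hn A h hkB, Real.one_rpow, one_mul, h _ hkB,
      hrad _ (hypRad 2⁻¹ k • e) (A.norm_map _), div_self (hNpos _ hk).ne']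
    exact hT'.le
  · set ρ := ‖a‖ with hρ
    have hρ0 : 0 < ρ := by linarith
    have hρ1 : 0 < ρ - 1 := by linarith
    set e := ρ⁻¹ • a with he_def
    have hae : a = ρ • e := by rw [he_def, smul_smul, mul_inv_cancel₀ hρ0.ne', one_smul]
    have he : ‖e‖ = 1 := by
      rw [he_def, norm_smul, norm_inv, Real.norm_of_nonneg hρ0.le, inv_mul_cancel₀ hρ0.ne']
    set lam := (ρ + 1) / (ρ - 1) with hlam
    have hlam0 : 0 < lam := by positivity
    have hlam1 : 1 < lam := by rw [hlam, one_lt_div hρ1]; linarith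
    have hφ0 : (1 + ‖φ 0‖) / (1 - ‖φ 0‖) = lam := by
      have : ‖φ 0‖ = ρ⁻¹ := by
        have h1 := ballRefl_smul (t := 0) he hae hρ0.ne
        rw [zero_smul] at h1
        rw [h 0 h0, h1, A.norm_map, norm_smul, he]
        simp [hρ0.le]
      rw [this, hlam]
      field_simp
    rw [hφ0] at hT'
    set μ := lam⁻¹ with hμ
    have hμ' : μ = (ρ - 1) / (ρ + 1) := by rw [hμ, hlam, inv_div]
    have hμ0 : 0 < μ := by positivity
    have hμ1 : μ < 1 := inv_lt_one_of_one_lt₀ hlam1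
    set s := hypRad μ with hs
    have hs0 : ∀ k, 0 ≤ s k := hypRad_nonneg hμ0 hμ1
    have hs1 : ∀ k, s k < 1 := hypRad_lt hμ0
    have hsucc : ∀ k, s (k + 1) = (1 + ρ * s k) / (ρ + s k) := fun k => by
      rw [hs, hμ']; exact hypRad_succ ha k
    have hnrm : ∀ t : ℝ, ‖t • e‖ = |t| := fun t => by
      rw [norm_smul, he, mul_one, Real.norm_eq_abs]
    set G : ℕ → ℝ := fun k => N (s k • e) * (1 - s k ^ 2) ^ γ with hG
    have hsk : ∀ k, 0 < 1 - s k ^ 2 := fun k => by nlinarith [hs0 k, hs1 k]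
    have hse : ∀ k, ‖s k • e‖ < 1 := fun k => by rw [hnrm, abs_of_nonneg (hs0 k)]; exact hs1 k
    have hGpos : ∀ k, 0 < G k := fun k =>
      mul_pos (hNpos _ (hse k)) (Real.rpow_pos_of_pos (hsk k) _)
    have hbd : ∀ k, c * 2 ^ (-β) * (μ ^ k) ^ (γ - β) ≤ G k ∧
        G k ≤ C * 4 ^ γ * (μ ^ k) ^ (γ - β) := fun k => by
      have h1 := hN _ (hse k)
      rw [hnrm, abs_of_nonneg (hs0 k)] at h1
      exact weighted_bounds hμ0 hμ1 hβ hγ hc hC rfl h1.1 h1.2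
    -- the quotient at a point of the diameter, in terms of the two radii involved
    have hquot : ∀ (t : ℝ) (k j : ℕ), |t| = s k → |(1 - ρ * t) / (ρ - t)| = s j →
        normDeriv φ (t • e) ^ γ * N (φ (t • e)) / N (t • e) = G j / G k := by
      intro t k j hk hj
      have ht1 : ‖t • e‖ < 1 := by rw [hnrm, hk]; exact hs1 k
      have htB : t • e ∈ uBall n := by simpa [uBall] using ht1
      have hta := ne_of_mem_ball ha ht1.le
      have htρ : t ≠ ρ := by
        rintro rfl
        exact hta hae.symm
      have e1 : ‖ballRefl a (t • e)‖ = s j := by rw [ballRefl_smul he hae htρ, hnrm, hj]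
      have e2 := one_sub_norm_ballRefl hta
      rw [e1, hnrm, hk] at e2
      have e3 : normDeriv φ (t • e) = (1 - s j ^ 2) / (1 - s k ^ 2) := by
        rw [normDeriv_ballRefl hn A ha h htB, e2, mul_div_assoc, div_self (hsk k).ne', mul_one]
      have e4 : N (φ (t • e)) = N (s j • e) := hrad _ _ (by
        rw [h _ htB, A.norm_map, e1, hnrm, abs_of_nonneg (hs0 j)])
      have e5 : N (t • e) = N (s k • e) := hrad _ _ (by
        rw [hnrm, hk, hnrm, abs_of_nonneg (hs0 k)])
      rw [e3, e4, e5, Real.div_rpow (hsk j).le (hsk k).le, hG]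
      have := Real.rpow_pos_of_pos (hsk k) γ
      have := hNpos _ (hse k)
      field_simp
    have hst : Tendsto s atTop (𝓝[<] 1) := tendsto_hypRad hμ0 hμ1
    rcases le_total 0 (β - γ) with hα | hα
    · rw [abs_of_nonneg hα] at hT'
      have hu : Tendsto (fun k => (-s k) • e) atTop (comap (fun y : Eucl n => ‖y‖) (𝓝[<] 1)) := by
        rw [tendsto_comap_iff]
        refine hst.congr fun k => ?_
        rw [Function.comp_apply, hnrm, abs_neg, abs_of_nonneg (hs0 k)]
      refine hu.frequently ?_
      have hfr := frequently_le_quotient hGpos (c := c * 2 ^ (-β)) (T := lam ^ (β - γ))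
        (by positivity) (by positivity) (fun k => by
          rw [← rpow_neg_pow_aux hlam0, neg_sub]; exact (hbd k).1) hT'
      refine hfr.mono fun k hk => ?_
      rw [hquot (-s k) k (k + 1) (by rw [abs_neg, abs_of_nonneg (hs0 k)])]
      · exact hk
      · rw [mul_neg, sub_neg_eq_add, sub_neg_eq_add, ← hsucc, abs_of_nonneg (hs0 _)]
    · rw [abs_of_nonpos hα] at hT'
      have hu : Tendsto (fun k => s (k + 1) • e) atTop
          (comap (fun y : Eucl n => ‖y‖) (𝓝[<] 1)) := by
        rw [tendsto_comap_iff]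
        refine (hst.comp (tendsto_add_atTop_nat 1)).congr fun k => ?_
        rw [Function.comp_apply, Function.comp_apply, hnrm, abs_of_nonneg (hs0 _)]
      refine hu.frequently ?_
      have hfr := frequently_le_quotient (X := fun k => (G k)⁻¹) (fun k => inv_pos.2 (hGpos k))
        (c := (C * 4 ^ γ)⁻¹) (T := lam ^ (-(β - γ)))
        (by positivity) (by positivity) (fun k => by
          have h1 := (hbd k).2
          rw [← neg_sub, rpow_neg_pow_aux hlam0] at h1
          rw [Real.rpow_neg hlam0.le, inv_pow, ← mul_inv]
          exact inv_anti₀ (hGpos k) h1) hT'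
      refine hfr.mono fun k hk => ?_
      rw [hquot (s (k + 1)) (k + 1) k (abs_of_nonneg (hs0 _))]
      · rwa [inv_div_inv] at hk
      · rw [hsucc]
        have h1 : 0 < ρ + s k := by linarith [hs0 k]
        have h2 : ρ - (1 + ρ * s k) / (ρ + s k) = (ρ ^ 2 - 1) / (ρ + s k) := by
          field_simp; ring
        have h3 : 1 - ρ * ((1 + ρ * s k) / (ρ + s k)) = -(s k * (ρ ^ 2 - 1)) / (ρ + s k) := by
          field_simp; ring
        have h4 : ρ ^ 2 - 1 ≠ 0 := by nlinarith
        rw [h2, h3, neg_div, neg_div, abs_neg, div_div_div_cancel_right₀ h1.ne', mul_div_assoc,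
          div_self h4, mul_one, abs_of_nonneg (hs0 k)]

lemma normDeriv_pos {n : ℕ} (hn : 2 ≤ n) {φ : Eucl n → Eucl n} (hφ : IsMobiusBall n φ) {y : Eucl n}
    (hy : y ∈ uBall n) : 0 < normDeriv φ y := by
  obtain ⟨A, h | ⟨a, ha, h⟩⟩ := hφ.form hn
  · rw [normDeriv_isometry hn A h hy]; exact one_pos
  · have hR : 0 < ‖a‖ ^ 2 - 1 := by nlinarith
    have hpos : 0 < ‖y - a‖ := by
      rw [norm_pos_iff, sub_ne_zero]
      exact ne_of_mem_ball ha (by simpa using ball_subset_closedBall hy)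
    rw [normDeriv_ballRefl hn A ha h hy]; positivity

/-- inequality (4.8): For `n ≥ 2`, `1 ≤ p < ∞`, `φ ∈ Möb(B)`,
`ψ = |Dφ|^{(n−2)/2}`, and `W*` the adjoint of `W_{φ,ψ}` on `h^{p′}(B)`,
`limsup_{|y|→1⁻} ‖W*P_y‖_{h^{p′}}/‖P_y‖_{h^{p′}} ≥
  ((1+|φ(0)|)/(1−|φ(0)|))^{|(n−1)/p − (n−2)/2|}`. -/
theorem limsup_adjoint_extPoisson (n : ℕ) (hn : 2 ≤ n)
    (p q : ℝ≥0∞) (hp : 1 ≤ p) (hpfin : p ≠ ⊤) (hpq : p⁻¹ + q⁻¹ = 1)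
    (φ : Eucl n → Eucl n) (hφ : IsMobiusBall n φ)
    (ψ : Eucl n → ℂ)
    (hψ : ∀ x, ψ x = (↑(normDeriv φ x ^ (((n : ℝ) - 2) / 2)) : ℂ))
    (bd : (Eucl n → ℂ) → (Eucl n → ℂ))
    (hbd : ∀ f, MemHp n p f ∨ MemHp n q f →
      ∀ᵐ ζ ∂(sphMeasure n), HasNTLimit n f ζ (bd f ζ))
    (Wstar : (Eucl n → ℂ) → (Eucl n → ℂ))
    (hWmaps : ∀ g, MemHp n q g → MemHp n q (Wstar g))
    (hadj : ∀ f g, MemHp n p f → MemHp n q g →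
      hpPairing n bd (wco φ ψ f) g = hpPairing n bd f (Wstar g)) :
    ((1 + ‖φ 0‖) / (1 - ‖φ 0‖)) ^
        |((n : ℝ) - 1) * (p⁻¹).toReal - ((n : ℝ) - 2) / 2| ≤
      Filter.limsup
        (fun y : Eucl n =>
          hpNorm n q (Wstar (fun z => (↑(extPoisson n y z) : ℂ))) /
            hpNorm n q (fun z => (↑(extPoisson n y z) : ℂ)))
        (Filter.comap (fun y : Eucl n => ‖y‖) (nhdsWithin 1 (Set.Iio 1))) := by
  have hq : 1 < q := by
    have hp0 : p⁻¹ ≠ 0 := ENNReal.inv_ne_zero.2 hpfin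
    have hqt : q⁻¹ ≠ ⊤ := ne_top_of_le_ne_top ENNReal.one_ne_top (hpq ▸ le_add_self)
    have : q⁻¹ < 1 := by
      rw [← hpq, add_comm]
      exact ENNReal.lt_add_right hqt hp0
    exact ENNReal.inv_lt_one.1 this
  have hexp : 1 - 1 / q.toReal = (p⁻¹).toReal := by
    have h1 : p⁻¹ ≠ ⊤ := ne_top_of_le_ne_top ENNReal.one_ne_top (hpq ▸ le_self_add)
    have h2 : q⁻¹ ≠ ⊤ := ne_top_of_le_ne_top ENNReal.one_ne_top (hpq ▸ le_add_self)
    have h3 := congrArg ENNReal.toReal hpq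
    rw [ENNReal.toReal_add h1 h2, ENNReal.toReal_inv q, ENNReal.toReal_one] at h3
    rw [one_div]; linarith
  have hn2 : (2 : ℝ) ≤ n := by exact_mod_cast hn
  set β : ℝ := ((n : ℝ) - 1) * (p⁻¹).toReal with hβ
  set γ : ℝ := ((n : ℝ) - 2) / 2 with hγ
  have hβ0 : 0 ≤ β := mul_nonneg (by linarith) ENNReal.toReal_nonneg
  have hγ0 : 0 ≤ γ := by rw [hγ]; linarith
  set N : Eucl n → ℝ := fun y => hpNorm n q (fun z => (↑(extPoisson n y z) : ℂ)) with hNdef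
  obtain ⟨c, C, hc, hC, hN⟩ := hpNorm_extPoisson_bounds hn hq
  rw [hexp] at hN
  have hrad : ∀ x y, ‖x‖ = ‖y‖ → N x = N y := fun x y h => hpNorm_extPoisson_congr hn q h
  set l := comap (fun y : Eucl n => ‖y‖) (𝓝[<] 1) with hl
  have hball : ∀ᶠ y in l, y ∈ uBall n := by
    have : ∀ᶠ t in 𝓝[<] (1 : ℝ), t < 1 := self_mem_nhdsWithin
    filter_upwards [this.comap fun y : Eucl n => ‖y‖] with y hy
    simpa [uBall] using hy
  have hratio : ∀ᶠ y in l, hpNorm n q (Wstar (fun z => (↑(extPoisson n y z) : ℂ))) / N y =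
      normDeriv φ y ^ γ * N (φ y) / N y := by
    filter_upwards [hball] with y hy
    have h1 := Wstar_extPoisson hn hp hq hφ hψ hbd hWmaps hadj hy
    rw [hpNorm_congr (fun x hx => by rw [h1 x hx]),
      hpNorm_smul hq.le _ (Real.rpow_pos_of_pos (normDeriv_pos hn hφ hy) _)]
  have hfreq : ∀ T' < ((1 + ‖φ 0‖) / (1 - ‖φ 0‖)) ^ |β - γ|,
      ∃ᶠ y in l, T' ≤ normDeriv φ y ^ γ * N (φ y) / N y := fun T' hT' =>
    frequently_quotient hn hφ hβ0 hγ0 hc hC hN hrad hT'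
  obtain ⟨M, hM⟩ := exists_quotient_le hn hφ hβ0 hγ0 hc hC hN
  rw [limsup_congr hratio]
  refine le_of_forall_lt fun T₁ hT₁ => ?_
  obtain ⟨T₂, h12, hT₂⟩ := exists_between hT₁
  refine h12.trans_le (le_limsup_of_frequently_le (hfreq T₂ hT₂) ?_)
  exact isBoundedUnder_of_eventually_le (hball.mono fun y hy => hM y hy)
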